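/- arXiv:2408.09589 — 2 statements merged into one kernel-verified Lean document; each statement's English description precedes it below -/
import Mathlib

section
/- Fix integers 1 ≤ d < k and a real constant γ > 0, and let α = α_d(k) be the asymptotic Dirac threshold. There exist constants C = C(d,k,γ) ≥ 1 and ε₀ = ε₀(k,γ) > 0 such that for every 0 < ε ≤ ε₀ there is n₀ with the following property: for every n ≥ n₀ divisible by k, every n-vertex k-uniform hypergraph G with minimum d-degree δ_d(G) ≥ (α + γ)·C(n−d, k−d) admits a (C·ε^{−3k})-well-distributed fractional perfect matching x satisfying h(G) − h(x) ≤ ε·n. -/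
/-!
Write `A = n ^ (k - 1)`. The maximal-entropy fractional perfect matching `x` exists by compactness.
The proof shows that it has no edge of weight more than `K / A` (`max_fpm_le`) and mixes it with a
fractional perfect matching `y` all of whose weights have order `1 / A`
(`exists_well_distributed_fpm`), in the ratio `(1 - δ) : δ`. As `h(x) ≤ (n / k) log A + n` and
`h(y) ≥ (n / k) (log A - O(1))`, concavity bounds the loss of entropy by `O(δ n)`, and `δ` is taken
to be a small multiple of `ε`.

Both parts rest on `exists_spread_weighting`: in a Dirac hypergraph, every vector `b` of vertex sums
with entries in `[1 - η, 1]` is realised by an edge weighting with values in `[0, D / A]`. By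
linear programming duality this is the inequality
`A (∑ l⁺ - (1 - η) ∑ l⁻) ≤ D ∑_{e ∈ E} (∑_{v ∈ e} l v)⁺` for all vertex weights `l`
(`dual_inequality`). If its right-hand side is small, then most edges have weight at most some small
`θ`. The hypergraph itself need not have a perfect matching among these edges, but the complete
threshold hypergraph `{f : ∑_{v ∈ f} l v ≤ θ}` does, after a few vertices have been removed: a
`d`-set `A` of heavy vertices lying in many light edges passes its degree on to each `d`-set `S` of
lighter vertices, because replacing `A` by `S` only decreases the weight of an edge. The definition of
the Dirac threshold gives a perfect matching of that hypergraph, and summing `l` over it bounds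
`∑ l` by `θ n` (`threshold_sum_le`).

To bound `x e₀`, spread the weight of `e₀` over the edges meeting `e₀` and correct the other vertex
sums by a spread-out weighting of total weight `O(1)` (`exists_absorbing_weighting`). Optimality of
`x` under this perturbation gives `log (1 / x e₀) ≥ log A - O(1)`.
-/

open Finset

/-- The degree of a vertex set `S` in the hypergraph with edge set `E`:
the number of edges containing `S`. -/
def degS {n : ℕ} (E : Finset (Finset (Fin n))) (S : Finset (Fin n)) : ℕ :=
  (E.filter (fun e => S ⊆ e)).card

/-- The minimum `d`-degree of the hypergraph with edge set `E`. -/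
noncomputable def minDeg {n : ℕ} (E : Finset (Finset (Fin n))) (d : ℕ) : ℕ :=
  sInf {m : ℕ | ∃ S : Finset (Fin n), S.card = d ∧ m = degS E S}

/-- `M` is a perfect matching of the hypergraph with edge set `E`. -/
def IsPM {n : ℕ} (E M : Finset (Finset (Fin n))) : Prop :=
  M ⊆ E ∧ (∀ e ∈ M, ∀ f ∈ M, e ≠ f → Disjoint e f) ∧ ∀ v : Fin n, ∃ e ∈ M, v ∈ e

open scoped Classical in
/-- The number `Φ(G)` of perfect matchings of the hypergraph with edge set `E`. -/
noncomputable def numPM {n : ℕ} (E : Finset (Finset (Fin n))) : ℕ :=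
  (E.powerset.filter (fun M => IsPM E M)).card

/-- `x` is a fractional perfect matching of the hypergraph with edge set `E`:
each edge gets a weight in `[0,1]`, non-edges get weight `0`, and the weights of
the edges at each vertex sum to `1`. -/
def IsFPM {n : ℕ} (E : Finset (Finset (Fin n))) (x : Finset (Fin n) → ℝ) : Prop :=
  (∀ e, 0 ≤ x e ∧ x e ≤ 1) ∧ (∀ e, e ∉ E → x e = 0) ∧
    ∀ v : Fin n, ∑ e ∈ E.filter (fun e => v ∈ e), x e = 1

/-- The entropy `h(x) = ∑_e x[e] ln(1/x[e])` of an edge weighting.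
(Since `Real.log (1/0) = 0`, the convention `0 ln 0 = 0` is automatic.) -/
noncomputable def fpmEntropy {n : ℕ} (E : Finset (Finset (Fin n))) (x : Finset (Fin n) → ℝ) : ℝ :=
  ∑ e ∈ E, x e * Real.log (1 / x e)

/-- The entropy `h(G)`: the supremum of `h(x)` over fractional perfect matchings `x`. -/
noncomputable def graphEntropy {n : ℕ} (E : Finset (Finset (Fin n))) : ℝ :=
  sSup {h : ℝ | ∃ x, IsFPM E x ∧ h = fpmEntropy E x}

/-- `m_d(k,n)`: the least `D` such that every `n`-vertex `k`-graph with minimum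
`d`-degree at least `D` has a perfect matching. -/
noncomputable def mThreshold (d k n : ℕ) : ℕ :=
  sInf {D : ℕ | ∀ E : Finset (Finset (Fin n)), (∀ e ∈ E, e.card = k) →
    (∀ S : Finset (Fin n), S.card = d → D ≤ degS E S) → ∃ M, IsPM E M}

/-- `α` is the asymptotic Dirac threshold `α_d(k)`, i.e. the limit of
`m_d(k,n)/C(n-d, k-d)` as `n → ∞` along multiples of `k`. -/
def IsDiracThreshold (d k : ℕ) (α : ℝ) : Prop :=
  Filter.Tendsto
    (fun N : ℕ => (mThreshold d k (k * N) : ℝ) / ((k * N - d).choose (k - d) : ℝ))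
    Filter.atTop (nhds α)

/-! ### The Dirac threshold and degree counting -/

/-- Above the Dirac threshold (with slack `β`), large hypergraphs have perfect matchings. -/
lemma exists_PM_of_threshold {d k : ℕ} (hdk : d < k) {α β : ℝ} (hβ : 0 < β)
    (hα : IsDiracThreshold d k α) :
    ∃ N₀ : ℕ, ∀ N, N₀ ≤ N → ∀ E : Finset (Finset (Fin (k * N))), (∀ e ∈ E, e.card = k) →
      (∀ S : Finset (Fin (k * N)), S.card = d →
        (α + β) * ((k * N - d).choose (k - d) : ℝ) ≤ (degS E S : ℝ)) → ∃ M, IsPM E M := by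
  have h1 := hα.eventually (gt_mem_nhds (show α < α + β by linarith))
  obtain ⟨N₀, hN₀⟩ := Filter.eventually_atTop.1 h1
  refine ⟨max N₀ 1, fun N hN E hE hdeg => ?_⟩
  have hN1 : 1 ≤ N := le_trans (le_max_right _ _) hN
  have h2 := hN₀ N (le_trans (le_max_left _ _) hN)
  have hkN : k ≤ k * N := Nat.le_mul_of_pos_right _ hN1
  have hpos : 0 < ((k * N - d).choose (k - d) : ℝ) := by
    exact_mod_cast Nat.choose_pos (by omega)
  rw [div_lt_iff₀ hpos] at h2
  -- the set defining `mThreshold` contains every `D` too large to be a degree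
  have hne : {D : ℕ | ∀ E : Finset (Finset (Fin (k * N))), (∀ e ∈ E, e.card = k) →
      (∀ S : Finset (Fin (k * N)), S.card = d → D ≤ degS E S) → ∃ M, IsPM E M}.Nonempty := by
    refine ⟨Fintype.card (Finset (Fin (k * N))) + 1, fun E' _ h => ?_⟩
    obtain ⟨S, -, hS⟩ := Finset.exists_subset_card_eq (s := (univ : Finset (Fin (k * N))))
      (n := d) (by simp; omega)
    have := h S hS
    have h3 : degS E' S ≤ Fintype.card (Finset (Fin (k * N))) := Finset.card_le_univ _
    omega
  have hmem := Nat.sInf_mem hne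
  refine hmem E hE fun S hS => ?_
  have h3 := hdeg S hS
  have h4 : (mThreshold d k (k * N) : ℝ) ≤ degS E S := by linarith
  exact_mod_cast h4

lemma threshold_nonneg {d k : ℕ} {α : ℝ} (hα : IsDiracThreshold d k α) : 0 ≤ α :=
  ge_of_tendsto' hα fun _ => by positivity

/-- Weak duality against a perfect matching. -/
lemma IsPM.sum_le {n k : ℕ} {E M : Finset (Finset (Fin n))} (hM : IsPM E M) (hk : 1 ≤ k)
    (hE : ∀ e ∈ E, e.card = k) (l : Fin n → ℝ) {θ : ℝ} (hθ : 0 ≤ θ)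
    (hl : ∀ e ∈ E, ∑ v ∈ e, l v ≤ θ) : ∑ v, l v ≤ θ * n := by
  obtain ⟨hME, hdis, hcov⟩ := hM
  have hU : (univ : Finset (Fin n)) = M.biUnion id := by
    ext v; simpa using hcov v
  have hD : (M : Set (Finset (Fin n))).PairwiseDisjoint id := fun e he f hf hef => hdis e he f hf hef
  have hcard : M.card ≤ n := by
    have h1 : (univ : Finset (Fin n)).card = ∑ e ∈ M, e.card := by
      rw [hU, Finset.card_biUnion hD]; rfl
    rw [Finset.card_univ, Fintype.card_fin] at h1
    refine le_trans ?_ h1.ge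
    rw [Finset.card_eq_sum_ones]
    exact Finset.sum_le_sum fun e he => by rw [hE e (hME he)]; exact hk
  calc ∑ v, l v = ∑ e ∈ M, ∑ v ∈ e, l v := by rw [hU, Finset.sum_biUnion hD]; rfl
    _ ≤ ∑ e ∈ M, θ := Finset.sum_le_sum fun e he => hl e (hME he)
    _ = M.card * θ := by simp
    _ ≤ n * θ := by gcongr
    _ = θ * n := mul_comm _ _

lemma card_supersets_le {n k : ℕ} (E : Finset (Finset (Fin n))) (hE : ∀ e ∈ E, e.card = k)
    (S : Finset (Fin n)) : degS E S ≤ n ^ (k - S.card) := by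
  calc degS E S ≤ (powersetCard (k - S.card) (univ : Finset (Fin n))).card := by
        refine Finset.card_le_card_of_injOn (fun e => e \ S) ?_ ?_
        · intro e he
          have he := Finset.mem_filter.1 he
          simp [mem_powersetCard, card_sdiff_of_subset he.2, hE e he.1]
        · intro e he f hf hef
          have he := Finset.mem_filter.1 he
          have hf := Finset.mem_filter.1 hf
          have : e \ S = f \ S := hef
          rw [← sdiff_union_of_subset he.2, this, sdiff_union_of_subset hf.2]
    _ ≤ n ^ (k - S.card) := by
        rw [card_powersetCard, card_univ, Fintype.card_fin]
        exact Nat.choose_le_pow _ _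

/-- Each edge has at most `2 ^ k` subsets, so an average of degrees over `d`-sets from `P` is
controlled by the number of edges. -/
lemma sum_degS_le {n k : ℕ} (E : Finset (Finset (Fin n))) (hE : ∀ e ∈ E, e.card = k)
    (P : Finset (Finset (Fin n))) : ∑ S ∈ P, degS E S ≤ E.card * 2 ^ k := by
  have h1 : ∑ S ∈ P, degS E S = ∑ e ∈ E, (P.filter (fun S => S ⊆ e)).card := by
    simp only [degS, Finset.card_filter]
    exact Finset.sum_comm
  rw [h1, ← smul_eq_mul]
  refine Finset.sum_le_card_nsmul _ _ _ fun e he => ?_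
  rw [← hE e he, ← Finset.card_powerset]
  exact Finset.card_le_card fun S hS => by simpa using (Finset.mem_filter.1 hS).2

/-- A set `X` of vertices meets few of the edges containing `A`, outside of `A`. -/
lemma card_meet_le {n k d : ℕ} (E : Finset (Finset (Fin n))) (hE : ∀ e ∈ E, e.card = k)
    (A X : Finset (Fin n)) (hA : A.card = d) :
    (E.filter (fun e => A ⊆ e ∧ ¬ Disjoint (e \ A) X)).card ≤ X.card * n ^ (k - d - 1) := by
  have hsub : E.filter (fun e => A ⊆ e ∧ ¬ Disjoint (e \ A) X) ⊆
      (X \ A).biUnion (fun x => E.filter (fun e => insert x A ⊆ e)) := by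
    intro e he
    obtain ⟨he, hAe, hX⟩ := by simpa using he
    obtain ⟨x, hx1, hx2⟩ := Finset.not_disjoint_iff.1 hX
    simp only [mem_biUnion, mem_filter, mem_sdiff] at hx1 ⊢
    exact ⟨x, ⟨hx2, hx1.2⟩, he, insert_subset hx1.1 hAe⟩
  refine (card_le_card hsub).trans (card_biUnion_le.trans ?_)
  calc ∑ x ∈ X \ A, (E.filter (fun e => insert x A ⊆ e)).card
      ≤ ∑ x ∈ X \ A, n ^ (k - d - 1) := by
        refine sum_le_sum fun x hx => ?_
        have h := card_supersets_le E hE (insert x A)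
        rwa [card_insert_of_notMem (mem_sdiff.1 hx).2, hA, ← Nat.sub_sub] at h
    _ ≤ X.card * n ^ (k - d - 1) := by
        rw [sum_const, smul_eq_mul]
        exact Nat.mul_le_mul_right _ (card_le_card sdiff_subset)

lemma minDeg_le {n d : ℕ} (E : Finset (Finset (Fin n))) (S : Finset (Fin n)) (hS : S.card = d) :
    minDeg E d ≤ degS E S := Nat.sInf_le ⟨S, hS, rfl⟩

/-- The `r` largest values of `l` on `s`. -/
lemma exists_top {V : Type*} [DecidableEq V] (l : V → ℝ) (s : Finset V) (r : ℕ) (hr : r ≤ s.card) :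
    ∃ R ⊆ s, R.card = r ∧ ∀ u ∈ R, ∀ v ∈ s \ R, l v ≤ l u := by
  induction r with
  | zero => exact ⟨∅, by simp, by simp, by simp⟩
  | succ r ih =>
    obtain ⟨R, hRs, hRc, hR⟩ := ih (by omega)
    have hne : (s \ R).Nonempty := by
      rw [← card_pos, card_sdiff_of_subset hRs]; omega
    obtain ⟨w, hw, hmax⟩ := exists_max_image (s \ R) l hne
    have hw' := mem_sdiff.1 hw
    refine ⟨insert w R, insert_subset hw'.1 hRs, by rw [card_insert_of_notMem hw'.2, hRc], ?_⟩
    intro u hu v hv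
    have hv' : v ∈ s \ R := by
      simp only [mem_sdiff, mem_insert, not_or] at hv ⊢; exact ⟨hv.1, hv.2.2⟩
    rcases mem_insert.1 hu with rfl | hu
    · exact hmax v hv'
    · exact hR u hu v hv'

lemma choose_lower {k n j r : ℕ} (hn : 2 * k ≤ n) (hjr : j + r ≤ k) :
    (1 / (2 ^ k * (k.factorial : ℝ))) * (n : ℝ) ^ r ≤ ((n - j).choose r : ℝ) := by
  have h1 := Nat.pow_le_choose (α := ℝ) r (n - j)
  refine le_trans ?_ h1
  have h2 : (n : ℝ) / 2 ≤ ((n - j + 1 - r : ℕ) : ℝ) := by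
    rw [div_le_iff₀ (by norm_num)]
    exact_mod_cast (by omega : n ≤ (n - j + 1 - r) * 2)
  have h3 : (r.factorial : ℝ) ≤ k.factorial := by exact_mod_cast Nat.factorial_le (by omega)
  have h4 : (2 : ℝ) ^ r ≤ 2 ^ k := pow_le_pow_right₀ (by norm_num) (by omega)
  have h5 : (0 : ℝ) < r.factorial := by exact_mod_cast Nat.factorial_pos r
  calc (1 / (2 ^ k * (k.factorial : ℝ))) * (n : ℝ) ^ r
      ≤ (1 / (2 ^ r * (r.factorial : ℝ))) * (n : ℝ) ^ r := by gcongr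
    _ = ((n : ℝ) / 2) ^ r / r.factorial := by rw [div_pow]; field_simp
    _ ≤ _ := by gcongr

/-- A minimum `d`-degree of order `n ^ (k - d)` forces vertex degrees of order `n ^ (k - 1)`: average
over the `d`-sets through `v`. -/
lemma vertex_degree_lower {n k d : ℕ} (hd : 1 ≤ d) (hdk : d < k) (hn : 2 * k ≤ n)
    (E : Finset (Finset (Fin n))) (hE : ∀ e ∈ E, e.card = k) {μ : ℝ}
    (hdeg : ∀ S : Finset (Fin n), S.card = d → μ * (n : ℝ) ^ (k - d) ≤ degS E S) (hμ : 0 ≤ μ)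
    (v : Fin n) :
    μ * (1 / (2 ^ k * (k.factorial : ℝ))) / 2 ^ k * (n : ℝ) ^ (k - 1) ≤
      ((E.filter (fun e => v ∈ e)).card : ℝ) := by
  set T := powersetCard (d - 1) ((univ : Finset (Fin n)).erase v) with hT
  have hvT : ∀ t ∈ T, v ∉ t := fun t ht hv => by
    have := (mem_powersetCard.1 ht).1 hv
    simp at this
  set P := T.image (insert v) with hP
  have hPc : P.card = (n - 1).choose (d - 1) := by
    rw [hP, card_image_of_injOn, hT, card_powersetCard, card_erase_of_mem (mem_univ v), card_univ,
      Fintype.card_fin]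
    intro t ht t' ht' htt
    have htt : insert v t = insert v t' := htt
    rw [← erase_insert (hvT t ht), htt, erase_insert (hvT t' ht')]
  have h1 := sum_degS_le (E.filter (fun e => v ∈ e))
    (fun e he => hE e (mem_filter.1 he).1) P
  have h2 : (P.card : ℝ) * (μ * (n : ℝ) ^ (k - d)) ≤
      ((∑ S ∈ P, degS (E.filter (fun e => v ∈ e)) S : ℕ) : ℝ) := by
    rw [Nat.cast_sum, ← nsmul_eq_mul]
    refine card_nsmul_le_sum _ _ _ fun S hS => ?_
    obtain ⟨t, ht, rfl⟩ := mem_image.1 hS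
    have hc : (insert v t).card = d := by
      rw [card_insert_of_notMem (hvT t ht), (mem_powersetCard.1 ht).2]; omega
    refine (hdeg _ hc).trans (le_of_eq ?_)
    congr 1
    unfold degS
    rw [filter_filter]
    congr 1
    refine filter_congr fun e _ => ?_
    simp only [insert_subset_iff]; tauto
  have h3 := choose_lower (k := k) (n := n) (j := 1) (r := d - 1) hn (by omega)
  have h4 : (n : ℝ) ^ (k - 1) = (n : ℝ) ^ (d - 1) * (n : ℝ) ^ (k - d) := by
    rw [← pow_add]; congr 1; omega
  have h5 : ((∑ S ∈ P, degS (E.filter (fun e => v ∈ e)) S : ℕ) : ℝ) ≤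
      ((E.filter (fun e => v ∈ e)).card : ℝ) * 2 ^ k := by exact_mod_cast h1
  rw [hPc] at h2
  rw [div_mul_eq_mul_div, div_le_iff₀ (by positivity), h4]
  calc μ * (1 / (2 ^ k * (k.factorial : ℝ))) * ((n : ℝ) ^ (d - 1) * (n : ℝ) ^ (k - d))
      = (1 / (2 ^ k * (k.factorial : ℝ))) * (n : ℝ) ^ (d - 1) * (μ * (n : ℝ) ^ (k - d)) := by ring
    _ ≤ ((n - 1).choose (d - 1) : ℝ) * (μ * (n : ℝ) ^ (k - d)) := by gcongr
    _ ≤ _ := h2.trans h5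

/-! ### Threshold hypergraphs -/

/-- Edges `e` through a `d`-set `A` of heavy vertices with `∑ l ≤ θ`, and otherwise inside the image
of `ι`, give edges of the threshold hypergraph pulled back along `ι` through any `d`-set `S` of
lighter vertices: replace `A` by `S`. -/
lemma degS_threshold_ge {n m k d : ℕ} (ι : Fin m ↪ Fin n) (l : Fin n → ℝ) (θ : ℝ)
    (E : Finset (Finset (Fin n))) (hE : ∀ e ∈ E, e.card = k) (A : Finset (Fin n)) (hA : A.card = d)
    (S : Finset (Fin m)) (hS : S.card = d) (hSA : ∑ i ∈ S, l (ι i) ≤ ∑ v ∈ A, l v)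
    (G : Finset (Finset (Fin n))) (hG : ∀ e ∈ G, e ∈ E ∧ A ⊆ e ∧ ∑ v ∈ e, l v ≤ θ ∧
      (∀ v ∈ e \ A, ∃ i, i ∉ S ∧ ι i = v)) :
    G.card ≤ degS ((univ : Finset (Finset (Fin m))).filter
      (fun f => f.card = k ∧ ∑ i ∈ f, l (ι i) ≤ θ)) S := by
  set p : Finset (Fin n) → Finset (Fin m) := fun e => univ.filter (fun i => ι i ∈ e \ A) with hp
  have hpmap : ∀ e ∈ G, (p e).map ι = e \ A := by
    intro e he
    ext v
    simp only [hp, mem_map, mem_filter, mem_univ, true_and]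
    constructor
    · rintro ⟨i, hi, rfl⟩; exact hi
    · intro hv
      obtain ⟨i, -, rfl⟩ := (hG e he).2.2.2 v hv
      exact ⟨i, hv, rfl⟩
  have hpS : ∀ e ∈ G, Disjoint S (p e) := by
    intro e he
    rw [disjoint_left]
    intro i hi hi'
    obtain ⟨j, hj, hji⟩ := (hG e he).2.2.2 (ι i) (mem_filter.1 hi').2
    exact hj (ι.injective hji ▸ hi)
  refine card_le_card_of_injOn (fun e => S ∪ p e) ?_ ?_
  · intro e he
    obtain ⟨heE, hAe, hle, hex⟩ := hG e he
    have hsd : ∑ v ∈ e \ A, l v + ∑ v ∈ A, l v = ∑ v ∈ e, l v := sum_sdiff hAe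
    simp only [coe_filter, mem_filter, mem_univ, true_and, Set.mem_ofPred_eq]
    refine ⟨⟨?_, ?_⟩, subset_union_left⟩
    · rw [card_union_of_disjoint (hpS e he), ← card_map ι (s := p e), hpmap e he,
        card_sdiff_of_subset hAe, hS, hA, hE e heE]
      have := card_le_card hAe
      rw [hA, hE e heE] at this
      omega
    · rw [sum_union (hpS e he)]
      have : ∑ i ∈ p e, l (ι i) = ∑ v ∈ e \ A, l v := by rw [← hpmap e he, sum_map]
      linarith
  · intro e he f hf hef
    have hef : S ∪ p e = S ∪ p f := hef
    have h1 : p e = p f := by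
      rw [← union_sdiff_cancel_left (hpS e he), hef, union_sdiff_cancel_left (hpS f hf)]
    rw [← sdiff_union_of_subset (hG e he).2.1, ← sdiff_union_of_subset (hG f hf).2.1,
      ← hpmap e he, ← hpmap f hf, h1]

lemma sum_le_sum_of_dominated {V W : Type*} (l : V → ℝ) (l' : W → ℝ) (A : Finset V)
    (S : Finset W) (h : S.card = A.card) (hl : ∀ u ∈ A, ∀ i ∈ S, l' i ≤ l u) :
    ∑ i ∈ S, l' i ≤ ∑ v ∈ A, l v := by
  rcases A.eq_empty_or_nonempty with rfl | hne
  · simp at h; simp [h]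
  · obtain ⟨u, hu, hmin⟩ := exists_min_image A l hne
    calc ∑ i ∈ S, l' i ≤ S.card • l u := sum_le_card_nsmul _ _ _ fun i hi => hl u hu i hi
      _ = A.card • l u := by rw [h]
      _ ≤ _ := card_nsmul_le_sum _ _ _ fun v hv => hmin v hv

/-- Let few edges `e` of a Dirac hypergraph have `∑ v ∈ e, l v > θ`. Then, on a set `W` of almost all
vertices, none of them heavier than those of a linear-sized set `R`, the total weight is at most
`θ * n`. By averaging, some `d`-set `A ⊆ R` lies in few of the exceptional edges. By
`degS_threshold_ge` the hypergraph of all `k`-subsets of `W` of weight at most `θ` then inherits the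
`d`-degree of `A` at every `d`-set, so it has a perfect matching. -/
lemma threshold_sum_le {d k : ℕ} (hdk : d < k) {γ α : ℝ} (hγ : 0 < γ)
    (hα : IsDiracThreshold d k α) :
    ∃ ζ : ℝ, 0 < ζ ∧ ζ ≤ 1 / 2 ∧ ∀ ρ : ℝ, 0 < ρ → ∃ c : ℝ, 0 < c ∧ ∃ n₀ : ℕ, ∀ n : ℕ, n₀ ≤ n →
      ∀ E : Finset (Finset (Fin n)), (∀ e ∈ E, e.card = k) →
      (∀ S : Finset (Fin n), S.card = d → (α + γ) * ((n - d).choose (k - d) : ℝ) ≤ degS E S) →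
      ∀ (l : Fin n → ℝ) (θ : ℝ), 0 ≤ θ →
      ((E.filter (fun e => θ < ∑ v ∈ e, l v)).card : ℝ) ≤ c * (n : ℝ) ^ k →
      ∀ R W : Finset (Fin n), (∀ u ∈ R, ∀ v ∈ W, l v ≤ l u) →
      ρ * n ≤ R.card → (1 - ζ) * n ≤ W.card → k ∣ W.card → ∑ v ∈ W, l v ≤ θ * n := by
  set c₀ : ℝ := 1 / (2 ^ k * (k.factorial : ℝ)) with hc₀
  have hc₀pos : 0 < c₀ := by positivity
  have hα0 := threshold_nonneg hα
  obtain ⟨N₀, hN₀⟩ := exists_PM_of_threshold hdk (half_pos hγ) hα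
  set ζ : ℝ := min (γ * c₀ / 8) (1 / 2) with hζ
  have hζpos : 0 < ζ := by positivity
  have hζ1 : ζ ≤ γ * c₀ / 8 := min_le_left _ _
  have hζ2 : ζ ≤ 1 / 2 := min_le_right _ _
  refine ⟨ζ, hζpos, hζ2, fun ρ hρ => ?_⟩
  set κ : ℝ := γ * c₀ / 4 with hκ
  have hκpos : 0 < κ := by positivity
  refine ⟨c₀ * ρ ^ d * κ / 2 ^ (k + 1), by positivity, ?_⟩
  obtain ⟨a₁, ha₁⟩ := exists_nat_ge (d / ζ)
  obtain ⟨a₂, ha₂⟩ := exists_nat_ge (2 * k / ρ)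
  refine ⟨max (max a₁ a₂) (max (2 * k) (2 * (k * N₀) + 1)), ?_⟩
  intro n hn E hE hdeg l θ hθ hF R W hRW hR hW hkW
  simp only [max_le_iff] at hn
  obtain ⟨⟨hn1, hn2⟩, hn3, hn4⟩ := hn
  have hnpos : (0 : ℝ) < n := by exact_mod_cast (by omega : 0 < n)
  have hn1' : (d : ℝ) ≤ ζ * n := by
    have h : (a₁ : ℝ) ≤ n := by exact_mod_cast hn1
    have := ha₁.trans h
    rw [div_le_iff₀ hζpos] at this; linarith
  have hR2k : 2 * k ≤ R.card := by
    have h : (a₂ : ℝ) ≤ n := by exact_mod_cast hn2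
    have := ha₂.trans h
    rw [div_le_iff₀ hρ] at this
    have h' : (2 * k : ℝ) ≤ R.card := by linarith
    exact_mod_cast h'
  set F := E.filter (fun e => θ < ∑ v ∈ e, l v) with hFdef
  -- a `d`-set `A ⊆ R` contained in few edges of `F`
  obtain ⟨A, hAR, hAc, hAF⟩ : ∃ A ⊆ R, A.card = d ∧ (degS F A : ℝ) ≤ κ * (n : ℝ) ^ (k - d) := by
    by_contra! hcon
    have h1 := sum_degS_le F (fun e he => hE e (mem_filter.1 he).1) (powersetCard d R)
    have h2 : ((powersetCard d R).card : ℝ) * (κ * (n : ℝ) ^ (k - d)) ≤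
        ((∑ S ∈ powersetCard d R, degS F S : ℕ) : ℝ) := by
      rw [Nat.cast_sum, ← nsmul_eq_mul]
      refine card_nsmul_le_sum _ _ _ fun S hS => ?_
      have := mem_powersetCard.1 hS
      exact (hcon S this.1 this.2).le
    have h3 : ((∑ S ∈ powersetCard d R, degS F S : ℕ) : ℝ) ≤ F.card * 2 ^ k := by exact_mod_cast h1
    have h4 := choose_lower (k := k) (n := R.card) (j := 0) (r := d) hR2k (by omega)
    rw [card_powersetCard] at h2
    simp only [Nat.sub_zero] at h4
    have h5 : c₀ * (ρ * n) ^ d ≤ (R.card.choose d : ℝ) := by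
      refine le_trans ?_ h4
      gcongr
    have h6 : c₀ * (ρ * n) ^ d * (κ * (n : ℝ) ^ (k - d)) ≤
        (c₀ * ρ ^ d * κ / 2 ^ (k + 1) * (n : ℝ) ^ k) * 2 ^ k :=
      calc _ ≤ (R.card.choose d : ℝ) * (κ * (n : ℝ) ^ (k - d)) := by gcongr
        _ ≤ F.card * 2 ^ k := h2.trans h3
        _ ≤ _ := by gcongr
    have h7 : (n : ℝ) ^ k = (n : ℝ) ^ d * (n : ℝ) ^ (k - d) := by
      rw [← pow_add]; congr 1; omega
    have h8 : c₀ * (ρ * n) ^ d * (κ * (n : ℝ) ^ (k - d)) = c₀ * ρ ^ d * κ * (n : ℝ) ^ k := by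
      rw [h7, mul_pow]; ring
    have h9 : (c₀ * ρ ^ d * κ / 2 ^ (k + 1) * (n : ℝ) ^ k) * 2 ^ k =
        c₀ * ρ ^ d * κ * (n : ℝ) ^ k / 2 := by
      rw [pow_succ]; field_simp
    have h10 : 0 < c₀ * ρ ^ d * κ * (n : ℝ) ^ k := by positivity
    linarith
  obtain ⟨N, hWN⟩ := hkW
  set ι : Fin (k * N) ↪ Fin n := (W.orderEmbOfFin hWN).toEmbedding with hι
  have hιW : ∀ i, ι i ∈ W := fun i => W.orderEmbOfFin_mem hWN i
  have hWι : ∀ v ∈ W, ∃ i, ι i = v := by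
    intro v hv
    have : v ∈ Set.range (W.orderEmbOfFin hWN) := by rw [range_orderEmbOfFin]; exact hv
    exact this
  have hNn : k * N ≤ n := by
    rw [← hWN]; exact (card_le_univ W).trans (by simp)
  have hN : N₀ ≤ N := by
    have h1 : (1 / 2 : ℝ) * n ≤ W.card := le_trans (by gcongr; linarith) hW
    have h2 : (n : ℝ) ≤ 2 * (k * N : ℕ) := by rw [← hWN]; linarith
    have h3 : n ≤ 2 * (k * N) := by exact_mod_cast h2
    have h4 : k * N₀ ≤ k * N := by omega
    exact Nat.le_of_mul_le_mul_left h4 (by omega)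
  obtain ⟨M, hM⟩ := hN₀ N hN ((univ : Finset (Finset (Fin (k * N)))).filter
      (fun f => f.card = k ∧ ∑ i ∈ f, l (ι i) ≤ θ)) (fun e he => (mem_filter.1 he).2.1) (by
    intro S hS
    set X : Finset (Fin n) := Wᶜ ∪ S.map ι with hX
    have hXc : (X.card : ℝ) ≤ 2 * ζ * n := by
      have h1 : X.card ≤ (n - W.card) + d := by
        refine (card_union_le _ _).trans ?_
        rw [card_compl, card_map, hS, Fintype.card_fin]
      have h2 : W.card ≤ n := by omega
      have h3 : (X.card : ℝ) ≤ (n - W.card) + d := by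
        rw [← Nat.cast_sub h2]; exact_mod_cast h1
      linarith
    set G := E.filter (fun e => A ⊆ e ∧ ∑ v ∈ e, l v ≤ θ ∧ Disjoint (e \ A) X) with hG
    have h1 := degS_threshold_ge ι l θ E hE A hAc S hS
      (sum_le_sum_of_dominated l (fun i => l (ι i)) A S (by rw [hS, hAc])
        fun u hu i _ => hRW u (hAR hu) _ (hιW i)) G (by
        intro e he
        obtain ⟨heE, hAe, hle, hdis⟩ := by simpa [hG] using he
        refine ⟨heE, hAe, hle, fun v hv => ?_⟩
        have hvX : v ∉ X := disjoint_left.1 hdis hv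
        simp only [hX, mem_union, mem_compl, not_or, not_not] at hvX
        obtain ⟨i, rfl⟩ := hWι v hvX.1
        exact ⟨i, fun hi => hvX.2 (mem_map_of_mem _ hi), rfl⟩)
    have h2 : degS E A ≤ G.card + degS F A +
        (E.filter (fun e => A ⊆ e ∧ ¬ Disjoint (e \ A) X)).card := by
      unfold degS
      rw [hG, hFdef, filter_filter]
      refine le_trans (card_le_card ?_) ((card_union_le _ _).trans
        (Nat.add_le_add_right (card_union_le _ _) _))
      intro e he
      simp only [mem_filter, mem_union] at he ⊢
      by_cases h : Disjoint (e \ A) X <;> by_cases h' : θ < ∑ v ∈ e, l v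
      · tauto
      · have := not_lt.1 h'; tauto
      · tauto
      · tauto
    have h3 : ((E.filter (fun e => A ⊆ e ∧ ¬ Disjoint (e \ A) X)).card : ℝ) ≤
        2 * ζ * (n : ℝ) ^ (k - d) := by
      have h := card_meet_le E hE A X hAc
      have h' : ((E.filter (fun e => A ⊆ e ∧ ¬ Disjoint (e \ A) X)).card : ℝ) ≤
        X.card * (n : ℝ) ^ (k - d - 1) := by exact_mod_cast h
      refine h'.trans ?_
      have h4 : (n : ℝ) ^ (k - d) = n * (n : ℝ) ^ (k - d - 1) := by
        rw [← pow_succ']; congr 1; omega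
      rw [h4, ← mul_assoc]
      gcongr
    have h2' : (degS E A : ℝ) ≤ G.card + degS F A +
        (E.filter (fun e => A ⊆ e ∧ ¬ Disjoint (e \ A) X)).card := by exact_mod_cast h2
    have h4 := hdeg A hAc
    have h5 := choose_lower (k := k) (n := n) (j := d) (r := k - d) hn3 (by omega)
    have h6 : ((k * N - d).choose (k - d) : ℝ) ≤ ((n - d).choose (k - d) : ℝ) := by
      exact_mod_cast Nat.choose_le_choose _ (by omega)
    have h7 : (G.card : ℝ) ≤ degS ((univ : Finset (Finset (Fin (k * N)))).filter
      (fun f => f.card = k ∧ ∑ i ∈ f, l (ι i) ≤ θ)) S := by exact_mod_cast h1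
    have h8 : 2 * ζ * (n : ℝ) ^ (k - d) ≤ γ / 4 * (c₀ * (n : ℝ) ^ (k - d)) := by
      rw [← mul_assoc]
      exact mul_le_mul_of_nonneg_right (by linarith) (by positivity)
    have h9 : κ * (n : ℝ) ^ (k - d) = γ / 4 * (c₀ * (n : ℝ) ^ (k - d)) := by rw [hκ]; ring
    have h10 : γ / 4 * (c₀ * (n : ℝ) ^ (k - d)) ≤ γ / 4 * ((n - d).choose (k - d) : ℝ) := by
      gcongr
    calc (α + γ / 2) * ((k * N - d).choose (k - d) : ℝ)
        ≤ (α + γ / 2) * ((n - d).choose (k - d) : ℝ) := by gcongr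
      _ ≤ _ := by linarith)
  have h1 := hM.sum_le (k := k) (by omega) (fun e he => (mem_filter.1 he).2.1) (fun i => l (ι i)) hθ
    (fun e he => (mem_filter.1 he).2.2)
  have h2 : ∑ v ∈ W, l v = ∑ i, l (ι i) := by
    have h3 : W = univ.map ι := by
      ext v
      simp only [mem_map, mem_univ, true_and]
      exact ⟨hWι v, fun ⟨i, hi⟩ => hi ▸ hιW i⟩
    conv_lhs => rw [h3]
    rw [sum_map]
  rw [h2]
  refine h1.trans ?_
  gcongr

/-! ### The dual inequality -/

lemma sum_incidence {n : ℕ} (E : Finset (Finset (Fin n))) (g : Fin n → Finset (Fin n) → ℝ) :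
    ∑ v, ∑ e ∈ E.filter (fun e => v ∈ e), g v e = ∑ e ∈ E, ∑ v ∈ e, g v e := by
  refine sum_comm' fun v e => ?_
  simp only [mem_univ, mem_filter, true_and]; tauto

lemma sum_incidence_const {n k : ℕ} (E : Finset (Finset (Fin n))) (hE : ∀ e ∈ E, e.card = k)
    (g : Finset (Fin n) → ℝ) :
    ∑ v, ∑ e ∈ E.filter (fun e => v ∈ e), g e = k * ∑ e ∈ E, g e := by
  rw [sum_incidence E (fun _ e => g e), mul_sum]
  refine sum_congr rfl fun e he => ?_
  rw [sum_const, hE e he, nsmul_eq_mul]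

lemma codegree_le {n k : ℕ} (E : Finset (Finset (Fin n))) (hE : ∀ e ∈ E, e.card = k)
    {u v : Fin n} (huv : u ≠ v) :
    (((E.filter (fun e => v ∈ e)).filter (fun e => u ∈ e)).card : ℝ) ≤ (n : ℝ) ^ (k - 2) := by
  have h := card_supersets_le E hE {u, v}
  rw [card_pair huv] at h
  have h2 : (E.filter (fun e => v ∈ e)).filter (fun e => u ∈ e) =
      E.filter (fun e => ({u, v} : Finset (Fin n)) ⊆ e) := by
    rw [filter_filter]
    refine filter_congr fun e _ => ?_
    simp only [insert_subset_iff, singleton_subset_iff]; tauto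
  rw [h2]
  exact_mod_cast h

lemma degree_le {n k : ℕ} (E : Finset (Finset (Fin n))) (hE : ∀ e ∈ E, e.card = k) (v : Fin n) :
    ((E.filter (fun e => v ∈ e)).card : ℝ) ≤ (n : ℝ) ^ (k - 1) := by
  have h := card_supersets_le E hE {v}
  simp only [degS, singleton_subset_iff, card_singleton] at h
  exact_mod_cast h

lemma exists_degree_lower {d k : ℕ} (hd : 1 ≤ d) (hdk : d < k) {γ α : ℝ} (hγ : 0 < γ)
    (hα : 0 ≤ α) :
    ∃ c : ℝ, 0 < c ∧ ∀ n : ℕ, 2 * k ≤ n →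
      ∀ E : Finset (Finset (Fin n)), (∀ e ∈ E, e.card = k) →
      (∀ S : Finset (Fin n), S.card = d → (α + γ) * ((n - d).choose (k - d) : ℝ) ≤ degS E S) →
      ∀ v, c * (n : ℝ) ^ (k - 1) ≤ ((E.filter (fun e => v ∈ e)).card : ℝ) := by
  refine ⟨γ * (1 / (2 ^ k * (k.factorial : ℝ))) * (1 / (2 ^ k * (k.factorial : ℝ))) / 2 ^ k,
    by positivity, fun n hn E hE hdeg v => ?_⟩
  refine vertex_degree_lower hd hdk hn E hE (fun S hS => le_trans ?_ (hdeg S hS)) (by positivity) v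
  have h5 := choose_lower (k := k) (n := n) (j := d) (r := k - d) hn (by omega)
  rw [mul_assoc]
  exact mul_le_mul (by linarith) h5 (by positivity) (by linarith)

/-- If the sum over the top part `W` of `U` is at most `X`, then the positive part of `l` on `U` is
beaten by its negative part, with room to spare proportional to the size of `U \ W`. -/
lemma pos_part_le_of_top {V : Type*} [DecidableEq V] (l : V → ℝ) (U W : Finset V) (hWU : W ⊆ U)
    (htop : ∀ u ∈ W, ∀ v ∈ U \ W, l v ≤ l u) {X σ : ℝ} (hX : ∑ v ∈ W, l v ≤ X)
    (hσ : σ ≤ 1) (hQ : (U \ W).Nonempty) (hQW : (U \ W).card ≤ W.card)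
    (hσQ : σ * U.card ≤ (U \ W).card) (hX0 : 0 ≤ X) :
    ∑ v ∈ U, max (l v) 0 ≤ 2 * X + (1 - σ) * ∑ v ∈ U, max (-l v) 0 := by
  obtain ⟨w, hw, hmax⟩ := exists_max_image (U \ W) l hQ
  set Q := U \ W
  have hsplit : ∀ f : V → ℝ, ∑ v ∈ U, f v = ∑ v ∈ Q, f v + ∑ v ∈ W, f v :=
    fun f => (sum_sdiff hWU).symm
  have hcU : (U.card : ℝ) = Q.card + W.card := by
    have := card_sdiff_add_card_eq_card hWU
    exact_mod_cast this.symm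
  have hQW' : (Q.card : ℝ) ≤ W.card := by exact_mod_cast hQW
  rcases le_or_gt 0 (l w) with ha | ha
  · have h1 : ∑ v ∈ W, max (l v) 0 = ∑ v ∈ W, l v :=
      sum_congr rfl fun v hv => max_eq_left (ha.trans (htop v hv w hw))
    have h2 : W.card * l w ≤ ∑ v ∈ W, l v := by
      rw [← nsmul_eq_mul]; exact card_nsmul_le_sum _ _ _ fun v hv => htop v hv w hw
    have h3 : ∑ v ∈ Q, max (l v) 0 ≤ Q.card * l w := by
      rw [← nsmul_eq_mul]
      exact sum_le_card_nsmul _ _ _ fun v hv => max_le (hmax v hv) ha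
    have h4 : (Q.card : ℝ) * l w ≤ W.card * l w := by gcongr
    have h5 : 0 ≤ (1 - σ) * ∑ v ∈ U, max (-l v) 0 :=
      mul_nonneg (by linarith) (sum_nonneg fun v _ => le_max_right _ _)
    rw [hsplit, h1]
    linarith
  · have h1 : ∑ v ∈ Q, max (l v) 0 = 0 :=
      sum_eq_zero fun v hv => max_eq_right ((hmax v hv).trans ha.le)
    have h2 : ∑ v ∈ W, max (-l v) 0 ≤ W.card * (-l w) := by
      rw [← nsmul_eq_mul]
      exact sum_le_card_nsmul _ _ _ fun v hv =>
        max_le (neg_le_neg (htop v hv w hw)) (by linarith)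
    have h3 : Q.card * (-l w) ≤ ∑ v ∈ Q, max (-l v) 0 := by
      rw [← nsmul_eq_mul]
      exact card_nsmul_le_sum _ _ _ fun v hv => le_max_of_le_left (neg_le_neg (hmax v hv))
    have h4 : ∑ v ∈ W, max (l v) 0 = ∑ v ∈ W, l v + ∑ v ∈ W, max (-l v) 0 := by
      rw [← sum_add_distrib]
      refine sum_congr rfl fun v _ => ?_
      rcases le_total 0 (l v) with h | h
      · rw [max_eq_left h, max_eq_right (by linarith)]; ring
      · rw [max_eq_right h, max_eq_left (by linarith)]; ring
    rw [hsplit, hsplit, h1, h4]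
    rw [hcU] at hσQ
    rcases le_or_gt σ 0 with hs | hs
    · have : 0 ≤ ∑ v ∈ Q, max (-l v) 0 := sum_nonneg fun v _ => le_max_right _ _
      have : 0 ≤ ∑ v ∈ W, max (-l v) 0 := sum_nonneg fun v _ => le_max_right _ _
      nlinarith
    · nlinarith [mul_le_mul_of_nonneg_left h2 hs.le,
        mul_le_mul_of_nonneg_left h3 (sub_nonneg.2 hσ),
        mul_nonneg (sub_nonneg.2 hσQ) (neg_nonneg.2 ha.le)]

/-- A few vertices cannot carry much positive weight, since every vertex has large degree and
small codegrees. -/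
lemma pos_part_few_le {n k : ℕ} (hk : 2 ≤ k) (E : Finset (Finset (Fin n)))
    (hE : ∀ e ∈ E, e.card = k) {c ρ : ℝ}
    (hdeg : ∀ v, c * (n : ℝ) ^ (k - 1) ≤ ((E.filter (fun e => v ∈ e)).card : ℝ))
    (l : Fin n → ℝ) (R : Finset (Fin n)) (hR : (R.card : ℝ) ≤ ρ * n) :
    (n : ℝ) ^ (k - 1) * (c * ∑ v ∈ R, max (l v) 0) ≤
      k * ∑ e ∈ E, max (∑ v ∈ e, l v) 0 + (n : ℝ) ^ (k - 1) * (ρ * ∑ v, max (-l v) 0) := by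
  set m := ∑ v, max (-l v) 0 with hm
  have hm0 : 0 ≤ m := sum_nonneg fun v _ => le_max_right _ _
  have hv : ∀ v, c * (n : ℝ) ^ (k - 1) * max (l v) 0 ≤
      ∑ e ∈ E.filter (fun e => v ∈ e), max (∑ u ∈ e, l u) 0 + (n : ℝ) ^ (k - 2) * m := by
    intro v
    have h1 : ∀ e ∈ E.filter (fun e => v ∈ e), max (l v) 0 ≤
        max (∑ u ∈ e, l u) 0 + ∑ u ∈ e.erase v, max (-l u) 0 := by
      intro e he
      have hs : ∑ u ∈ e, l u = l v + ∑ u ∈ e.erase v, l u :=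
        (add_sum_erase _ _ (mem_filter.1 he).2).symm
      have h2 : 0 ≤ ∑ u ∈ e.erase v, l u + ∑ u ∈ e.erase v, max (-l u) 0 := by
        rw [← sum_add_distrib]
        exact sum_nonneg fun u _ => by linarith [le_max_left (-l u) 0]
      have h3 : 0 ≤ ∑ u ∈ e.erase v, max (-l u) 0 := sum_nonneg fun u _ => le_max_right _ _
      refine max_le ?_ ?_
      · linarith [le_max_left (∑ u ∈ e, l u) 0]
      · linarith [le_max_right (∑ u ∈ e, l u) 0]
    have h4 : ∑ e ∈ E.filter (fun e => v ∈ e), ∑ u ∈ e.erase v, max (-l u) 0 ≤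
        (n : ℝ) ^ (k - 2) * m := by
      have h5 : ∑ e ∈ E.filter (fun e => v ∈ e), ∑ u ∈ e.erase v, max (-l u) 0 =
          ∑ u ∈ univ.erase v, ∑ e ∈ (E.filter (fun e => v ∈ e)).filter (fun e => u ∈ e),
            max (-l u) 0 := by
        refine sum_comm' fun e u => ?_
        simp only [mem_univ, mem_filter, mem_erase]; tauto
      rw [h5, hm, mul_sum]
      refine (sum_le_sum (f := fun u => ∑ e ∈ (E.filter (fun e => v ∈ e)).filter (fun e => u ∈ e),
            max (-l u) 0) (g := fun u => (n : ℝ) ^ (k - 2) * max (-l u) 0) fun u hu => ?_).trans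
          (sum_le_sum_of_subset_of_nonneg (subset_univ _) fun u _ _ =>
            mul_nonneg (by positivity) (le_max_right _ _))
      rw [sum_const, nsmul_eq_mul]
      exact mul_le_mul_of_nonneg_right (codegree_le E hE (ne_of_mem_erase hu)) (le_max_right _ _)
    calc c * (n : ℝ) ^ (k - 1) * max (l v) 0
        ≤ ((E.filter (fun e => v ∈ e)).card : ℝ) * max (l v) 0 :=
          mul_le_mul_of_nonneg_right (hdeg v) (le_max_right _ _)
      _ ≤ ∑ e ∈ E.filter (fun e => v ∈ e),
            (max (∑ u ∈ e, l u) 0 + ∑ u ∈ e.erase v, max (-l u) 0) := by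
          rw [← nsmul_eq_mul]; exact card_nsmul_le_sum _ _ _ h1
      _ ≤ _ := by rw [sum_add_distrib]; linarith
  have h6 := sum_incidence_const E hE (fun e => max (∑ u ∈ e, l u) 0)
  have h7 : ∑ v ∈ R, ∑ e ∈ E.filter (fun e => v ∈ e), max (∑ u ∈ e, l u) 0 ≤
      k * ∑ e ∈ E, max (∑ u ∈ e, l u) 0 := by
    rw [← h6]
    exact sum_le_sum_of_subset_of_nonneg (subset_univ _) fun v _ _ =>
      sum_nonneg fun e _ => le_max_right _ _
  have h8 : (n : ℝ) ^ (k - 1) = n * (n : ℝ) ^ (k - 2) := by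
    rw [← pow_succ']; congr 1; omega
  calc (n : ℝ) ^ (k - 1) * (c * ∑ v ∈ R, max (l v) 0)
      = ∑ v ∈ R, c * (n : ℝ) ^ (k - 1) * max (l v) 0 := by rw [← mul_sum]; ring
    _ ≤ ∑ v ∈ R, (∑ e ∈ E.filter (fun e => v ∈ e), max (∑ u ∈ e, l u) 0 +
          (n : ℝ) ^ (k - 2) * m) := sum_le_sum fun v _ => hv v
    _ = ∑ v ∈ R, ∑ e ∈ E.filter (fun e => v ∈ e), max (∑ u ∈ e, l u) 0 +
          R.card * ((n : ℝ) ^ (k - 2) * m) := by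
        rw [sum_add_distrib, sum_const, nsmul_eq_mul]
    _ ≤ k * ∑ e ∈ E, max (∑ v ∈ e, l v) 0 + (ρ * n) * ((n : ℝ) ^ (k - 2) * m) := by gcongr
    _ = _ := by rw [h8]; ring

lemma exists_mul_between {k n : ℕ} (hk : k ∣ n) {x : ℝ} (hx : 0 < x) (hn : 2 * k / x ≤ n) :
    ∃ r : ℕ, k ∣ r ∧ x / 2 * n ≤ r ∧ (r : ℝ) ≤ x * n := by
  obtain ⟨N, rfl⟩ := hk
  refine ⟨k * ⌊x * N⌋₊, dvd_mul_right _ _, ?_, ?_⟩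
  · have h1 := (Nat.lt_floor_add_one (x * N)).le
    rw [div_le_iff₀ hx] at hn
    push_cast at hn ⊢
    have hk0 : (0 : ℝ) ≤ k := by positivity
    nlinarith [mul_le_mul_of_nonneg_left h1 hk0]
  · have h1 := Nat.floor_le (show 0 ≤ x * N by positivity)
    push_cast
    have hk0 : (0 : ℝ) ≤ k := by positivity
    nlinarith [mul_le_mul_of_nonneg_left h1 hk0]

/-- The dual form of `exists_spread_weighting`. Remove the heaviest `ρ n` vertices `R`, which carry
little positive weight by `pos_part_few_le`, and then a small proportion of lightest vertices; by Markov's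
inequality `threshold_sum_le` applies to what is left, with `θ` of order `P / n ^ k`, where `P` is
the sum on the right-hand side. Removing the lightest vertices gains the factor `1 - η` in front of
the negative part. -/
lemma dual_inequality {d k : ℕ} (hd : 1 ≤ d) (hdk : d < k) {γ α : ℝ} (hγ : 0 < γ)
    (hα : IsDiracThreshold d k α) :
    ∃ η : ℝ, 0 < η ∧ η < 1 ∧ ∃ D : ℝ, 1 ≤ D ∧ ∃ n₀ : ℕ, ∀ n : ℕ, n₀ ≤ n → k ∣ n →
      ∀ E : Finset (Finset (Fin n)), (∀ e ∈ E, e.card = k) →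
      (∀ S : Finset (Fin n), S.card = d → (α + γ) * ((n - d).choose (k - d) : ℝ) ≤ degS E S) →
      ∀ l : Fin n → ℝ, (n : ℝ) ^ (k - 1) *
        (∑ v, max (l v) 0 - (1 - η) * ∑ v, max (-l v) 0) ≤ D * ∑ e ∈ E, max (∑ v ∈ e, l v) 0 := by
  obtain ⟨ζ, hζ, hζ2, H⟩ := threshold_sum_le hdk hγ hα
  obtain ⟨c₁, hc₁, hdegl⟩ := exists_degree_lower hd hdk hγ (threshold_nonneg hα)
  set σ := ζ / 4 with hσ
  set ρ := min (ζ / 2) (c₁ * σ / 2) with hρ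
  have hσpos : 0 < σ := by positivity
  have hρpos : 0 < ρ := by positivity
  have hρ1 : ρ ≤ ζ / 2 := min_le_left _ _
  have hρ2 : ρ ≤ c₁ * σ / 2 := min_le_right _ _
  obtain ⟨c, hc, n₁, H⟩ := H (ρ / 2) (by positivity)
  refine ⟨σ / 2, by positivity, by linarith, 2 / c + k / c₁ + 1, by
    have : 0 < 2 / c := by positivity
    have : 0 ≤ k / c₁ := by positivity
    linarith, ?_⟩
  obtain ⟨a₁, ha₁⟩ := exists_nat_ge (2 * k / ρ)
  obtain ⟨a₂, ha₂⟩ := exists_nat_ge (2 * k / (ζ / 2))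
  refine ⟨max (max a₁ a₂) (max n₁ (2 * k)), fun n hn hkn E hE hdeg l => ?_⟩
  simp only [max_le_iff] at hn
  obtain ⟨⟨hn1, hn2⟩, hn3, hn4⟩ := hn
  have hnpos : (0 : ℝ) < n := by exact_mod_cast (by omega : 0 < n)
  obtain ⟨r, hkr, hr1, hr2⟩ := exists_mul_between hkn hρpos
    (ha₁.trans (by exact_mod_cast hn1 : (a₁ : ℝ) ≤ n))
  obtain ⟨q, hkq, hq1, hq2⟩ := exists_mul_between hkn (half_pos hζ)
    (ha₂.trans (by exact_mod_cast hn2 : (a₂ : ℝ) ≤ n))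
  have hrq : r + q ≤ n := by
    have : ((r + q : ℕ) : ℝ) ≤ n := by push_cast; nlinarith
    exact_mod_cast this
  obtain ⟨R, -, hRc, hR⟩ := exists_top l (univ : Finset (Fin n)) r (by simp; omega)
  have hUc : (univ \ R).card = n - r := by
    rw [card_sdiff_of_subset (subset_univ _), hRc]; simp
  obtain ⟨W, hWU, hWc, hW⟩ := exists_top l (univ \ R) (n - r - q) (by omega)
  have hQc : ((univ \ R) \ W).card = q := by
    rw [card_sdiff_of_subset hWU, hUc, hWc]; omega
  have hWc' : (W.card : ℝ) = n - r - q := by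
    rw [hWc, Nat.cast_sub (by omega), Nat.cast_sub (by omega)]
  set P := ∑ e ∈ E, max (∑ v ∈ e, l v) 0 with hP
  have hP0 : 0 ≤ P := sum_nonneg fun e _ => le_max_right _ _
  set θ := P / (c * (n : ℝ) ^ k) with hθ
  have hθ0 : 0 ≤ θ := by positivity
  -- Markov's inequality for the positive part of `e ↦ ∑ v ∈ e, l v`
  have hF : ((E.filter (fun e => θ < ∑ v ∈ e, l v)).card : ℝ) ≤ c * (n : ℝ) ^ k := by
    rcases hP0.eq_or_lt with h0 | h0
    · have : E.filter (fun e => θ < ∑ v ∈ e, l v) = ∅ := by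
        refine filter_eq_empty_iff.2 fun e he => ?_
        rw [hθ, ← h0, zero_div, not_lt]
        have h1 : max (∑ v ∈ e, l v) 0 ≤ P :=
          single_le_sum (f := fun e => max (∑ v ∈ e, l v) 0) (fun e _ => le_max_right _ _) he
        exact (le_max_left _ _).trans (h1.trans h0.ge)
      rw [this]; simp; positivity
    · have hθpos : 0 < θ := by positivity
      have h1 : ((E.filter (fun e => θ < ∑ v ∈ e, l v)).card : ℝ) * θ ≤ P := by
        rw [← nsmul_eq_mul]
        refine (card_nsmul_le_sum _ (fun e => max (∑ v ∈ e, l v) 0) _ fun e he =>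
          le_max_of_le_left (mem_filter.1 he).2.le).trans ?_
        exact sum_le_sum_of_subset_of_nonneg (filter_subset _ _) fun e _ _ => le_max_right _ _
      have h2 : P = c * (n : ℝ) ^ k * θ := by rw [hθ]; field_simp
      rw [h2] at h1
      exact le_of_mul_le_mul_right h1 hθpos
  have hX := H n hn3 E hE hdeg l θ hθ0 hF R W
    (fun u hu v hv => hR u hu v (hWU hv)) (by rw [hRc]; exact hr1)
    (by rw [hWc']; nlinarith) (by
      rw [hWc]; exact Nat.dvd_sub (Nat.dvd_sub hkn hkr) hkq)
  have hn_half : (n : ℝ) / 2 ≤ W.card := by rw [hWc']; nlinarith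
  have hqpos : 0 < q := by
    have : (0 : ℝ) < q := lt_of_lt_of_le (by positivity) hq1
    exact_mod_cast this
  have h1 := pos_part_le_of_top l (univ \ R) W hWU hW hX (σ := σ) (by linarith)
    (by rw [← card_pos, hQc]; exact hqpos)
    (by
      rw [hQc]
      have : (q : ℝ) ≤ W.card := by nlinarith
      exact_mod_cast this)
    (by
      rw [hQc, hUc, Nat.cast_sub (by omega)]
      have : (0 : ℝ) ≤ r := by positivity
      nlinarith) (by positivity)
  have h2 := pos_part_few_le (by omega) E hE (hdegl n hn4 E hE hdeg) l R (ρ := ρ)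
    (by rw [hRc]; exact hr2)
  have h3 : ∑ v, max (l v) 0 = ∑ v ∈ univ \ R, max (l v) 0 + ∑ v ∈ R, max (l v) 0 :=
    (sum_sdiff (subset_univ _)).symm
  have h4 : ∑ v ∈ univ \ R, max (-l v) 0 ≤ ∑ v, max (-l v) 0 :=
    sum_le_sum_of_subset_of_nonneg (subset_univ _) fun v _ _ => le_max_right _ _
  set m := ∑ v, max (-l v) 0
  have hm0 : 0 ≤ m := sum_nonneg fun v _ => le_max_right _ _
  set A := (n : ℝ) ^ (k - 1) with hA
  have hApos : 0 < A := by positivity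
  have h5 : A * (θ * n) = P / c := by
    have : (n : ℝ) ^ k = A * n := by rw [hA, ← pow_succ]; congr 1; omega
    rw [hθ, this]; field_simp
  have h6 : A * ∑ v ∈ R, max (l v) 0 ≤ k / c₁ * P + A * (σ / 2 * m) := by
    have h7 : A * (ρ * m) ≤ A * (c₁ * σ / 2 * m) := by gcongr
    have h8 : c₁ * (A * ∑ v ∈ R, max (l v) 0) ≤ c₁ * (k / c₁ * P + A * (σ / 2 * m)) := by
      have : c₁ * (k / c₁ * P + A * (σ / 2 * m)) = k * P + A * (c₁ * σ / 2 * m) := by field_simp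
      rw [this]; linarith
    exact le_of_mul_le_mul_left h8 hc₁
  have h9 : A * ∑ v ∈ univ \ R, max (l v) 0 ≤ 2 / c * P + A * ((1 - σ) * m) := by
    have h10 : (1 - σ) * ∑ v ∈ univ \ R, max (-l v) 0 ≤ (1 - σ) * m :=
      mul_le_mul_of_nonneg_left h4 (by linarith)
    have h11 := mul_le_mul_of_nonneg_left (h1.trans (add_le_add_right h10 _)) hApos.le
    have h12 : A * (2 * (θ * n) + (1 - σ) * m) = 2 / c * P + A * ((1 - σ) * m) := by
      have : A * (2 * (θ * n) + (1 - σ) * m) = 2 * (A * (θ * n)) + A * ((1 - σ) * m) := by ring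
      rw [this, h5]; ring
    linarith
  rw [h3]
  have : A * (∑ v ∈ univ \ R, max (l v) 0 + ∑ v ∈ R, max (l v) 0 - (1 - σ / 2) * m) =
    A * ∑ v ∈ univ \ R, max (l v) 0 + A * ∑ v ∈ R, max (l v) 0 - A * ((1 - σ) * m)
      - A * (σ / 2 * m) := by ring
  rw [this]
  linarith

/-! ### Spread-out weightings -/

/-- Farkas-type duality for bounded edge weightings with prescribed vertex sums `b`. -/
lemma exists_weighting_of_dual {n : ℕ} (E : Finset (Finset (Fin n))) (b : Fin n → ℝ) {B : ℝ}
    (hB : 0 ≤ B) (hdual : ∀ l : Fin n → ℝ,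
      ∑ v, b v * l v ≤ B * ∑ e ∈ E, max (∑ v ∈ e, l v) 0) :
    ∃ z : Finset (Fin n) → ℝ, (∀ e, 0 ≤ z e ∧ z e ≤ B) ∧
      ∀ v, ∑ e ∈ E.filter (fun e => v ∈ e), z e = b v := by
  let T : (Finset (Fin n) → ℝ) →ₗ[ℝ] (Fin n → ℝ) :=
    { toFun := fun z v => ∑ e ∈ E.filter (fun e => v ∈ e), z e
      map_add' := fun x y => by ext v; simp [sum_add_distrib]
      map_smul' := fun c x => by ext v; simp [mul_sum] }
  have hT : ∀ z v, T z v = ∑ e ∈ E.filter (fun e => v ∈ e), z e := fun _ _ => rfl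
  set K : Set (Fin n → ℝ) := T '' Set.Icc 0 (fun _ => B) with hK
  have hKcomp : IsCompact K := isCompact_Icc.image T.continuous_of_finiteDimensional
  have hKconv : Convex ℝ K := (convex_Icc _ _).linear_image T
  by_cases hb : b ∈ K
  · obtain ⟨z, hz, hzb⟩ := hb
    exact ⟨z, fun e => ⟨hz.1 e, hz.2 e⟩, fun v => by rw [← hzb]; rfl⟩
  exfalso
  obtain ⟨f, u, hfb, hfK⟩ := geometric_hahn_banach_point_closed hKconv hKcomp.isClosed hb
  set l : Fin n → ℝ := fun v => -f (Pi.single v 1) with hl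
  have hf : ∀ y : Fin n → ℝ, f y = -∑ v, y v * l v := by
    intro y
    have h := f.toLinearMap.pi_apply_eq_sum_univ y
    have h2 : f y = ∑ v, y v • f (fun j => if v = j then 1 else 0) := h
    rw [h2, ← sum_neg_distrib]
    refine sum_congr rfl fun v _ => ?_
    have : (fun j => if v = j then (1 : ℝ) else 0) = Pi.single v 1 := by
      ext j; simp [Pi.single_apply, eq_comm]
    rw [this, hl, smul_eq_mul]; ring
  -- the maximiser over the box saturates exactly the edges with positive `l`-sum
  set z : Finset (Fin n) → ℝ := fun e => if 0 < ∑ v ∈ e, l v then B else 0 with hz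
  have hzK : T z ∈ K := by
    refine ⟨z, ⟨fun e => ?_, fun e => ?_⟩, rfl⟩ <;> simp only [hz, Pi.zero_apply] <;>
      split_ifs <;> simp [hB]
  have h1 := hfK _ hzK
  have h2 : ∑ v, T z v * l v = B * ∑ e ∈ E, max (∑ v ∈ e, l v) 0 := by
    have h3 : ∑ v, T z v * l v = ∑ v, ∑ e ∈ E.filter (fun e => v ∈ e), z e * l v :=
      sum_congr rfl fun v _ => by rw [hT, sum_mul]
    rw [h3, sum_incidence E (fun v e => z e * l v), mul_sum]
    refine sum_congr rfl fun e _ => ?_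
    rw [← mul_sum]
    simp only [hz]
    split_ifs with h
    · rw [max_eq_left h.le]
    · rw [max_eq_right (not_lt.1 h)]; ring
  rw [hf, h2] at h1
  rw [hf] at hfb
  linarith [hdual l]

/-- In a Dirac hypergraph all vertex sums `b` close to `1` are attained by weightings bounded by
`D / n ^ (k - 1)`. The freedom in `b` is what the constructions below rely on. -/
lemma exists_spread_weighting {d k : ℕ} (hd : 1 ≤ d) (hdk : d < k) {γ α : ℝ} (hγ : 0 < γ)
    (hα : IsDiracThreshold d k α) :
    ∃ η : ℝ, 0 < η ∧ η < 1 ∧ ∃ D : ℝ, 1 ≤ D ∧ ∃ n₀ : ℕ, ∀ n : ℕ, n₀ ≤ n → k ∣ n →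
      ∀ E : Finset (Finset (Fin n)), (∀ e ∈ E, e.card = k) →
      (∀ S : Finset (Fin n), S.card = d → (α + γ) * ((n - d).choose (k - d) : ℝ) ≤ degS E S) →
      ∀ b : Fin n → ℝ, (∀ v, 1 - η ≤ b v ∧ b v ≤ 1) →
        ∃ z : Finset (Fin n) → ℝ, (∀ e, 0 ≤ z e ∧ z e ≤ D / (n : ℝ) ^ (k - 1)) ∧
          ∀ v, ∑ e ∈ E.filter (fun e => v ∈ e), z e = b v := by
  obtain ⟨η, h0, h1, D, hD, n₀, H⟩ := dual_inequality hd hdk hγ hα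
  refine ⟨η, h0, h1, D, hD, max n₀ 1, fun n hn hkn E hE hdeg b hb => ?_⟩
  have hnpos : (0 : ℝ) < n := by exact_mod_cast (le_trans (le_max_right _ _) hn : 1 ≤ n)
  refine exists_weighting_of_dual E b (by positivity) fun l => ?_
  have h2 := H n (le_trans (le_max_left _ _) hn) hkn E hE hdeg l
  have h3 : ∑ v, b v * l v ≤ ∑ v, max (l v) 0 - (1 - η) * ∑ v, max (-l v) 0 := by
    rw [mul_sum, ← sum_sub_distrib]
    refine sum_le_sum fun v _ => ?_
    rcases le_total 0 (l v) with h | h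
    · rw [max_eq_left h, max_eq_right (by linarith)]; nlinarith [(hb v).2]
    · rw [max_eq_right h, max_eq_left (by linarith)]; nlinarith [(hb v).1]
  rw [div_mul_eq_mul_div, le_div_iff₀ (by positivity)]
  have h4 : 0 < (n : ℝ) ^ (k - 1) := by positivity
  nlinarith [mul_le_mul_of_nonneg_left h3 h4.le]

lemma isFPM_of_sums {n : ℕ} {E : Finset (Finset (Fin n))} {k : ℕ} (hk : 1 ≤ k)
    (hE : ∀ e ∈ E, e.card = k) {x : Finset (Fin n) → ℝ} (h0 : ∀ e, 0 ≤ x e)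
    (hoff : ∀ e, e ∉ E → x e = 0) (hs : ∀ v, ∑ e ∈ E.filter (fun e => v ∈ e), x e = 1) :
    IsFPM E x := by
  refine ⟨fun e => ⟨h0 e, ?_⟩, hoff, hs⟩
  by_cases he : e ∈ E
  · obtain ⟨v, hv⟩ := card_pos.1 (by rw [hE e he]; omega : 0 < e.card)
    rw [← hs v]
    exact single_le_sum (f := x) (fun e _ => h0 e) (mem_filter.2 ⟨he, hv⟩)
  · rw [hoff e he]; exact zero_le_one

lemma IsFPM.sum_eq {n k : ℕ} {E : Finset (Finset (Fin n))} (hE : ∀ e ∈ E, e.card = k)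
    {x : Finset (Fin n) → ℝ} (hx : IsFPM E x) : k * ∑ e ∈ E, x e = n := by
  rw [← sum_incidence_const E hE, sum_congr rfl fun v _ => hx.2.2 v]
  simp

/-- A weighting with suitable vertex sums plus the constant weighting `η / n ^ (k - 1)` is a
well-distributed fractional perfect matching. -/
lemma exists_well_distributed_fpm {n k : ℕ} (hk : 1 ≤ k) (hn : 1 ≤ n)
    (E : Finset (Finset (Fin n))) (hE : ∀ e ∈ E, e.card = k) {η D : ℝ} (hη : 0 < η)
    (H : ∀ b : Fin n → ℝ, (∀ v, 1 - η ≤ b v ∧ b v ≤ 1) →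
        ∃ z : Finset (Fin n) → ℝ, (∀ e, 0 ≤ z e ∧ z e ≤ D / (n : ℝ) ^ (k - 1)) ∧
          ∀ v, ∑ e ∈ E.filter (fun e => v ∈ e), z e = b v) :
    ∃ y, IsFPM E y ∧ ∀ e ∈ E, η / (n : ℝ) ^ (k - 1) ≤ y e ∧ y e ≤ (D + η) / (n : ℝ) ^ (k - 1) := by
  have hnpos : (0 : ℝ) < n := by exact_mod_cast hn
  set A := (n : ℝ) ^ (k - 1) with hA
  have hApos : 0 < A := by positivity
  obtain ⟨z, hz, hzs⟩ := H (fun v => 1 - ((E.filter (fun e => v ∈ e)).card : ℝ) * (η / A)) (by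
    intro v
    have h1 := degree_le E hE v
    have h2 : ((E.filter (fun e => v ∈ e)).card : ℝ) * (η / A) ≤ A * (η / A) := by gcongr
    have h3 : A * (η / A) = η := by field_simp
    have h4 : 0 ≤ ((E.filter (fun e => v ∈ e)).card : ℝ) * (η / A) := by positivity
    constructor <;> linarith)
  refine ⟨fun e => if e ∈ E then z e + η / A else 0, isFPM_of_sums hk hE ?_ ?_ ?_, ?_⟩
  · intro e
    split_ifs
    · have := (hz e).1; positivity
    · exact le_rfl
  · intro e he; simp [he]
  · intro v
    have : ∀ e ∈ E.filter (fun e => v ∈ e), (if e ∈ E then z e + η / A else 0) = z e + η / A :=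
      fun e he => by rw [if_pos (mem_filter.1 he).1]
    rw [sum_congr rfl this, sum_add_distrib, hzs, sum_const, nsmul_eq_mul]; ring
  · intro e he
    simp only [he, if_true]
    rw [add_div]
    exact ⟨by linarith [(hz e).1], by linarith [(hz e).2]⟩

/-- A spread-out weighting with all vertex sums equal to `T / n`, except for an additional `1` on
the vertices of `e₀`. The extra `1` at each `v ∈ e₀` is spread uniformly over the edges at `v`; this
disturbs every other vertex sum by `O(1 / n)` only, which a weighting from `H`, scaled by `T / n`,
corrects. -/
lemma exists_absorbing_weighting {n k : ℕ} (hk : 2 ≤ k) (hn : 1 ≤ n)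
    (E : Finset (Finset (Fin n))) (hE : ∀ e ∈ E, e.card = k) {η D c T : ℝ} (hη : 0 < η)
    (hc : 0 < c) (hT : T = k / (c * η))
    (hdeg : ∀ v, c * (n : ℝ) ^ (k - 1) ≤ ((E.filter (fun e => v ∈ e)).card : ℝ))
    (H : ∀ b : Fin n → ℝ, (∀ v, 1 - η ≤ b v ∧ b v ≤ 1) →
        ∃ z : Finset (Fin n) → ℝ, (∀ e, 0 ≤ z e ∧ z e ≤ D / (n : ℝ) ^ (k - 1)) ∧
          ∀ v, ∑ e ∈ E.filter (fun e => v ∈ e), z e = b v)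
    (e₀ : Finset (Fin n)) (he₀ : e₀ ∈ E) :
    ∃ z : Finset (Fin n) → ℝ, (∀ f, 0 ≤ z f) ∧ (∀ f, f ∉ E → z f = 0) ∧
      (∀ f, z f ≤ (if Disjoint e₀ f then 0 else k / (c * (n : ℝ) ^ (k - 1))) +
        T / n * (D / (n : ℝ) ^ (k - 1))) ∧
      ∀ v, ∑ e ∈ E.filter (fun e => v ∈ e), z e = T / n + if v ∈ e₀ then 1 else 0 := by
  have hnpos : (0 : ℝ) < n := by exact_mod_cast hn
  have hkpos : (0 : ℝ) < k := by exact_mod_cast (by omega : 0 < k)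
  set A := (n : ℝ) ^ (k - 1) with hA
  have hApos : 0 < A := by positivity
  have hTpos : 0 < T := by rw [hT]; positivity
  set deg : Fin n → ℝ := fun v => ((E.filter (fun e => v ∈ e)).card : ℝ) with hdegdef
  have hdegpos : ∀ v, 0 < deg v := fun v => lt_of_lt_of_le (by positivity) (hdeg v)
  have hinv : ∀ v, 1 / deg v ≤ 1 / (c * A) := fun v =>
    one_div_le_one_div_of_le (by positivity) (hdeg v)
  set g : Finset (Fin n) → ℝ := fun f => ∑ v ∈ e₀, if v ∈ f then 1 / deg v else 0 with hg
  have hg0 : ∀ f, 0 ≤ g f := fun f => sum_nonneg fun v _ => by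
    have := hdegpos v
    split_ifs <;> positivity
  have hgle : ∀ f, g f ≤ if Disjoint e₀ f then 0 else k / (c * A) := by
    intro f
    split_ifs with h
    · exact (sum_eq_zero fun v hv => if_neg (disjoint_left.1 h hv)).le
    · have h1 : g f ≤ e₀.card • (1 / (c * A)) := sum_le_card_nsmul _ _ _ fun v _ => by
        split_ifs
        · exact hinv v
        · positivity
      rw [hE e₀ he₀, nsmul_eq_mul] at h1
      rw [div_eq_mul_one_div]; exact h1
  set cod : Fin n → Fin n → ℝ := fun u v =>
    (((E.filter (fun e => u ∈ e)).filter (fun e => v ∈ e)).card : ℝ) with hcod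
  set r : Fin n → ℝ := fun u => ∑ v ∈ e₀.erase u, cod u v * (1 / deg v) with hr
  have hr0 : ∀ u, 0 ≤ r u := fun u => sum_nonneg fun v _ => by
    have := hdegpos v
    positivity
  have hr1 : ∀ u, r u ≤ η * (T / n) := by
    intro u
    have h1 : r u ≤ (e₀.erase u).card • ((n : ℝ) ^ (k - 2) * (1 / (c * A))) :=
      sum_le_card_nsmul _ _ _ fun v hv => mul_le_mul (codegree_le E hE (ne_of_mem_erase hv))
        (hinv v) (by have := hdegpos v; positivity) (by positivity)
    have h2 : ((e₀.erase u).card : ℝ) ≤ k := by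
      exact_mod_cast (card_le_card (erase_subset u e₀)).trans (hE e₀ he₀).le
    have h3 : A = n * (n : ℝ) ^ (k - 2) := by
      rw [hA, ← pow_succ']; congr 1; omega
    rw [nsmul_eq_mul] at h1
    calc r u ≤ k * ((n : ℝ) ^ (k - 2) * (1 / (c * A))) :=
          h1.trans (by gcongr)
      _ = η * (T / n) := by rw [hT, h3]; field_simp
  have hgs : ∀ u, ∑ f ∈ E.filter (fun e => u ∈ e), g f = r u + if u ∈ e₀ then 1 else 0 := by
    intro u
    have h1 : ∑ f ∈ E.filter (fun e => u ∈ e), g f = ∑ v ∈ e₀, cod u v * (1 / deg v) := by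
      rw [hg, sum_comm]
      refine sum_congr rfl fun v _ => ?_
      rw [← sum_filter, sum_const, nsmul_eq_mul]
    have h2 : cod u u * (1 / deg u) = 1 := by
      have : cod u u = deg u := by
        simp only [hcod, hdegdef, filter_filter, and_self]
      rw [this]
      exact mul_one_div_cancel (hdegpos u).ne'
    rw [h1]
    split_ifs with h
    · rw [← sum_erase_add _ _ h, h2]
    · simp only [hr]
      rw [erase_eq_of_notMem h, add_zero]
  have hTn : 0 < T / n := by positivity
  clear_value g r
  obtain ⟨z, hz, hzs⟩ := H (fun u => 1 - r u / (T / n)) (by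
    intro u
    have h1 : r u / (T / n) ≤ η := by rw [div_le_iff₀ hTn]; exact hr1 u
    have h2 : 0 ≤ r u / (T / n) := div_nonneg (hr0 u) hTn.le
    constructor <;> linarith)
  refine ⟨fun f => if f ∈ E then g f + T / n * z f else 0, ?_, ?_, ?_, ?_⟩
  · intro f
    have h1 := hg0 f
    have h2 := (hz f).1
    beta_reduce
    split_ifs <;> positivity
  · intro f hf; exact if_neg hf
  · intro f
    have h1 := hgle f
    have h2 : T / n * z f ≤ T / n * (D / A) := by have := (hz f).2; gcongr
    have h3 := hg0 f
    have h4 : 0 ≤ T / n * z f := by have := (hz f).1; positivity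
    beta_reduce
    split_ifs at h1 ⊢ <;> linarith
  · intro v
    have : ∀ f ∈ E.filter (fun e => v ∈ e), (if f ∈ E then g f + T / n * z f else 0) =
        g f + T / n * z f := fun e he => by rw [if_pos (mem_filter.1 he).1]
    rw [sum_congr rfl this, sum_add_distrib, hgs, ← mul_sum, hzs]
    field_simp
    ring

/-! ### Entropy -/

/-- The pointwise form of Gibbs' inequality. -/
lemma gibbs {a b : ℝ} (ha : 0 ≤ a) (hb : 0 ≤ b) (hab : b = 0 → a = 0) :
    a * Real.log (1 / a) ≤ a * Real.log (1 / b) - a + b := by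
  rcases ha.eq_or_lt with rfl | ha
  · simpa using hb
  have hb' : 0 < b := hb.lt_of_ne fun h => ha.ne' (hab h.symm)
  have h1 := Real.log_le_sub_one_of_pos (div_pos hb' ha)
  rw [Real.log_div hb'.ne' ha.ne'] at h1
  rw [one_div, one_div, Real.log_inv, Real.log_inv]
  have h2 := mul_le_mul_of_nonneg_left h1 ha.le
  have h3 : a * (b / a - 1) = b - a := by field_simp
  linarith

lemma fpmEntropy_eq {n : ℕ} (E : Finset (Finset (Fin n))) (x : Finset (Fin n) → ℝ) :
    fpmEntropy E x = ∑ e ∈ E, Real.negMulLog (x e) :=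
  sum_congr rfl fun e _ => by simp [Real.negMulLog]

/-- Comparison with the uniform weighting `1 / n ^ (k - 1)`. -/
lemma fpmEntropy_le {n k : ℕ} (hk : 1 ≤ k) (hn : 1 ≤ n) {E : Finset (Finset (Fin n))}
    (hE : ∀ e ∈ E, e.card = k) {x : Finset (Fin n) → ℝ} (hx : IsFPM E x) :
    fpmEntropy E x ≤ n / k * Real.log ((n : ℝ) ^ (k - 1)) + n := by
  have hnpos : (0 : ℝ) < n := by exact_mod_cast hn
  have hkpos : (0 : ℝ) < k := by exact_mod_cast hk
  set A := (n : ℝ) ^ (k - 1) with hA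
  have hApos : 0 < A := by positivity
  have hsum : ∑ e ∈ E, x e = n / k := by
    rw [eq_div_iff hkpos.ne', mul_comm]; exact hx.sum_eq hE
  have hcard : (E.card : ℝ) ≤ n * A := by
    have h := card_supersets_le E hE ∅
    have h1 : degS E ∅ = E.card := by simp [degS]
    rw [h1, card_empty, Nat.sub_zero] at h
    have h2 : (n : ℝ) * A = ((n ^ k : ℕ) : ℝ) := by
      rw [hA, ← pow_succ', Nat.sub_add_cancel hk]; push_cast; rfl
    rw [h2]; exact_mod_cast h
  calc fpmEntropy E x ≤ ∑ e ∈ E, (x e * Real.log A + 1 / A) := by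
        refine sum_le_sum fun e _ => ?_
        have h := gibbs (hx.1 e).1 (one_div_pos.2 hApos).le
          fun h => absurd h (one_div_pos.2 hApos).ne'
        rw [one_div_one_div] at h
        linarith [(hx.1 e).1]
    _ = n / k * Real.log A + E.card * (1 / A) := by
        rw [sum_add_distrib, ← sum_mul, hsum, sum_const, nsmul_eq_mul]
    _ ≤ n / k * Real.log A + (n * A) * (1 / A) := by gcongr
    _ = _ := by field_simp

lemma le_fpmEntropy {n k : ℕ} (hk : 1 ≤ k) {E : Finset (Finset (Fin n))}
    (hE : ∀ e ∈ E, e.card = k) {y : Finset (Fin n) → ℝ} (hy : IsFPM E y) {A D : ℝ} (hA : 0 < A)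
    (hD : 0 < D) (h0 : ∀ e ∈ E, 0 < y e) (h1 : ∀ e ∈ E, y e ≤ D / A) :
    n / k * (Real.log A - Real.log D) ≤ fpmEntropy E y := by
  have hkpos : (0 : ℝ) < k := by exact_mod_cast hk
  have hsum : ∑ e ∈ E, y e = n / k := by
    rw [eq_div_iff hkpos.ne', mul_comm]; exact hy.sum_eq hE
  rw [← hsum, sum_mul]
  refine sum_le_sum fun e he => mul_le_mul_of_nonneg_left ?_ (h0 e he).le
  have h := Real.log_le_log (h0 e he) (h1 e he)
  rw [Real.log_div hD.ne' hA.ne'] at h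
  rw [one_div, Real.log_inv]; linarith

lemma exists_max_fpm {n : ℕ} (E : Finset (Finset (Fin n))) (hne : ∃ y, IsFPM E y) :
    ∃ x, IsFPM E x ∧ (∀ y, IsFPM E y → fpmEntropy E y ≤ fpmEntropy E x) ∧
      graphEntropy E = fpmEntropy E x := by
  have hcl : IsClosed {x | IsFPM E x} := by
    have h : {x | IsFPM E x} = Set.Icc (0 : Finset (Fin n) → ℝ) 1 ∩
        ((⋂ e, {x | e ∉ E → x e = 0}) ∩
          ⋂ v, {x | ∑ e ∈ E.filter (fun e => v ∈ e), x e = 1}) := by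
      ext x
      simp only [IsFPM, Set.mem_ofPred_eq, Set.mem_inter_iff, Set.mem_Icc, Set.mem_iInter,
        Pi.le_def, Pi.zero_apply, Pi.one_apply, forall_and]
    rw [h]
    refine isClosed_Icc.inter ((isClosed_iInter fun e => ?_).inter (isClosed_iInter fun v => ?_))
    · by_cases he : e ∈ E
      · simp [he]
      · simpa [he] using isClosed_eq (continuous_apply e) continuous_const
    · exact isClosed_eq (by fun_prop) continuous_const
  have hcomp : IsCompact {x | IsFPM E x} :=
    (isCompact_Icc (a := (0 : Finset (Fin n) → ℝ)) (b := 1)).of_isClosed_subset hcl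
      fun x hx => ⟨fun e => (hx.1 e).1, fun e => (hx.1 e).2⟩
  have hcont : Continuous (fpmEntropy E) := by
    have : fpmEntropy E = fun x => ∑ e ∈ E, Real.negMulLog (x e) := funext (fpmEntropy_eq E)
    rw [this]
    exact continuous_finsetSum _ fun e _ => Real.continuous_negMulLog.comp (continuous_apply e)
  obtain ⟨x, hx, hmax⟩ := hcomp.exists_isMaxOn hne hcont.continuousOn
  refine ⟨x, hx, fun y hy => hmax hy, ?_⟩
  have hg : IsGreatest {h : ℝ | ∃ x, IsFPM E x ∧ h = fpmEntropy E x} (fpmEntropy E x) :=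
    ⟨⟨x, hx, rfl⟩, by rintro _ ⟨y, hy, rfl⟩; exact hmax hy⟩
  exact hg.csSup_eq

/-- Fractional perfect matchings form a convex set, on which the entropy is concave. -/
lemma IsFPM.mix {n : ℕ} {E : Finset (Finset (Fin n))} {x y : Finset (Fin n) → ℝ}
    (hx : IsFPM E x) (hy : IsFPM E y) {δ : ℝ} (h0 : 0 ≤ δ) (h1 : δ ≤ 1) :
    IsFPM E (fun e => (1 - δ) * x e + δ * y e) ∧
      (1 - δ) * fpmEntropy E x + δ * fpmEntropy E y ≤
        fpmEntropy E (fun e => (1 - δ) * x e + δ * y e) := by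
  refine ⟨⟨fun e => ?_, fun e he => ?_, fun v => ?_⟩, ?_⟩
  · obtain ⟨a, b⟩ := hx.1 e
    obtain ⟨c, d⟩ := hy.1 e
    constructor <;> nlinarith
  · simp [hx.2.1 e he, hy.2.1 e he]
  · rw [sum_add_distrib, ← mul_sum, ← mul_sum, hx.2.2 v, hy.2.2 v]; ring
  · rw [fpmEntropy_eq, fpmEntropy_eq, fpmEntropy_eq, mul_sum, mul_sum, ← sum_add_distrib]
    refine sum_le_sum fun e _ => ?_
    have := Real.concaveOn_negMulLog.2 (hx.1 e).1 (hy.1 e).1 (sub_nonneg.2 h1) h0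
      (sub_add_cancel 1 δ)
    simpa using this

/-- No edge of an entropy-maximal fractional perfect matching `x` is heavy: otherwise `x` could be
improved by moving weight from the edge `e₀` to the spread-out weighting `z`. Gibbs' inequality at the
perturbed matching `x'` replaces differentiation of the entropy at `x`, where edges of weight `0`
would be a problem. -/
lemma max_fpm_le {n k : ℕ} (hk : 2 ≤ k) (hn : 1 ≤ n) {E : Finset (Finset (Fin n))}
    (hE : ∀ e ∈ E, e.card = k) {c D T : ℝ} (hc : 0 < c) (hT : 0 ≤ T) (hD : 0 ≤ D)
    {x : Finset (Fin n) → ℝ} (hx : IsFPM E x)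
    (hmax : ∀ y, IsFPM E y → fpmEntropy E y ≤ fpmEntropy E x)
    {e₀ : Finset (Fin n)} (he₀ : e₀ ∈ E) {z : Finset (Fin n) → ℝ} (hz0 : ∀ f, 0 ≤ z f)
    (hzoff : ∀ f, f ∉ E → z f = 0)
    (hzle : ∀ f, z f ≤ (if Disjoint e₀ f then 0 else k / (c * (n : ℝ) ^ (k - 1))) +
        T / n * (D / (n : ℝ) ^ (k - 1)))
    (hzs : ∀ v, ∑ e ∈ E.filter (fun e => v ∈ e), z e = T / n + if v ∈ e₀ then 1 else 0) :
    x e₀ ≤ 2 * Real.exp (k ^ 2 / c + T * D + T) / (n : ℝ) ^ (k - 1) := by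
  have hnpos : (0 : ℝ) < n := by exact_mod_cast hn
  have hn1 : (1 : ℝ) ≤ n := by exact_mod_cast hn
  have hkpos : (0 : ℝ) < k := by exact_mod_cast (by omega : 0 < k)
  have hent := fpmEntropy_le (by omega) hn hE hx
  set A := (n : ℝ) ^ (k - 1) with hA
  have hApos : 0 < A := by positivity
  rcases (hx.1 e₀).1.eq_or_lt with h | hx0
  · rw [← h]; positivity
  set t := T / n with ht
  have ht0 : 0 ≤ t := by positivity
  set s := x e₀ / (4 * (t + 1)) with hs
  have hspos : 0 < s := by positivity
  have hs1 : s * t + s = x e₀ / 4 := by rw [hs]; field_simp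
  have hst0 : 0 ≤ s * t := by positivity
  have hst : s * t ≤ 1 / 4 := by linarith [(hx.1 e₀).2]
  have hsx : s ≤ x e₀ / 4 := by linarith
  set x' : Finset (Fin n) → ℝ :=
    fun f => (1 - s * t) * x f + s * z f - s * (if f = e₀ then 1 else 0) with hx'
  have hge : ∀ f, x f / 2 ≤ x' f := by
    -- `s` is small enough for the perturbation to retain half of every weight
    intro f
    have h1 := mul_nonneg hspos.le (hz0 f)
    have h2 := mul_le_mul_of_nonneg_right hst (hx.1 f).1
    simp only [hx']
    split_ifs with hf
    · subst hf; linarith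
    · linarith [(hx.1 f).1]
  have hx'0 : ∀ f, 0 ≤ x' f := fun f => le_trans (by linarith [(hx.1 f).1]) (hge f)
  have hx'F : IsFPM E x' := by
    refine isFPM_of_sums (by omega) hE hx'0 (fun f hf => ?_) fun v => ?_
    · have : f ≠ e₀ := fun h => hf (h ▸ he₀)
      simp [hx', hx.2.1 f hf, hzoff f hf, this]
    · have h1 : ∑ e ∈ E.filter (fun e => v ∈ e), (if e = e₀ then (1 : ℝ) else 0) =
          if v ∈ e₀ then 1 else 0 := by
        rw [sum_ite_eq']; simp [he₀]
      simp only [hx']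
      rw [sum_sub_distrib, sum_add_distrib, ← mul_sum, ← mul_sum, ← mul_sum, hx.2.2 v, hzs, h1]
      ring
  have hsum : ∑ e ∈ E, x e = n / k := by
    rw [eq_div_iff hkpos.ne', mul_comm]; exact hx.sum_eq hE
  have hsum' : ∑ e ∈ E, x' e = n / k := by
    rw [eq_div_iff hkpos.ne', mul_comm]; exact hx'F.sum_eq hE
  set L : Finset (Fin n) → ℝ := fun f => Real.log (1 / x' f) with hL
  have hgibbs : fpmEntropy E x ≤ ∑ f ∈ E, x f * L f := by
    have h : fpmEntropy E x ≤ ∑ f ∈ E, (x f * L f - x f + x' f) := sum_le_sum fun f _ =>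
      gibbs (hx.1 f).1 (hx'0 f) fun h => by linarith [hge f, (hx.1 f).1]
    rw [sum_add_distrib, sum_sub_distrib, hsum, hsum'] at h
    linarith
  -- optimality of `x`, in the direction `z - t x - 1_{e₀}`
  have hopt : ∑ f ∈ E, z f * L f ≤ t * ∑ f ∈ E, x f * L f + L e₀ := by
    have h1 : ∑ f ∈ E, x' f * L f ≤ ∑ f ∈ E, x f * L f := (hmax x' hx'F).trans hgibbs
    have h2 : ∑ f ∈ E, x' f * L f = ∑ f ∈ E, x f * L f +
        s * (∑ f ∈ E, z f * L f - t * ∑ f ∈ E, x f * L f - L e₀) := by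
      have h3 : L e₀ = ∑ f ∈ E, (if f = e₀ then 1 else 0) * L f := by
        simp [he₀]
      rw [h3, mul_sum, ← sum_sub_distrib, ← sum_sub_distrib, mul_sum, ← sum_add_distrib]
      refine sum_congr rfl fun f _ => ?_
      simp only [hx']; ring
    have h4 : s * (∑ f ∈ E, z f * L f - t * ∑ f ∈ E, x f * L f - L e₀) ≤ 0 := by linarith
    have h5 := nonpos_of_mul_nonpos_right h4 hspos
    linarith
  have hLle : ∀ f, 0 < x f → L f ≤ Real.log (1 / x f) + Real.log 2 := by
    intro f hf
    have h1 := Real.log_le_log (by linarith) (hge f)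
    rw [Real.log_div hf.ne' two_ne_zero] at h1
    simp only [hL, one_div, Real.log_inv]
    linarith
  have hup : ∑ f ∈ E, x f * L f ≤ fpmEntropy E x + n / k := by
    have h : ∑ f ∈ E, x f * L f ≤ ∑ f ∈ E, (x f * Real.log (1 / x f) + x f) :=
      sum_le_sum fun f _ => by
        rcases (hx.1 f).1.eq_or_lt with h | h
        · simp [← h]
        · have h2 : Real.log 2 ≤ 1 := by linarith [Real.log_two_lt_d9]
          nlinarith [hLle f h]
    rw [sum_add_distrib, hsum] at h
    exact h
  have hzsum : ∑ f ∈ E, z f = T / k + 1 := by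
    have h := sum_incidence_const E hE z
    rw [sum_congr rfl fun v _ => hzs v, sum_add_distrib, sum_const, card_univ, Fintype.card_fin,
      nsmul_eq_mul, sum_ite_mem, univ_inter, sum_const, hE e₀ he₀, nsmul_eq_mul, ht] at h
    field_simp at h ⊢
    linarith
  have hzx : A * ∑ f ∈ E, z f * x' f ≤ k ^ 2 / c + T * D := by
    have h1 : ∑ f ∈ E, (if Disjoint e₀ f then 0 else x' f) ≤ k := by
      have h2 : ∀ f ∈ E, (if Disjoint e₀ f then 0 else x' f) ≤
          ∑ v ∈ e₀, if v ∈ f then x' f else 0 := by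
        intro f _
        split_ifs with h
        · exact sum_nonneg fun v _ => by
            have := hx'0 f
            split_ifs <;> simp [this]
        · obtain ⟨v, hv, hvf⟩ := not_disjoint_iff.1 h
          refine le_trans (by rw [if_pos hvf]) (single_le_sum
            (f := fun v => if v ∈ f then x' f else 0) (fun v _ => ?_) hv)
          have := hx'0 f
          split_ifs <;> simp [this]
      refine (sum_le_sum h2).trans ?_
      rw [sum_comm]
      have h3 : ∀ v ∈ e₀, ∑ f ∈ E, (if v ∈ f then x' f else 0) = 1 := fun v _ => by
        rw [← sum_filter]; exact hx'F.2.2 v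
      rw [sum_congr rfl h3]
      simp [hE e₀ he₀]
    have h4 : ∑ f ∈ E, z f * x' f ≤ ∑ f ∈ E, (k / (c * A) * (if Disjoint e₀ f then 0 else x' f) +
        t * (D / A) * x' f) := by
      refine sum_le_sum fun f _ => ?_
      have h5 := mul_le_mul_of_nonneg_right (hzle f) (hx'0 f)
      split_ifs at h5 ⊢ <;> linarith
    rw [sum_add_distrib, ← mul_sum, ← mul_sum, hsum'] at h4
    have h6 : t * (D / A) * (n / k) ≤ T * D / A := by
      have h7 : t * (D / A) * (n / k) = T * D / A / k := by rw [ht]; field_simp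
      rw [h7]
      exact div_le_self (by positivity) (by exact_mod_cast (by omega : 1 ≤ k))
    have h8 : k / (c * A) * ∑ f ∈ E, (if Disjoint e₀ f then 0 else x' f) ≤ k / (c * A) * k := by
      gcongr
    calc A * ∑ f ∈ E, z f * x' f ≤ A * (k / (c * A) * k + T * D / A) := by
          gcongr; linarith
      _ = _ := by field_simp
  have hlow : (T / k + 1) * (Real.log A + 1) - (k ^ 2 / c + T * D) ≤ ∑ f ∈ E, z f * L f := by
    have h1 : ∑ f ∈ E, (z f * (Real.log A + 1) - A * (z f * x' f)) ≤ ∑ f ∈ E, z f * L f := by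
      refine sum_le_sum fun f _ => ?_
      rcases (hx'0 f).eq_or_lt with h | h
      -- `L f` is a junk value when `x' f = 0`, but then `z f = 0` as well
      · have h2 : z f = 0 := by
          have hf : f ≠ e₀ := fun hf => by
            have := hge f
            rw [hf] at this h; linarith
          have h3 : (1 - s * t) * x f + s * z f = 0 := by
            simp only [hx', hf, if_false] at h; linarith
          have h4 : 0 ≤ (1 - s * t) * x f := mul_nonneg (by linarith) (hx.1 f).1
          have h5 : s * z f = 0 := le_antisymm (by linarith) (mul_nonneg hspos.le (hz0 f))
          exact (mul_eq_zero.1 h5).resolve_left hspos.ne'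
        simp [h2]
      · have h2 := Real.log_le_sub_one_of_pos (mul_pos hApos h)
        rw [Real.log_mul hApos.ne' h.ne'] at h2
        have h3 : Real.log A + 1 - A * x' f ≤ L f := by
          simp only [hL, one_div, Real.log_inv]; linarith
        have h4 := mul_le_mul_of_nonneg_left h3 (hz0 f)
        linarith
    rw [sum_sub_distrib, ← sum_mul, ← mul_sum, hzsum] at h1
    linarith
  have hmid : t * ∑ f ∈ E, x f * L f ≤ T / k * Real.log A + T + T / k := by
    have h1 : t * ∑ f ∈ E, x f * L f ≤ t * (n / k * Real.log A + n + n / k) := by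
      gcongr; linarith
    have h2 : t * (n / k * Real.log A + n + n / k) = T / k * Real.log A + T + T / k := by
      rw [ht]; field_simp
    linarith
  have hfin : Real.log A + Real.log (x e₀) ≤ (k ^ 2 / c + T * D + T) + Real.log 2 := by
    have h1 := hLle e₀ hx0
    rw [one_div, Real.log_inv] at h1
    linarith
  rw [le_div_iff₀ hApos, ← Real.log_le_log_iff (by positivity) (by positivity),
    Real.log_mul hx0.ne' hApos.ne', Real.log_mul two_ne_zero (Real.exp_pos _).ne', Real.log_exp]
  linarith

/-! ### Mixing -/

/-- For `1 ≤ d < k`, `γ > 0` and `α = α_d(k)`, there are `C ≥ 1` and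
`ε₀ > 0` such that for every `0 < ε ≤ ε₀` there is `n₀` with: for every `n ≥ n₀` divisible
by `k`, every `n`-vertex `k`-graph satisfying the Dirac-type condition admits a
`(C·ε^{-3k})`-well-distributed fractional perfect matching `x` with `h(G) - h(x) ≤ ε·n`. -/
theorem exists_well_distributed_near_max_entropy_fpm (d k : ℕ) (hd : 1 ≤ d) (hdk : d < k)
    (γ : ℝ) (hγ : 0 < γ) (α : ℝ) (hα : IsDiracThreshold d k α) :
    ∃ C : ℝ, 1 ≤ C ∧ ∃ ε₀ : ℝ, 0 < ε₀ ∧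
      ∀ ε : ℝ, 0 < ε → ε ≤ ε₀ →
        ∃ n₀ : ℕ, ∀ n : ℕ, n₀ ≤ n → k ∣ n →
          ∀ E : Finset (Finset (Fin n)), (∀ e ∈ E, e.card = k) →
            (α + γ) * ((n - d).choose (k - d) : ℝ) ≤ (minDeg E d : ℝ) →
            ∃ x : Finset (Fin n) → ℝ, IsFPM E x ∧
              (∀ e ∈ E,
                1 / ((C * ε⁻¹ ^ (3 * k)) * (n : ℝ) ^ (k - 1)) ≤ x e ∧
                x e ≤ (C * ε⁻¹ ^ (3 * k)) / (n : ℝ) ^ (k - 1)) ∧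
              graphEntropy E - fpmEntropy E x ≤ ε * n := by
  obtain ⟨η, hη, hη1, D, hD, n₁, Hspread⟩ := exists_spread_weighting hd hdk hγ hα
  obtain ⟨c, hc, Hdeg⟩ := exists_degree_lower hd hdk hγ (threshold_nonneg hα)
  have hk : 2 ≤ k := by omega
  have hkpos : (0 : ℝ) < k := by exact_mod_cast (by omega : 0 < k)
  obtain ⟨T, hT⟩ : ∃ T : ℝ, T = k / (c * η) := ⟨_, rfl⟩
  have hT0 : 0 ≤ T := by rw [hT]; positivity
  obtain ⟨K, hK⟩ : ∃ K : ℝ, K = 2 * Real.exp (k ^ 2 / c + T * D + T) := ⟨_, rfl⟩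
  have hK0 : 0 < K := by rw [hK]; positivity
  obtain ⟨D', hD'⟩ : ∃ D' : ℝ, D' = D + η := ⟨_, rfl⟩
  have hD'1 : 1 ≤ D' := by linarith
  have hlogD : 0 ≤ Real.log D' := Real.log_nonneg hD'1
  obtain ⟨κ, hκ⟩ : ∃ κ : ℝ, κ = 1 / (1 + Real.log D') := ⟨_, rfl⟩
  have hκ0 : 0 < κ := by rw [hκ]; positivity
  have hκ1 : κ ≤ 1 := by
    rw [hκ, div_le_one (by linarith)]; linarith
  have hκη : 0 < 1 / (κ * η) := by positivity
  refine ⟨K + D' + 1 / (κ * η), by linarith, 1, one_pos, fun ε hε hε1 =>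
    ⟨max n₁ (2 * k), fun n hn hkn E hE hmin => ?_⟩⟩
  have hn1 : 1 ≤ n := by
    have := le_trans (le_max_right _ _) hn
    omega
  have hnpos : (0 : ℝ) < n := by exact_mod_cast hn1
  have hdeg : ∀ S : Finset (Fin n), S.card = d →
      (α + γ) * ((n - d).choose (k - d) : ℝ) ≤ degS E S := fun S hS =>
    hmin.trans (by exact_mod_cast minDeg_le E S hS)
  have H := Hspread n (le_trans (le_max_left _ _) hn) hkn E hE hdeg
  have hvdeg := Hdeg n (le_trans (le_max_right _ _) hn) E hE hdeg
  obtain ⟨y, hy, hyb⟩ := exists_well_distributed_fpm (by omega) hn1 E hE hη H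
  obtain ⟨x, hx, hmax, hgE⟩ := exists_max_fpm E ⟨y, hy⟩
  have hxle : ∀ e ∈ E, x e ≤ K / (n : ℝ) ^ (k - 1) := by
    intro e he
    obtain ⟨z, hz0, hzoff, hzle, hzs⟩ :=
      exists_absorbing_weighting hk hn1 E hE hη hc hT hvdeg H e he
    rw [hK]
    exact max_fpm_le hk hn1 hE hc hT0 (by linarith) hx hmax he hz0 hzoff hzle hzs
  have hent := fpmEntropy_le (by omega) hn1 hE hx
  set A := (n : ℝ) ^ (k - 1) with hA
  have hApos : 0 < A := by positivity
  have hyent := le_fpmEntropy (by omega) hE hy hApos (by linarith : 0 < D')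
    (fun e he => lt_of_lt_of_le (by positivity) (hyb e he).1)
    (fun e he => by rw [hD']; exact (hyb e he).2)
  -- the mixing weight for which the entropy loss is exactly `ε * n`
  obtain ⟨δ, hδ⟩ : ∃ δ : ℝ, δ = κ * ε := ⟨_, rfl⟩
  have hδ0 : 0 < δ := by rw [hδ]; positivity
  have hδ1 : δ ≤ 1 := by rw [hδ]; nlinarith
  obtain ⟨hmixF, hmixE⟩ := hx.mix hy hδ0.le hδ1
  have hinv : ε⁻¹ ≤ ε⁻¹ ^ (3 * k) :=
    le_self_pow₀ ((one_le_inv₀ hε).2 hε1) (by omega)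
  have hinv1 : 1 ≤ ε⁻¹ := (one_le_inv₀ hε).2 hε1
  refine ⟨_, hmixF, fun e he => ⟨?_, ?_⟩, ?_⟩
  · obtain ⟨h1, -⟩ := hyb e he
    have h2 : 0 ≤ (1 - δ) * x e := mul_nonneg (by linarith) (hx.1 e).1
    have h3 : δ * (η / A) ≤ δ * y e := by gcongr
    have h4 : 1 / (κ * η) * ε⁻¹ ≤ (K + D' + 1 / (κ * η)) * ε⁻¹ ^ (3 * k) := by
      gcongr
      linarith
    calc 1 / ((K + D' + 1 / (κ * η)) * ε⁻¹ ^ (3 * k) * A)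
        ≤ 1 / (1 / (κ * η) * ε⁻¹ * A) := by gcongr
      _ = δ * (η / A) := by rw [hδ]; field_simp
      _ ≤ _ := by linarith
  · obtain ⟨-, h1⟩ := hyb e he
    rw [← hD'] at h1
    have h2 : (1 - δ) * x e ≤ K / A := by nlinarith [hxle e he, (hx.1 e).1]
    have h3 : δ * y e ≤ D' / A := by nlinarith [(hy.1 e).1]
    calc (1 - δ) * x e + δ * y e ≤ (K + D') / A :=
          (add_le_add h2 h3).trans_eq (add_div _ _ _).symm
      _ ≤ (K + D' + 1 / (κ * η)) * ε⁻¹ ^ (3 * k) / A := by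
        refine div_le_div_of_nonneg_right ?_ hApos.le
        have h4 : K + D' ≤ K + D' + 1 / (κ * η) := by linarith
        exact h4.trans (le_mul_of_one_le_right (by linarith) (hinv1.trans hinv))
  · rw [hgE]
    have h1 : fpmEntropy E x - fpmEntropy E y ≤ n * (1 + Real.log D') := by
      have h2 : (n : ℝ) / k * Real.log D' ≤ n * Real.log D' :=
        mul_le_mul_of_nonneg_right
          (div_le_self hnpos.le (by exact_mod_cast (by omega : 1 ≤ k))) hlogD
      linarith
    have h3 : δ * (fpmEntropy E x - fpmEntropy E y) ≤ δ * (n * (1 + Real.log D')) := by gcongr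
    have h4 : δ * (n * (1 + Real.log D')) = ε * n := by
      have h5 : κ * (1 + Real.log D') = 1 := by
        rw [hκ]
        exact one_div_mul_cancel (by linarith)
      calc δ * (n * (1 + Real.log D')) = κ * (1 + Real.log D') * (ε * n) := by rw [hδ]; ring
        _ = ε * n := by rw [h5, one_mul]
    linarith
end

section
/- For every integer k ≥ 2 there is a constant c > 0 such that the following holds for all sufficiently large n. Let G be a k-uniform hypergraph on n vertices and let x be an n^c-well-distributed fractional perfect matching of G. Run the random greedy matching process in G with respect to x, producing hypergraphs G(0), G(1), …, G(M), where M is the first step at which no positive-weight edge remains. Then with probability at least 1 − exp(−n^c), all of the following hold: (i) M ≥ (1 − n^{−c})·n/k; (ii) for each i ≤ (1 − n^{−c})·n/k, the total remaining weight satisfies ∑_{e ∈ E(G(i))} x[e] = (1 ± n^{−c})·((n/k − i)/(n/k))^k·(n/k); (iii) for each such i, ∑_{e ∈ E(G(i))} x[e]·ln(1/x[e]) = (1 ± n^{−c})·((n/k − i)/(n/k))^k·h(x); and (iv) for each such i and each set S of at most k−1 vertices of G(i), deg_{G(i)}(S) = ((n/k − i)/(n/k))^{k−|S|}·deg_G(S)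 ± n^{k−|S|−c}. -/
open Finset

/-! ### The random greedy matching process

We model a run of the random greedy matching process in an `n`-vertex hypergraph as a
function `ω : Fin m → Finset (Fin n)` (with `m = n/k` an upper bound on the number of
steps) listing the chosen edges in order; after the process terminates (at the first
step `M` where no positive-weight edge remains) the remaining entries are padded with `∅`.
The probability of a run is the product of the step probabilities, where at each step an
edge of the current hypergraph is chosen with probability proportional to its weight. -/

open scoped Classical in
/-- The edge set of `G(i)`: edges of `G` disjoint from all previously chosen edges. -/
noncomputable def greedyGi {n m : ℕ} (E : Finset (Finset (Fin n)))
    (ω : Fin m → Finset (Fin n)) (i : ℕ) : Finset (Finset (Fin n)) :=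
  E.filter (fun e => ∀ j : Fin m, (j : ℕ) < i → Disjoint e (ω j))

/-- The vertex set of `G(i)`: vertices not covered by the previously chosen edges. -/
def greedyVi {n m : ℕ} (ω : Fin m → Finset (Fin n)) (i : ℕ) : Finset (Fin n) :=
  Finset.univ.filter (fun v => ∀ j : Fin m, (j : ℕ) < i → v ∉ ω j)

open scoped Classical in
/-- The positive-weight edges available at step `i`. -/
noncomputable def greedyAvail {n m : ℕ} (E : Finset (Finset (Fin n)))
    (x : Finset (Fin n) → ℝ) (ω : Fin m → Finset (Fin n)) (i : ℕ) :
    Finset (Finset (Fin n)) :=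
  (greedyGi E ω i).filter (fun e => 0 < x e)

/-- The termination time `M`: the first step at which no positive-weight edge remains. -/
noncomputable def greedyM {n m : ℕ} (E : Finset (Finset (Fin n)))
    (x : Finset (Fin n) → ℝ) (ω : Fin m → Finset (Fin n)) : ℕ :=
  sInf {i : ℕ | greedyAvail E x ω i = ∅}

/-- `ω` is a valid (complete, `∅`-padded) run of the greedy matching process. -/
def greedyValidRun {n m : ℕ} (E : Finset (Finset (Fin n)))
    (x : Finset (Fin n) → ℝ) (ω : Fin m → Finset (Fin n)) : Prop :=
  ∀ i : Fin m, ((i : ℕ) < greedyM E x ω → ω i ∈ greedyAvail E x ω (i : ℕ)) ∧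
    (greedyM E x ω ≤ (i : ℕ) → ω i = ∅)

open scoped Classical in
/-- The probability of the run `ω` under the random greedy matching process: at each step
before termination, an available edge `e` is chosen with probability `x[e]` divided by the
total weight of the available edges. Invalid runs have probability `0`. -/
noncomputable def greedyProb {n m : ℕ} (E : Finset (Finset (Fin n)))
    (x : Finset (Fin n) → ℝ) (ω : Fin m → Finset (Fin n)) : ℝ :=
  if greedyValidRun E x ω then
    ∏ i : Fin m,
      if (i : ℕ) < greedyM E x ω then
        x (ω i) / ∑ f ∈ greedyAvail E x ω (i : ℕ), x f
      else 1
  else 0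


/-!
The proof tracks, along the process, a finite family of quantities: the total weight, the
entropy, the weighted degree of every vertex, and the degree of every set of at most `k - 1`
vertices. Each has the form `linkW E g S U = ∑ g e`, summed over the edges `e ⊇ S` with
`e \ S ⊆ U`, where `U` is the set of remaining vertices. Keeping `S` itself out of the condition
makes the quantity meaningful even after vertices of `S` have been used.

All quantities are normalised to be at most `1` initially; the total weight and the weighted
degrees then start at exactly `1`. Suppose a proportion `p = vdens U` of the vertices remains, and
every `linkW / p ^ (k - |S|)` is within `η / p ^ (40 k)` of its initial value. Then the weighted
degrees are all about `p ^ (k - 1)` and the total weight is about `p ^ k * n / k`, so every vertex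
lies in the next edge with probability about `k / (p n)`. Codegrees are negligible, so every set of `r` vertices is hit
with probability about `r k / (p n)` (`hit_bounds`, `hit_rate`), and `linkW` loses about this
fraction in expectation, where `r = k - |S|` (`expected_loss`). This is exactly the decay of
`p ^ r`, since `p` drops by `k / n`; hence `linkW / p ^ r` has drift only of the order of the
allowed error times `k / (p n)`. As the allowed error is proportional to `p ^ (-40 k)`, it
increases by more than this drift in each step (`error_growth`), so deviation minus allowed error has negative drift
while all quantities stay within their bounds.

Instead of a martingale inequality, the proof uses a potential: the sum over all tracked
quantities and both signs of `exp (l (± deviation - allowed error))`. It does not increase in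
expectation from a good state (`Tracking.pot_step`), is at least `1` in a bad state, and initially
equals `2 N exp (-l η)`, where `N` is the number of tracked quantities. So this bounds the
probability of ever reaching a bad state at density at least `p₀` (`Tracking.bad_prob`).

While the states are good and the density is at least `p₀`, the total weight is positive, so the
process has not stopped (`Tracking.run_good`), and the four conclusions are read off from the
tracked quantities (`WellDist.goodRun`). With `t = n ^ c` and `c = 1 / (1000 k)` the parameters are
`p₀ = 1 / t`, `η = n ^ (-1/8)` and `l = n ^ (5/8)`. All conditions become inequalities between
powers of `t` (`WellDist.tracking_pow`), and the failure probability is at most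
`exp (-√n)` times a polynomial in `n`.
-/
/-! ### Scalar estimates -/

lemma one_sub_pow_le_quadratic (t : ℝ) (ht0 : 0 ≤ t) (r : ℕ) :
    t ≤ 1 → (1 - t) ^ r ≤ 1 - r * t + (r : ℝ) ^ 2 * t ^ 2 := by
  intro ht1
  induction r with
  | zero => simp
  | succ r ih =>
    have h1 : (1 - t) ^ (r + 1) ≤ (1 - r * t + (r : ℝ) ^ 2 * t ^ 2) * (1 - t) := by
      rw [pow_succ]
      exact mul_le_mul_of_nonneg_right ih (by linarith)
    refine h1.trans ?_
    push_cast
    have hr : (0 : ℝ) ≤ r := Nat.cast_nonneg r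
    have h2 : 0 ≤ (r : ℝ) ^ 2 * t ^ 3 := by positivity
    have h3 : 0 ≤ (r : ℝ) * t ^ 2 := by positivity
    nlinarith [sq_nonneg t]

lemma one_sub_mul_le_pow (t : ℝ) (ht1 : t ≤ 1) (r : ℕ) : 1 - r * t ≤ (1 - t) ^ r := by
  have := one_add_mul_le_pow (a := -t) (by linarith) r
  calc 1 - r * t = 1 + r * (-t) := by ring
    _ ≤ (1 + -t) ^ r := this
    _ = (1 - t) ^ r := by ring

/-- The expected drift of `X / p ^ r` in one step, when the expected loss `m` of `X` is close to
`r t X`, where `t = δ / p` is the relative decrease of the density `p`. -/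
lemma drift_bound {k r : ℕ} (hr : r ≤ k) {p t X m η : ℝ} (hp : 0 < p) (ht0 : 0 ≤ t)
    (hkt : k * t ≤ 1 / 2) (hkη : k * t ≤ η) (hX : 0 ≤ X) (ht1 : t ≤ 1)
    (hZ : X / p ^ r ≤ 2) (hm : |m - X * (r * t)| ≤ 4 * k * η * t * X) :
    |(X - m) / (p * (1 - t)) ^ r - X / p ^ r| ≤ 20 * k * η * t := by
  have hrk : (r : ℝ) ≤ k := by exact_mod_cast hr
  have hr0 : (0 : ℝ) ≤ r := Nat.cast_nonneg r
  have hk0 : (0 : ℝ) ≤ k := Nat.cast_nonneg k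
  have h1 := one_sub_mul_le_pow t ht1 r
  have h2 := one_sub_pow_le_quadratic t ht0 r ht1
  have hrt : r * t ≤ k * t := mul_le_mul_of_nonneg_right hrk ht0
  have hhalf : 1 / 2 ≤ (1 - t) ^ r := by linarith
  have hpr : 0 < p ^ r := pow_pos hp r
  have hη : 0 ≤ η := le_trans (by positivity) hkη
  have e1 : (X - m) / (p * (1 - t)) ^ r - X / p ^ r
      = (X - m - X * (1 - t) ^ r) / (p ^ r * (1 - t) ^ r) := by
    rw [mul_pow]
    have : (1 - t) ^ r ≠ 0 := by linarith
    field_simp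
  rw [e1, abs_div, abs_of_pos (by positivity : 0 < p ^ r * (1 - t) ^ r)]
  have h3 : (r : ℝ) ^ 2 * t ^ 2 ≤ k * η * t := by
    have : (r * t) * (r * t) ≤ (k * t) * η :=
      mul_le_mul hrt (hrt.trans hkη) (by positivity) (by positivity)
    nlinarith
  have hnum : |X - m - X * (1 - t) ^ r| ≤ 5 * k * η * t * X := by
    have hm' := abs_le.mp hm
    have a1 : 0 ≤ X * ((1 - t) ^ r - (1 - r * t)) := mul_nonneg hX (by linarith)
    have a2 : X * ((1 - t) ^ r - (1 - r * t)) ≤ X * (k * η * t) :=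
      mul_le_mul_of_nonneg_left (by linarith) hX
    rw [abs_le]
    constructor <;> nlinarith [hm'.1, hm'.2]
  rw [div_le_iff₀ (by positivity)]
  have hX2 : X ≤ 2 * p ^ r := (div_le_iff₀ hpr).mp hZ
  calc |X - m - X * (1 - t) ^ r| ≤ 5 * k * η * t * X := hnum
    _ ≤ 5 * k * η * t * (2 * p ^ r) := by gcongr
    _ = 20 * k * η * t * (p ^ r * (1 / 2)) := by ring
    _ ≤ 20 * k * η * t * (p ^ r * (1 - t) ^ r) := by gcongr

/-- The one-step change of `X / p ^ r` when `X` loses `h`. -/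
lemma change_bound {k r : ℕ} (hr : r ≤ k) {p p₀ t X h b : ℝ} (hp₀ : 0 < p₀) (hp : p₀ ≤ p)
    (hp1 : p ≤ 1) (ht0 : 0 ≤ t) (hkt : k * t ≤ 1 / 2) (hX : 0 ≤ X) (ht1 : t ≤ 1)
    (hZ : X / p ^ r ≤ 2) (hh0 : 0 ≤ h) (hh : h ≤ k * b) :
    |(X - h) / (p * (1 - t)) ^ r - X / p ^ r| ≤ 4 * k * t + 2 * k * b / p₀ ^ k := by
  have hrk : (r : ℝ) ≤ k := by exact_mod_cast hr
  have hr0 : (0 : ℝ) ≤ r := Nat.cast_nonneg r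
  have hk0 : (0 : ℝ) ≤ k := Nat.cast_nonneg k
  have h1 := one_sub_mul_le_pow t ht1 r
  have hle1 : (1 - t) ^ r ≤ 1 := pow_le_one₀ (by linarith) (by linarith)
  have hrt : r * t ≤ k * t := mul_le_mul_of_nonneg_right hrk ht0
  have hhalf : 1 / 2 ≤ (1 - t) ^ r := by linarith
  have hp' : 0 < p := hp₀.trans_le hp
  have hpr : 0 < p ^ r := pow_pos hp' r
  have hprk : p₀ ^ k ≤ p ^ r :=
    (pow_le_pow_left₀ hp₀.le hp k).trans (pow_le_pow_of_le_one hp'.le hp1 hr)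
  have e1 : (X - h) / (p * (1 - t)) ^ r - X / p ^ r
      = (X - h - X * (1 - t) ^ r) / (p ^ r * (1 - t) ^ r) := by
    rw [mul_pow]
    have : (1 - t) ^ r ≠ 0 := by linarith
    field_simp
  rw [e1, abs_div, abs_of_pos (by positivity : 0 < p ^ r * (1 - t) ^ r)]
  have hX2 : X ≤ 2 * p ^ r := (div_le_iff₀ hpr).mp hZ
  have hnum : |X - h - X * (1 - t) ^ r| ≤ 2 * p ^ r * (k * t) + k * b := by
    have a1 : 0 ≤ X * (1 - (1 - t) ^ r) := mul_nonneg hX (by linarith)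
    have a2 : X * (1 - (1 - t) ^ r) ≤ 2 * p ^ r * (k * t) :=
      mul_le_mul hX2 (by linarith) (by linarith) (by positivity)
    have a3 : 0 ≤ 2 * p ^ r * (k * t) := by positivity
    rw [abs_le]
    constructor <;> linarith
  have hkb : 0 ≤ k * b := hh0.trans hh
  rw [div_le_iff₀ (by positivity)]
  refine hnum.trans ?_
  have b1 : 2 * p ^ r * (k * t) ≤ 4 * k * t * (p ^ r * (1 - t) ^ r) := by
    calc 2 * p ^ r * (k * t) = 4 * k * t * (p ^ r * (1 / 2)) := by ring
      _ ≤ _ := by gcongr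
  have b2 : k * b ≤ 2 * k * b / p₀ ^ k * (p ^ r * (1 - t) ^ r) := by
    have hq : 0 < p₀ ^ k := pow_pos hp₀ k
    calc k * b = 2 * k * b / p₀ ^ k * (p₀ ^ k * (1 / 2)) := by field_simp
      _ ≤ _ := by
        have : 0 ≤ 2 * k * b / p₀ ^ k := div_nonneg (by linarith) hq.le
        gcongr
  linarith

/-- The increase of the error function `η₀ / p ^ A` in one step. -/
lemma error_growth {A : ℕ} {p t η₀ : ℝ} (hp : 0 < p) (ht0 : 0 ≤ t) (ht1 : t ≤ 1)
    (hAt : A * t ≤ 1 / 2) (hη : 0 ≤ η₀) :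
    A * t * (η₀ / p ^ A) ≤ η₀ / (p * (1 - t)) ^ A - η₀ / p ^ A ∧
      η₀ / (p * (1 - t)) ^ A - η₀ / p ^ A ≤ 2 * A * t * (η₀ / p ^ A) := by
  have h1 := one_sub_mul_le_pow t ht1 A
  have hA : (0 : ℝ) ≤ A := Nat.cast_nonneg A
  have hhalf : 1 / 2 ≤ (1 - t) ^ A := by linarith
  have hle : (1 - t) ^ A * (1 + A * t) ≤ 1 := by
    have h2 : 1 + A * t ≤ (1 + t) ^ A := one_add_mul_le_pow (by linarith) A
    calc (1 - t) ^ A * (1 + A * t) ≤ (1 - t) ^ A * (1 + t) ^ A := by gcongr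
      _ = (1 - t ^ 2) ^ A := by rw [← mul_pow]; ring
      _ ≤ 1 := pow_le_one₀ (by nlinarith) (by nlinarith)
  have hpA : 0 < p ^ A := pow_pos hp A
  have hq : 0 < (1 - t) ^ A := by linarith
  have e1 : η₀ / (p * (1 - t)) ^ A - η₀ / p ^ A = (1 / (1 - t) ^ A - 1) * (η₀ / p ^ A) := by
    rw [mul_pow]; field_simp
  rw [e1]
  have hη' : 0 ≤ η₀ / p ^ A := by positivity
  have c1 : A * t ≤ 1 / (1 - t) ^ A - 1 := by
    rw [le_sub_iff_add_le, le_div_iff₀ hq]; linarith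
  have c2 : 1 / (1 - t) ^ A - 1 ≤ 2 * A * t := by
    rw [sub_le_iff_le_add, div_le_iff₀ hq]
    have : 0 ≤ A * t := by positivity
    nlinarith
  exact ⟨mul_le_mul_of_nonneg_right c1 hη', mul_le_mul_of_nonneg_right c2 hη'⟩

/-- The exponential of a bounded variable with sufficiently negative mean has mean at most `1`. -/
lemma exp_moment_le_one {ι : Type*} (s : Finset ι) (q Y : ι → ℝ) {L l a : ℝ}
    (hq : ∀ e ∈ s, 0 ≤ q e) (hq1 : ∑ e ∈ s, q e = 1) (hY : ∀ e ∈ s, |Y e| ≤ L) (hl : 0 ≤ l)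
    (hlL : l * L ≤ 1) (ha : l * L ^ 2 ≤ a) (hE : ∑ e ∈ s, q e * Y e ≤ -a) :
    ∑ e ∈ s, q e * Real.exp (l * Y e) ≤ 1 := by
  have h1 : ∀ e ∈ s, q e * Real.exp (l * Y e)
      ≤ q e * (1 + l ^ 2 * L ^ 2) + l * (q e * Y e) := by
    intro e he
    have hab : |l * Y e| ≤ l * L := by
      rw [abs_mul, abs_of_nonneg hl]; exact mul_le_mul_of_nonneg_left (hY e he) hl
    have h2 := (abs_le.mp (Real.abs_exp_sub_one_sub_id_le (hab.trans hlL))).2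
    have h3 : (l * Y e) ^ 2 ≤ (l * L) ^ 2 := sq_le_sq' (by linarith [(abs_le.mp hab).1])
      (abs_le.mp hab).2
    have h4 : Real.exp (l * Y e) ≤ 1 + l ^ 2 * L ^ 2 + l * Y e := by nlinarith
    calc q e * Real.exp (l * Y e) ≤ q e * (1 + l ^ 2 * L ^ 2 + l * Y e) :=
          mul_le_mul_of_nonneg_left h4 (hq e he)
      _ = _ := by ring
  refine (Finset.sum_le_sum h1).trans ?_
  rw [Finset.sum_add_distrib, ← Finset.sum_mul, ← Finset.mul_sum, hq1]
  nlinarith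

/-! ### One step of the process -/

/-- The edges contained in the set `U` of remaining vertices. -/
def resEdges {n : ℕ} (E : Finset (Finset (Fin n))) (U : Finset (Fin n)) :
    Finset (Finset (Fin n)) :=
  E.filter (fun e => e ⊆ U)

/-- The total weight `∑ g e` over the edges `e ⊇ S` all of whose vertices outside `S` remain
in `U`. The set `S` itself is not required to survive, so this quantity has the same
expected relative change whether or not `S ⊆ U`. -/
def linkW {n : ℕ} (E : Finset (Finset (Fin n))) (g : Finset (Fin n) → ℝ)
    (S U : Finset (Fin n)) : ℝ :=
  ∑ e ∈ E.filter (fun e => S ⊆ e ∧ e \ S ⊆ U), g e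

/-- Bonferroni bounds for the weight of the sets meeting `T`. -/
lemma hit_bounds {n : ℕ} (s : Finset (Finset (Fin n))) (x : Finset (Fin n) → ℝ)
    (hx : ∀ e ∈ s, 0 ≤ x e) (T : Finset (Fin n)) :
    ∑ e ∈ s.filter (fun e => ¬ Disjoint e T), x e
        ≤ ∑ u ∈ T, ∑ e ∈ s.filter (fun e => u ∈ e), x e ∧
      ∑ u ∈ T, ∑ e ∈ s.filter (fun e => u ∈ e), x e
        - ∑ w ∈ T.offDiag, ∑ e ∈ s.filter (fun e => w.1 ∈ e ∧ w.2 ∈ e), x e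
        ≤ ∑ e ∈ s.filter (fun e => ¬ Disjoint e T), x e := by
  have h1 : ∑ u ∈ T, ∑ e ∈ s.filter (fun e => u ∈ e), x e
      = ∑ e ∈ s, x e * ((e ∩ T).card : ℝ) := by
    simp_rw [Finset.sum_filter]
    rw [Finset.sum_comm]
    refine Finset.sum_congr rfl fun e _ => ?_
    rw [← Finset.sum_filter, Finset.sum_const, nsmul_eq_mul, mul_comm]
    congr 3
    ext u; simp [and_comm]
  have h2 : ∑ w ∈ T.offDiag, ∑ e ∈ s.filter (fun e => w.1 ∈ e ∧ w.2 ∈ e), x e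
      = ∑ e ∈ s, x e * (((e ∩ T).card : ℝ) * (e ∩ T).card - (e ∩ T).card) := by
    simp_rw [Finset.sum_filter]
    rw [Finset.sum_comm]
    refine Finset.sum_congr rfl fun e _ => ?_
    rw [← Finset.sum_filter, Finset.sum_const, nsmul_eq_mul, mul_comm]
    have h3 : T.offDiag.filter (fun w => w.1 ∈ e ∧ w.2 ∈ e) = (e ∩ T).offDiag := by
      ext ⟨u, v⟩; simp only [mem_filter, mem_offDiag, mem_inter]; tauto
    rw [h3, Finset.offDiag_card, Nat.cast_sub (Nat.le_mul_self _)]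
    push_cast; rfl
  rw [h1, h2, ← Finset.sum_sub_distrib, Finset.sum_filter]
  constructor
  · refine Finset.sum_le_sum fun e he => ?_
    split_ifs with hd
    · have := hx e he
      positivity
    · have : 1 ≤ (e ∩ T).card := by
        rw [Nat.one_le_iff_ne_zero, Ne, Finset.card_eq_zero, ← Finset.disjoint_iff_inter_eq_empty]
        exact hd
      have h1 : (1 : ℝ) ≤ (e ∩ T).card := by exact_mod_cast this
      nlinarith [hx e he]
  · refine Finset.sum_le_sum fun e he => ?_
    split_ifs with hd
    · have : (e ∩ T).card = 0 := by
        rw [Finset.card_eq_zero, ← Finset.disjoint_iff_inter_eq_empty]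
        exact hd
      simp [this]
    · have h1 : (0 : ℝ) ≤ ((e ∩ T).card - 1 : ℝ) ^ 2 := sq_nonneg _
      nlinarith [hx e he]

/-- If the weighted degrees and the total weight of the remaining hypergraph are close to
`p ^ (k - 1)` and `p ^ k / δ`, then an `r`-set is hit in the next step with probability
close to `r δ / p`. -/
lemma hit_rate {n k r : ℕ} (hk : 1 ≤ k) (hr : r ≤ k) (s : Finset (Finset (Fin n)))
    (x : Finset (Fin n) → ℝ) (hx : ∀ e ∈ s, 0 ≤ x e) (T : Finset (Fin n)) (hT : T.card = r)
    {p δ η κ : ℝ} (hp : 0 < p) (hδ : 0 < δ) (hη0 : 0 ≤ η) (hη : η ≤ 1 / 4)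
    (hd : ∀ u ∈ T, |∑ e ∈ s.filter (fun e => u ∈ e), x e - p ^ (k - 1)| ≤ η * p ^ (k - 1))
    (hW : |(∑ e ∈ s, x e) * δ - p ^ k| ≤ η * p ^ k)
    (hcd : ∀ u v, u ≠ v → ∑ e ∈ s.filter (fun e => u ∈ e ∧ v ∈ e), x e ≤ κ)
    (hκ0 : 0 ≤ κ) (hκ : k * κ ≤ η * p ^ (k - 1)) :
    |(∑ e ∈ s.filter (fun e => ¬ Disjoint e T), x e) / (∑ e ∈ s, x e) - r * (δ / p)|
      ≤ 4 * k * η * (δ / p) := by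
  obtain ⟨hb1, hb2⟩ := hit_bounds s x hx T
  set W := ∑ e ∈ s, x e
  set H := ∑ e ∈ s.filter (fun e => ¬ Disjoint e T), x e
  set D := ∑ u ∈ T, ∑ e ∈ s.filter (fun e => u ∈ e), x e with hD
  have hrk : (r : ℝ) ≤ k := by exact_mod_cast hr
  have hr0 : (0 : ℝ) ≤ r := Nat.cast_nonneg r
  have hk0 : (0 : ℝ) ≤ k := Nat.cast_nonneg k
  have hP : 0 < p ^ (k - 1) := pow_pos hp _
  have hpk : p ^ k = p ^ (k - 1) * p := by rw [← pow_succ, Nat.sub_add_cancel hk]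
  set P := p ^ (k - 1)
  have hDb : |D - r * P| ≤ r * (η * P) := by
    have : D - r * P = ∑ u ∈ T, (∑ e ∈ s.filter (fun e => u ∈ e), x e - P) := by
      rw [Finset.sum_sub_distrib, Finset.sum_const, hT, nsmul_eq_mul]
    rw [this]
    refine (Finset.abs_sum_le_sum_abs _ _).trans ((Finset.sum_le_sum hd).trans ?_)
    rw [Finset.sum_const, hT, nsmul_eq_mul]
  have hC : ∑ w ∈ T.offDiag, ∑ e ∈ s.filter (fun e => w.1 ∈ e ∧ w.2 ∈ e), x e
      ≤ r * (k * κ) := by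
    refine (Finset.sum_le_card_nsmul _ _ κ fun w hw => hcd _ _ (mem_offDiag.mp hw).2.2).trans ?_
    rw [nsmul_eq_mul, Finset.offDiag_card, hT, ← mul_assoc]
    refine mul_le_mul_of_nonneg_right ?_ hκ0
    calc ((r * r - r : ℕ) : ℝ) ≤ ((r * k : ℕ) : ℝ) := by
          exact_mod_cast (Nat.sub_le _ _).trans (Nat.mul_le_mul_left r hr)
      _ = r * k := by push_cast; rfl
  set t := δ / p
  have ht0 : 0 < t := div_pos hδ hp
  -- dividing by `p`, the total weight satisfies `W t ≈ p ^ (k - 1)`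
  have hWt : |W * t - P| ≤ η * P := by
    have e1 : W * t - P = (W * δ - p ^ k) / p := by rw [hpk]; simp only [t]; field_simp
    rw [e1, abs_div, abs_of_pos hp, div_le_iff₀ hp]
    rw [hpk] at hW ⊢
    linarith
  obtain ⟨w1, w2⟩ := abs_le.mp hWt
  obtain ⟨d1, d2⟩ := abs_le.mp hDb
  have hWt0 : 3 / 4 * P ≤ W * t := by nlinarith
  have hW0 : 0 < W := by
    by_contra hcon
    push Not at hcon
    nlinarith
  have e2 : H / W - r * t = (H - r * (W * t)) / W := by field_simp
  rw [e2, abs_div, abs_of_pos hW0, div_le_iff₀ hW0]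
  have hηP : 0 ≤ η * P := by positivity
  have c1 : r * (k * κ) ≤ r * (η * P) := mul_le_mul_of_nonneg_left hκ hr0
  have c2 : r * (η * P) ≤ k * (η * P) := mul_le_mul_of_nonneg_right hrk hηP
  have c3 : |r * (W * t) - r * P| ≤ r * (η * P) := by
    rw [← mul_sub, abs_mul, abs_of_nonneg hr0]
    exact mul_le_mul_of_nonneg_left hWt hr0
  obtain ⟨f1, f2⟩ := abs_le.mp c3
  have c4 : 3 * (k * (η * P)) ≤ 4 * k * η * t * W := by
    have := mul_le_mul_of_nonneg_left hWt0 (by positivity : 0 ≤ 4 * (k * η))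
    nlinarith
  rw [abs_le]
  constructor <;> linarith

/-- The weight lost by `linkW` when the vertices of `e` are deleted. -/
def linkLoss {n : ℕ} (E : Finset (Finset (Fin n))) (g : Finset (Fin n) → ℝ)
    (S U e : Finset (Fin n)) : ℝ :=
  ∑ f ∈ (E.filter (fun f => S ⊆ f ∧ f \ S ⊆ U)).filter (fun f => ¬ Disjoint e (f \ S)), g f

lemma linkW_sdiff {n : ℕ} (E : Finset (Finset (Fin n))) (g : Finset (Fin n) → ℝ)
    (S U e : Finset (Fin n)) : linkW E g S (U \ e) = linkW E g S U - linkLoss E g S U e := by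
  unfold linkW linkLoss
  rw [← Finset.sum_filter_add_sum_filter_not (E.filter (fun f => S ⊆ f ∧ f \ S ⊆ U))
    (fun f => ¬ Disjoint e (f \ S)), add_sub_cancel_left]
  refine Finset.sum_congr ?_ fun _ _ => rfl
  ext f
  simp only [mem_filter, not_not, Finset.subset_sdiff, disjoint_comm]
  tauto

lemma linkLoss_bounds {n k : ℕ} (E : Finset (Finset (Fin n))) (g : Finset (Fin n) → ℝ)
    (hg : ∀ f ∈ E, 0 ≤ g f) (S U e : Finset (Fin n)) (he : e.card = k) {b : ℝ}
    (hb : ∀ u, ∑ f ∈ E.filter (fun f => S ⊆ f ∧ u ∈ f \ S), g f ≤ b) :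
    0 ≤ linkLoss E g S U e ∧ linkLoss E g S U e ≤ k * b := by
  constructor
  · exact Finset.sum_nonneg fun f hf => hg f (mem_filter.mp (mem_filter.mp hf).1).1
  · have h1 : linkLoss E g S U e
        ≤ ∑ f ∈ E, ∑ u ∈ e, if S ⊆ f ∧ u ∈ f \ S then g f else 0 := by
      unfold linkLoss
      rw [Finset.filter_filter, Finset.sum_filter]
      refine Finset.sum_le_sum fun f hf => ?_
      have hnn : ∀ u ∈ e, 0 ≤ if S ⊆ f ∧ u ∈ f \ S then g f else 0 := fun u _ => by
        split_ifs
        exacts [hg f hf, le_rfl]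
      split_ifs with hc
      · obtain ⟨⟨hSf, -⟩, hd⟩ := hc
        obtain ⟨u, hu, hu'⟩ := Finset.not_disjoint_iff.mp hd
        refine le_trans ?_ (Finset.single_le_sum hnn hu)
        rw [if_pos ⟨hSf, hu'⟩]
      · exact Finset.sum_nonneg hnn
    refine h1.trans ?_
    rw [Finset.sum_comm]
    simp_rw [← Finset.sum_filter]
    refine (Finset.sum_le_card_nsmul _ _ b fun u _ => hb u).trans ?_
    rw [he, nsmul_eq_mul]

/-- If every `(f \ S)` is hit with probability about `r t`, then the expected loss of `linkW`
is about `r t` times its value. -/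
lemma expected_loss {n : ℕ} (E s : Finset (Finset (Fin n))) (g q : Finset (Fin n) → ℝ)
    (hg : ∀ f ∈ E, 0 ≤ g f) (S U : Finset (Fin n)) {m ε : ℝ}
    (h : ∀ f ∈ E, S ⊆ f → f \ S ⊆ U →
      |∑ e ∈ s.filter (fun e => ¬ Disjoint e (f \ S)), q e - m| ≤ ε) :
    |∑ e ∈ s, q e * linkLoss E g S U e - linkW E g S U * m| ≤ ε * linkW E g S U := by
  have h1 : ∑ e ∈ s, q e * linkLoss E g S U e
      = ∑ f ∈ E.filter (fun f => S ⊆ f ∧ f \ S ⊆ U),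
          g f * ∑ e ∈ s.filter (fun e => ¬ Disjoint e (f \ S)), q e := by
    unfold linkLoss
    simp_rw [Finset.mul_sum]
    simp_rw [Finset.sum_filter (s := E.filter (fun f => S ⊆ f ∧ f \ S ⊆ U)),
      Finset.sum_filter (s := s)]
    rw [Finset.sum_comm]
    refine Finset.sum_congr rfl fun f _ => Finset.sum_congr rfl fun e _ => ?_
    split_ifs <;> ring
  rw [h1]
  unfold linkW
  rw [Finset.sum_mul, ← Finset.sum_sub_distrib, Finset.mul_sum]
  refine (Finset.abs_sum_le_sum_abs _ _).trans (Finset.sum_le_sum fun f hf => ?_)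
  simp only [mem_filter] at hf
  rw [← mul_sub, abs_mul, abs_of_nonneg (hg f hf.1), mul_comm]
  exact mul_le_mul_of_nonneg_right (h f hf.1 hf.2.1 hf.2.2) (hg f hf.1)

/-! ### The potential function -/

/-- A finite family of tracked quantities `linkW E (g j) (S j)`, normalised to be at most `1`
initially, together with numerical parameters. The family has to contain the normalised total
weight and all weighted vertex degrees. The number `p₀` is the smallest density considered,
`η₀ / p ^ (40 k)` is the error allowed for the rescaled quantities at density `p`, `κ` bounds
the weighted codegrees, `b` bounds the influence of a vertex on a tracked quantity, and `l` is the
exponent of the exponential moments. -/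
structure Tracking {n : ℕ} (k : ℕ) (E : Finset (Finset (Fin n))) (x : Finset (Fin n) → ℝ)
    {J : Type} (g : J → Finset (Fin n) → ℝ) (S : J → Finset (Fin n))
    (p₀ η₀ κ b l : ℝ) : Prop where
  hk : 1 ≤ k
  hn : 0 < n
  unif : ∀ e ∈ E, e.card = k
  xpos : ∀ e ∈ E, 0 < x e
  gnn : ∀ j, ∀ e ∈ E, 0 ≤ g j e
  gtot : ∀ j, linkW E (g j) (S j) univ ≤ 1
  gdeg : ∀ j u, ∑ e ∈ E.filter (fun e => S j ⊆ e ∧ u ∈ e \ S j), g j e ≤ b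
  jW : ∃ j, S j = ∅ ∧ (∀ e, g j e = x e * (k / n)) ∧ linkW E (g j) (S j) univ = 1
  jv : ∀ v, ∃ j, S j = {v} ∧ g j = x ∧ linkW E (g j) (S j) univ = 1
  codeg : ∀ u v, u ≠ v → ∑ e ∈ E.filter (fun e => u ∈ e ∧ v ∈ e), x e ≤ κ
  hp₀ : 0 < p₀
  hη₀ : 0 ≤ η₀
  hη : η₀ / p₀ ^ (40 * k) ≤ 1 / 4
  hκ0 : 0 ≤ κ
  hκ : k * κ ≤ η₀ * p₀ ^ k
  hδ : k * ((k / n : ℝ) / p₀) ≤ η₀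
  hδA : ((40 * k : ℕ) : ℝ) * ((k / n : ℝ) / p₀) ≤ 1 / 2
  hl : 0 ≤ l
  hb : 0 ≤ b
  hl1 : l * (84 * k * ((k / n : ℝ) / p₀) + 2 * k * b / p₀ ^ k) ≤ 1
  hl2 : l * (84 * k * ((k / n : ℝ) / p₀) + 2 * k * b / p₀ ^ k) ^ 2 ≤ 20 * k * η₀ * (k / n)

/-- The proportion of vertices contained in `U`. -/
noncomputable def vdens {n : ℕ} (U : Finset (Fin n)) : ℝ := (U.card : ℝ) / n

/-- The quantity `linkW`, rescaled by its expected decay `p ^ (k - |S|)`. -/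
noncomputable def scaledW {n : ℕ} (k : ℕ) (E : Finset (Finset (Fin n)))
    (g : Finset (Fin n) → ℝ) (S U : Finset (Fin n)) : ℝ :=
  linkW E g S U / vdens U ^ (k - S.card)

/-- All tracked quantities are within the allowed error of their predicted values. -/
def GoodState {n : ℕ} (k : ℕ) (E : Finset (Finset (Fin n))) {J : Type}
    (g : J → Finset (Fin n) → ℝ) (S : J → Finset (Fin n)) (η₀ : ℝ) (U : Finset (Fin n)) : Prop :=
  ∀ j, |scaledW k E (g j) (S j) U - linkW E (g j) (S j) univ| ≤ η₀ / vdens U ^ (40 * k)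

/-- The summand of the potential controlling the deviation of one tracked quantity in the
direction given by the sign `σ`. -/
noncomputable def potTerm {n : ℕ} (k : ℕ) (E : Finset (Finset (Fin n)))
    (g : Finset (Fin n) → ℝ) (S : Finset (Fin n)) (η₀ l σ : ℝ) (U : Finset (Fin n)) : ℝ :=
  Real.exp (l * (σ * (scaledW k E g S U - linkW E g S univ) - η₀ / vdens U ^ (40 * k)))

/-- The potential: a sum of exponential moments that is a supermartingale while the process is
in good states, and that is at least `1` in every bad state. -/
noncomputable def pot {n : ℕ} (k : ℕ) (E : Finset (Finset (Fin n))) {J : Type} [Fintype J]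
    (g : J → Finset (Fin n) → ℝ) (S : J → Finset (Fin n)) (η₀ l : ℝ) (U : Finset (Fin n)) : ℝ :=
  ∑ j, (potTerm k E (g j) (S j) η₀ l 1 U + potTerm k E (g j) (S j) η₀ l (-1) U)

lemma pot_nonneg {n : ℕ} (k : ℕ) (E : Finset (Finset (Fin n))) {J : Type} [Fintype J]
    (g : J → Finset (Fin n) → ℝ) (S : J → Finset (Fin n)) (η₀ l : ℝ) (U : Finset (Fin n)) :
    0 ≤ pot k E g S η₀ l U :=
  Finset.sum_nonneg fun _ _ => add_nonneg (Real.exp_pos _).le (Real.exp_pos _).le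

lemma one_le_pot {n : ℕ} (k : ℕ) (E : Finset (Finset (Fin n))) {J : Type} [Fintype J]
    (g : J → Finset (Fin n) → ℝ) (S : J → Finset (Fin n)) (η₀ l : ℝ) (hl : 0 ≤ l)
    (U : Finset (Fin n)) (h : ¬ GoodState k E g S η₀ U) : 1 ≤ pot k E g S η₀ l U := by
  unfold GoodState at h
  push Not at h
  obtain ⟨j, hj⟩ := h
  have h1 : 1 ≤ potTerm k E (g j) (S j) η₀ l 1 U + potTerm k E (g j) (S j) η₀ l (-1) U := by
    unfold potTerm
    rcases lt_abs.mp hj with h2 | h2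
    · have : 1 ≤ Real.exp (l * (1 * (scaledW k E (g j) (S j) U - linkW E (g j) (S j) univ)
          - η₀ / vdens U ^ (40 * k))) :=
        Real.one_le_exp (mul_nonneg hl (by linarith))
      linarith [Real.exp_pos (l * (-1 * (scaledW k E (g j) (S j) U - linkW E (g j) (S j) univ)
          - η₀ / vdens U ^ (40 * k)))]
    · have : 1 ≤ Real.exp (l * (-1 * (scaledW k E (g j) (S j) U - linkW E (g j) (S j) univ)
          - η₀ / vdens U ^ (40 * k))) :=
        Real.one_le_exp (mul_nonneg hl (by linarith))
      linarith [Real.exp_pos (l * (1 * (scaledW k E (g j) (S j) U - linkW E (g j) (S j) univ)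
          - η₀ / vdens U ^ (40 * k)))]
  refine h1.trans ?_
  unfold pot
  exact Finset.single_le_sum (f := fun j => potTerm k E (g j) (S j) η₀ l 1 U
    + potTerm k E (g j) (S j) η₀ l (-1) U)
    (fun _ _ => add_nonneg (Real.exp_pos _).le (Real.exp_pos _).le) (mem_univ j)

lemma vdens_univ {n : ℕ} (hn : 0 < n) : vdens (univ : Finset (Fin n)) = 1 := by
  have : (n : ℝ) ≠ 0 := by positivity
  simp [vdens, this]

lemma pot_univ {n : ℕ} (hn : 0 < n) (k : ℕ) (E : Finset (Finset (Fin n))) {J : Type} [Fintype J]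
    (g : J → Finset (Fin n) → ℝ) (S : J → Finset (Fin n)) (η₀ l : ℝ) :
    pot k E g S η₀ l univ = Fintype.card J * (2 * Real.exp (-(l * η₀))) := by
  unfold pot potTerm scaledW
  simp [vdens_univ hn]
  ring

namespace Tracking

variable {n k : ℕ} {E : Finset (Finset (Fin n))} {x : Finset (Fin n) → ℝ} {J : Type}
  {g : J → Finset (Fin n) → ℝ} {S : J → Finset (Fin n)} {p₀ η₀ κ b l : ℝ}

lemma linkW_nonneg (h : Tracking k E x g S p₀ η₀ κ b l) (j : J) (U : Finset (Fin n)) :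
    0 ≤ linkW E (g j) (S j) U :=
  Finset.sum_nonneg fun e he => h.gnn j e (mem_filter.mp he).1

lemma vdens_le_one (h : Tracking k E x g S p₀ η₀ κ b l) (U : Finset (Fin n)) : vdens U ≤ 1 := by
  unfold vdens
  have hn : (0 : ℝ) < n := by exact_mod_cast h.hn
  rw [div_le_one hn]
  have := Finset.card_le_univ U
  rw [Fintype.card_fin] at this
  exact_mod_cast this

lemma error_le (h : Tracking k E x g S p₀ η₀ κ b l) {U : Finset (Fin n)} (hU : p₀ ≤ vdens U) :
    η₀ / vdens U ^ (40 * k) ≤ 1 / 4 := by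
  refine le_trans ?_ h.hη
  have := h.hp₀
  have := h.hη₀
  gcongr

lemma le_error (h : Tracking k E x g S p₀ η₀ κ b l) {U : Finset (Fin n)} (hU : p₀ ≤ vdens U) :
    η₀ ≤ η₀ / vdens U ^ (40 * k) := by
  have h0 : 0 < vdens U := h.hp₀.trans_le hU
  rw [le_div_iff₀ (by positivity)]
  exact mul_le_of_le_one_right h.hη₀ (pow_le_one₀ h0.le (h.vdens_le_one U))

lemma total_weight (h : Tracking k E x g S p₀ η₀ κ b l) {U : Finset (Fin n)}
    (hU : p₀ ≤ vdens U) (hG : GoodState k E g S η₀ U) :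
    |(∑ e ∈ resEdges E U, x e) * (k / n) - vdens U ^ k| ≤ η₀ / vdens U ^ (40 * k) * vdens U ^ k := by
  obtain ⟨j, hS, hg, h1⟩ := h.jW
  have h2 := hG j
  have h0 : 0 < vdens U := h.hp₀.trans_le hU
  rw [h1] at h2
  have h3 : linkW E (g j) (S j) U = (∑ e ∈ resEdges E U, x e) * (k / n) := by
    unfold linkW resEdges
    rw [hS, Finset.sum_mul]
    simp [hg]
  unfold scaledW at h2
  rw [h3, hS, card_empty, Nat.sub_zero] at h2
  have hq : 0 < vdens U ^ k := pow_pos h0 k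
  calc |(∑ e ∈ resEdges E U, x e) * (k / n) - vdens U ^ k|
      = |(∑ e ∈ resEdges E U, x e) * (k / n) / vdens U ^ k - 1| * vdens U ^ k := by
        rw [← abs_of_pos hq, ← abs_mul, abs_of_pos hq]; congr 1; field_simp
    _ ≤ _ := mul_le_mul_of_nonneg_right h2 hq.le

lemma total_pos (h : Tracking k E x g S p₀ η₀ κ b l) {U : Finset (Fin n)}
    (hU : p₀ ≤ vdens U) (hG : GoodState k E g S η₀ U) : 0 < ∑ e ∈ resEdges E U, x e := by
  have h1 := abs_le.mp (h.total_weight hU hG)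
  have h0 : 0 < vdens U := h.hp₀.trans_le hU
  have hq : 0 < vdens U ^ k := pow_pos h0 k
  have h2 := h.error_le hU
  have hkn : (0 : ℝ) < k / n := by
    have : (0 : ℝ) < n := by exact_mod_cast h.hn
    have : (0 : ℝ) < k := by exact_mod_cast h.hk
    positivity
  by_contra hc
  push Not at hc
  have : η₀ / vdens U ^ (40 * k) * vdens U ^ k ≤ 1 / 4 * vdens U ^ k :=
    mul_le_mul_of_nonneg_right h2 hq.le
  nlinarith [h1.1]

lemma degree (h : Tracking k E x g S p₀ η₀ κ b l) {U : Finset (Fin n)}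
    (hU : p₀ ≤ vdens U) (hG : GoodState k E g S η₀ U) {u : Fin n} (hu : u ∈ U) :
    |∑ e ∈ (resEdges E U).filter (fun e => u ∈ e), x e - vdens U ^ (k - 1)|
      ≤ η₀ / vdens U ^ (40 * k) * vdens U ^ (k - 1) := by
  obtain ⟨j, hS, hg, h1⟩ := h.jv u
  have h2 := hG j
  have h0 : 0 < vdens U := h.hp₀.trans_le hU
  rw [h1] at h2
  have h3 : linkW E (g j) (S j) U = ∑ e ∈ (resEdges E U).filter (fun e => u ∈ e), x e := by
    unfold linkW resEdges
    rw [hS, hg, Finset.filter_filter]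
    refine Finset.sum_congr (Finset.filter_congr fun e _ => ?_) fun _ _ => rfl
    have : e \ {u} ⊆ U ↔ e ⊆ U := by
      refine ⟨fun h v hv => ?_, fun h => Finset.sdiff_subset.trans h⟩
      by_cases hvu : v = u
      · exact hvu ▸ hu
      · exact h (mem_sdiff.mpr ⟨hv, by simpa using hvu⟩)
    rw [Finset.singleton_subset_iff, this, and_comm]
  unfold scaledW at h2
  rw [h3, hS, card_singleton] at h2
  have hq : 0 < vdens U ^ (k - 1) := pow_pos h0 _
  calc |∑ e ∈ (resEdges E U).filter (fun e => u ∈ e), x e - vdens U ^ (k - 1)|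
      = |(∑ e ∈ (resEdges E U).filter (fun e => u ∈ e), x e) / vdens U ^ (k - 1) - 1|
          * vdens U ^ (k - 1) := by
        rw [← abs_of_pos hq, ← abs_mul, abs_of_pos hq]; congr 1; field_simp
    _ ≤ _ := mul_le_mul_of_nonneg_right h2 hq.le

/-- Each summand of the potential is a supermartingale in good states. -/
lemma potTerm_step (h : Tracking k E x g S p₀ η₀ κ b l) {U : Finset (Fin n)}
    (hU : p₀ ≤ vdens U) (hG : GoodState k E g S η₀ U) (j : J) {σ : ℝ} (hσ : |σ| = 1) :
    ∑ e ∈ resEdges E U, x e / (∑ f ∈ resEdges E U, x f) *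
      potTerm k E (g j) (S j) η₀ l σ (U \ e) ≤ potTerm k E (g j) (S j) η₀ l σ U := by
  have hn : (0 : ℝ) < n := by exact_mod_cast h.hn
  have hk : (1 : ℝ) ≤ k := by exact_mod_cast h.hk
  have hη₀ := h.hη₀
  have hp₀ := h.hp₀
  have hp : 0 < vdens U := hp₀.trans_le hU
  have hp1 := h.vdens_le_one U
  have hW := h.total_pos hU hG
  have hηle := h.error_le hU
  have hηge := h.le_error hU
  have hGj := hG j
  have htot := h.gtot j
  have hTW := h.total_weight hU hG
  have hdeg := fun u hu => h.degree hU hG (u := u) hu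
  set W := ∑ f ∈ resEdges E U, x f with hWdef
  set r := k - (S j).card with hr
  have hrk : r ≤ k := Nat.sub_le _ _
  set p := vdens U with hpdef
  set t := (k / n : ℝ) / p with ht
  set η := η₀ / p ^ (40 * k) with hηdef
  have ht0 : 0 < t := by positivity
  have htt : t ≤ (k / n : ℝ) / p₀ := by simp only [ht]; gcongr
  have hkt : k * t ≤ η₀ := le_trans (by gcongr) h.hδ
  have hAt : ((40 * k : ℕ) : ℝ) * t ≤ 1 / 2 := le_trans (by gcongr) h.hδA
  have hη0 : 0 ≤ η := hη₀.trans hηge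
  have hkt2 : k * t ≤ 1 / 2 := by linarith
  have ht1 : t ≤ 1 := by nlinarith
  have hsub : ∀ e ∈ resEdges E U, e ∈ E ∧ e ⊆ U := fun e he => mem_filter.mp he
  have hdens : ∀ e ∈ resEdges E U, vdens (U \ e) = p * (1 - t) := by
    intro e he
    obtain ⟨heE, heU⟩ := hsub e he
    have h1 : ((U \ e).card : ℝ) = U.card - k := by
      rw [Finset.card_sdiff_of_subset heU, Nat.cast_sub (Finset.card_le_card heU), h.unif e heE]
    have h2 : p * (1 - t) = p - k / n := by rw [ht]; field_simp
    rw [h2, hpdef]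
    unfold vdens
    rw [h1]; ring
  set X := linkW E (g j) (S j) U with hX
  have hX0 : 0 ≤ X := h.linkW_nonneg j U
  have hZdef : scaledW k E (g j) (S j) U = X / p ^ r := rfl
  have hZ2 : X / p ^ r ≤ 2 := by
    rw [← hZdef]; linarith [(abs_le.mp hGj).2]
  set q : Finset (Fin n) → ℝ := fun e => x e / W with hq
  have hq0 : ∀ e ∈ resEdges E U, 0 ≤ q e := fun e he =>
    div_nonneg (h.xpos e (hsub e he).1).le hW.le
  have hq1 : ∑ e ∈ resEdges E U, q e = 1 := by
    simp only [hq]; rw [← Finset.sum_div, ← hWdef, div_self hW.ne']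
  set Z' : Finset (Fin n) → ℝ := fun e => (X - linkLoss E (g j) (S j) U e) / (p * (1 - t)) ^ r
    with hZ'
  -- the hitting probability of a link set
  have hhit : ∀ f ∈ E, S j ⊆ f → f \ S j ⊆ U →
      |∑ e ∈ (resEdges E U).filter (fun e => ¬ Disjoint e (f \ S j)), q e - r * t|
        ≤ 4 * k * η * t := by
    intro f hf hSf hfU
    have hcard : (f \ S j).card = r := by
      rw [Finset.card_sdiff_of_subset hSf, h.unif f hf]
    simp only [hq]
    rw [← Finset.sum_div]
    refine hit_rate h.hk hrk (resEdges E U) x (fun e he => (h.xpos e (hsub e he).1).le) _ hcard hp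
      (δ := k / n) (κ := κ) (by positivity) hη0 hηle (fun u hu => hdeg u (hfU hu)) hTW ?_ h.hκ0 ?_
    · intro u v huv
      refine le_trans (Finset.sum_le_sum_of_subset_of_nonneg ?_ ?_) (h.codeg u v huv)
      · exact Finset.filter_subset_filter _ (Finset.filter_subset _ _)
      · exact fun e he _ => (h.xpos e (mem_filter.mp he).1).le
    · refine h.hκ.trans (mul_le_mul hηge ?_ (by positivity) hη0)
      calc p₀ ^ k ≤ p ^ k := by gcongr
        _ ≤ p ^ (k - 1) := pow_le_pow_of_le_one hp.le hp1 (Nat.sub_le _ _)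
  have hloss := expected_loss E (resEdges E U) (g j) q (h.gnn j) (S j) U hhit
  rw [← hX] at hloss
  set m := ∑ e ∈ resEdges E U, q e * linkLoss E (g j) (S j) U e with hm
  have hdrift := drift_bound hrk hp ht0.le hkt2 (hkt.trans hηge) hX0 ht1 hZ2 hloss
  have hEZ : ∑ e ∈ resEdges E U, q e * (Z' e - X / p ^ r)
      = (X - m) / (p * (1 - t)) ^ r - X / p ^ r := by
    have : ∀ e ∈ resEdges E U, q e * (Z' e - X / p ^ r)
        = q e * (X / (p * (1 - t)) ^ r - X / p ^ r)
          - q e * linkLoss E (g j) (S j) U e / (p * (1 - t)) ^ r := by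
      intro e _; simp only [hZ']; ring
    have hmd : ∑ e ∈ resEdges E U, q e * linkLoss E (g j) (S j) U e / (p * (1 - t)) ^ r
        = m / (p * (1 - t)) ^ r := by rw [hm, Finset.sum_div]
    rw [Finset.sum_congr rfl this, Finset.sum_sub_distrib, ← Finset.sum_mul, hq1, hmd]
    ring
  obtain ⟨gr1, gr2⟩ := error_growth (A := 40 * k) hp ht0.le ht1 hAt hη₀
  rw [← hηdef] at gr1 gr2
  set η' := η₀ / (p * (1 - t)) ^ (40 * k) with hη'
  push_cast at gr1 gr2
  have hexp : ∑ e ∈ resEdges E U,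
      q e * Real.exp (l * (σ * (Z' e - X / p ^ r) - (η' - η))) ≤ 1 := by
    refine exp_moment_le_one (resEdges E U) q (fun e => σ * (Z' e - X / p ^ r) - (η' - η))
      (L := 84 * k * ((k / n : ℝ) / p₀) + 2 * k * b / p₀ ^ k)
      (a := 20 * k * η₀ * (k / n)) hq0 hq1 ?_ h.hl h.hl1 h.hl2 ?_
    · intro e he
      have hch := change_bound hrk hp₀ hU hp1 ht0.le hkt2 hX0 ht1 hZ2
        (linkLoss_bounds E (g j) (h.gnn j) (S j) U e (h.unif e (hsub e he).1) (h.gdeg j)).1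
        (linkLoss_bounds E (g j) (h.gnn j) (S j) U e (h.unif e (hsub e he).1) (h.gdeg j)).2
      have h1 : |σ * (Z' e - X / p ^ r)| ≤ 4 * k * t + 2 * k * b / p₀ ^ k := by
        rw [abs_mul, hσ, one_mul]; exact hch
      have h2 : |η' - η| ≤ 80 * k * t := by
        have : 0 ≤ 40 * k * t * η := by positivity
        have : k * t * η ≤ k * t * 1 := mul_le_mul_of_nonneg_left (by linarith) (by positivity)
        rw [abs_of_nonneg (by linarith)]
        linarith
      have h3 : 84 * k * t ≤ 84 * k * ((k / n : ℝ) / p₀) := by gcongr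
      exact (abs_sub _ _).trans (by linarith)
    · simp_rw [mul_sub]
      have h1 : ∀ e, q e * (σ * Z' e - σ * (X / p ^ r)) - (q e * η' - q e * η)
          = σ * (q e * (Z' e - X / p ^ r)) - q e * (η' - η) := fun e => by ring
      have h1' : ∑ e ∈ resEdges E U,
          (q e * (σ * Z' e) - q e * (σ * (X / p ^ r)) - (q e * η' - q e * η))
          = σ * ((X - m) / (p * (1 - t)) ^ r - X / p ^ r) - (η' - η) := by
        rw [← hEZ, Finset.mul_sum]
        calc _ = ∑ e ∈ resEdges E U, (σ * (q e * (Z' e - X / p ^ r)) - q e * (η' - η)) :=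
              Finset.sum_congr rfl fun e _ => by ring
          _ = _ := by rw [Finset.sum_sub_distrib, ← Finset.sum_mul, hq1, one_mul]
      rw [h1']
      have h2 : |σ * ((X - m) / (p * (1 - t)) ^ r - X / p ^ r)| ≤ 20 * k * η * t := by
        rw [abs_mul, hσ, one_mul]; exact hdrift
      have h3 : η₀ * (k / n) ≤ η * t := by
        have : (k / n : ℝ) ≤ t := by
          rw [ht, le_div_iff₀ hp]
          exact mul_le_of_le_one_right (by positivity) hp1
        exact mul_le_mul hηge this (by positivity) hη0
      have h4 : k * (η₀ * (k / n)) ≤ k * (η * t) := by gcongr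
      linarith [(abs_le.mp h2).2]
  have hfac : ∀ e ∈ resEdges E U, x e / W * potTerm k E (g j) (S j) η₀ l σ (U \ e)
      = potTerm k E (g j) (S j) η₀ l σ U *
        (q e * Real.exp (l * (σ * (Z' e - X / p ^ r) - (η' - η)))) := by
    intro e he
    have h1 : scaledW k E (g j) (S j) (U \ e) = Z' e := by
      unfold scaledW; rw [hdens e he, linkW_sdiff]
    unfold potTerm
    rw [h1, hdens e he, hZdef, mul_left_comm, ← Real.exp_add]
    simp only [hq]
    congr 2
    ring
  rw [Finset.sum_congr rfl hfac, ← Finset.mul_sum]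
  exact mul_le_of_le_one_right (Real.exp_pos _).le hexp

lemma pot_step [Fintype J] (h : Tracking k E x g S p₀ η₀ κ b l) {U : Finset (Fin n)}
    (hU : p₀ ≤ vdens U) (hG : GoodState k E g S η₀ U) :
    ∑ e ∈ resEdges E U, x e / (∑ f ∈ resEdges E U, x f) * pot k E g S η₀ l (U \ e)
      ≤ pot k E g S η₀ l U := by
  unfold pot
  simp_rw [Finset.mul_sum]
  rw [Finset.sum_comm]
  refine Finset.sum_le_sum fun j _ => ?_
  simp_rw [mul_add]
  rw [Finset.sum_add_distrib]
  exact add_le_add (h.potTerm_step hU hG j (by simp)) (h.potTerm_step hU hG j (by simp))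

end Tracking

/-! ### The law of the process -/

/-- The vertices of `U` not covered by the first `i` edges of the run `ω`. -/
def remV {n m : ℕ} (U : Finset (Fin n)) (ω : Fin m → Finset (Fin n)) (i : ℕ) : Finset (Fin n) :=
  U.filter (fun v => ∀ j : Fin m, (j : ℕ) < i → v ∉ ω j)

open scoped Classical in
/-- The probability of choosing `e` when the remaining vertex set is `U`; the process is padded
with `∅` once no edge is left. -/
noncomputable def stepP {n : ℕ} (E : Finset (Finset (Fin n))) (x : Finset (Fin n) → ℝ)
    (U e : Finset (Fin n)) : ℝ :=
  if (resEdges E U).Nonempty then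
    (if e ∈ resEdges E U then x e / ∑ f ∈ resEdges E U, x f else 0)
  else (if e = ∅ then 1 else 0)

/-- The probability of the run `ω` started from the vertex set `U`. -/
noncomputable def pathP {n m : ℕ} (E : Finset (Finset (Fin n))) (x : Finset (Fin n) → ℝ)
    (U : Finset (Fin n)) (ω : Fin m → Finset (Fin n)) : ℝ :=
  ∏ i : Fin m, stepP E x (remV U ω i) (ω i)

section Path

variable {n : ℕ} {E : Finset (Finset (Fin n))} {x : Finset (Fin n) → ℝ}

lemma remV_zero {m : ℕ} (U : Finset (Fin n)) (ω : Fin m → Finset (Fin n)) : remV U ω 0 = U := by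
  simp [remV]

lemma remV_subset {m : ℕ} (U : Finset (Fin n)) (ω : Fin m → Finset (Fin n)) (i : ℕ) :
    remV U ω i ⊆ U := Finset.filter_subset _ _

lemma remV_cons {m : ℕ} (U e : Finset (Fin n)) (ω : Fin m → Finset (Fin n)) (i : ℕ) :
    remV U (Fin.cons e ω : Fin (m + 1) → Finset (Fin n)) (i + 1) = remV (U \ e) ω i := by
  ext v
  simp only [remV, mem_filter, mem_sdiff, Fin.forall_fin_succ, Fin.cons_zero, Fin.cons_succ,
    Fin.val_zero, Fin.val_succ, Nat.add_lt_add_iff_right, Nat.succ_pos, true_implies]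
  tauto

lemma remV_succ {m : ℕ} (U : Finset (Fin n)) (ω : Fin m → Finset (Fin n)) (i : Fin m) :
    remV U ω (i + 1) = remV U ω i \ ω i := by
  ext v
  simp only [remV, mem_filter, mem_sdiff, Nat.lt_succ_iff_lt_or_eq]
  constructor
  · rintro ⟨h1, h2⟩
    exact ⟨⟨h1, fun j hj => h2 j (Or.inl hj)⟩, h2 i (Or.inr rfl)⟩
  · rintro ⟨⟨h1, h2⟩, h3⟩
    refine ⟨h1, fun j hj => ?_⟩
    rcases hj with hj | hj
    · exact h2 j hj
    · rwa [Fin.ext hj]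

lemma pathP_cons {m : ℕ} (U e : Finset (Fin n)) (ω : Fin m → Finset (Fin n)) :
    pathP E x U (Fin.cons e ω : Fin (m + 1) → Finset (Fin n))
      = stepP E x U e * pathP E x (U \ e) ω := by
  unfold pathP
  rw [Fin.prod_univ_succ]
  congr 1
  · simp [remV_zero]
  · refine Finset.prod_congr rfl fun i _ => ?_
    rw [Fin.val_succ, remV_cons, Fin.cons_succ]

lemma sum_pathP_mul {m : ℕ} (U : Finset (Fin n)) (F : (Fin (m + 1) → Finset (Fin n)) → ℝ) :
    ∑ ω, pathP E x U ω * F ω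
      = ∑ e, stepP E x U e * ∑ ω : Fin m → Finset (Fin n),
          pathP E x (U \ e) ω * F (Fin.cons e ω : Fin (m + 1) → Finset (Fin n)) := by
  rw [← (Fin.consEquiv (fun _ : Fin (m + 1) => Finset (Fin n))).sum_comp, Fintype.sum_prod_type]
  refine Finset.sum_congr rfl fun e _ => ?_
  rw [Finset.mul_sum]
  refine Finset.sum_congr rfl fun ω _ => ?_
  rw [← mul_assoc, ← pathP_cons]
  rfl

lemma stepP_nonneg (hx : ∀ e ∈ E, 0 < x e) (U e : Finset (Fin n)) : 0 ≤ stepP E x U e := by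
  unfold stepP
  have h : ∀ f ∈ resEdges E U, 0 ≤ x f := fun f hf => (hx f (mem_filter.mp hf).1).le
  split_ifs with h1 h2 h3
  · exact div_nonneg (h e h2) (Finset.sum_nonneg h)
  all_goals norm_num

lemma pathP_nonneg (hx : ∀ e ∈ E, 0 < x e) {m : ℕ} (U : Finset (Fin n))
    (ω : Fin m → Finset (Fin n)) : 0 ≤ pathP E x U ω :=
  Finset.prod_nonneg fun _ _ => stepP_nonneg hx _ _

lemma sum_stepP_mul {U : Finset (Fin n)} (hU : (resEdges E U).Nonempty)
    (F : Finset (Fin n) → ℝ) :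
    ∑ e, stepP E x U e * F e
      = ∑ e ∈ resEdges E U, x e / (∑ f ∈ resEdges E U, x f) * F e := by
  unfold stepP
  simp only [if_pos hU, ite_mul, zero_mul]
  rw [← Finset.sum_filter]
  refine Finset.sum_congr ?_ fun _ _ => rfl
  ext e; simp

lemma sum_stepP (hx : ∀ e ∈ E, 0 < x e) (U : Finset (Fin n)) : ∑ e, stepP E x U e = 1 := by
  by_cases hU : (resEdges E U).Nonempty
  · have h1 := sum_stepP_mul (x := x) hU (fun _ => 1)
    simp only [mul_one] at h1
    rw [h1, ← Finset.sum_div, div_self]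
    exact (Finset.sum_pos (fun f hf => hx f (mem_filter.mp hf).1) hU).ne'
  · unfold stepP
    simp [if_neg hU]

lemma sum_pathP (hx : ∀ e ∈ E, 0 < x e) {m : ℕ} (U : Finset (Fin n)) :
    ∑ ω : Fin m → Finset (Fin n), pathP E x U ω = 1 := by
  induction m generalizing U with
  | zero => simp [pathP]
  | succ m ih =>
    have := sum_pathP_mul (E := E) (x := x) (m := m) U (fun _ => 1)
    simp only [mul_one] at this
    rw [this]
    simp [ih, sum_stepP hx U]

end Path

open scoped Classical in
/-- The maximal inequality: the probability of ever visiting a bad state of density at least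
`p₀` is at most the initial value of the potential. -/
lemma Tracking.bad_prob {n k : ℕ} {E : Finset (Finset (Fin n))} {x : Finset (Fin n) → ℝ}
    {J : Type} [Fintype J] {g : J → Finset (Fin n) → ℝ} {S : J → Finset (Fin n)}
    {p₀ η₀ κ b l : ℝ} (h : Tracking k E x g S p₀ η₀ κ b l) (m : ℕ) (U : Finset (Fin n)) :
    ∑ ω : Fin m → Finset (Fin n), pathP E x U ω *
      (if ∃ i ≤ m, p₀ ≤ vdens (remV U ω i) ∧ ¬ GoodState k E g S η₀ (remV U ω i) then 1 else 0)
      ≤ pot k E g S η₀ l U := by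
  have htriv : ∀ (m : ℕ) (U : Finset (Fin n)), ¬ GoodState k E g S η₀ U →
      ∑ ω : Fin m → Finset (Fin n), pathP E x U ω *
        (if ∃ i ≤ m, p₀ ≤ vdens (remV U ω i) ∧ ¬ GoodState k E g S η₀ (remV U ω i) then 1 else 0)
        ≤ pot k E g S η₀ l U := by
    intro m U hbad
    refine le_trans ?_ ((sum_pathP h.xpos (m := m) U).le.trans
      (one_le_pot k E g S η₀ l h.hl U hbad))
    refine Finset.sum_le_sum fun ω _ => ?_
    have := pathP_nonneg h.xpos U ω
    split_ifs <;> simp [this]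
  induction m generalizing U with
  | zero =>
    by_cases hbad : p₀ ≤ vdens U ∧ ¬ GoodState k E g S η₀ U
    · exact htriv 0 U hbad.2
    refine le_trans (le_of_eq ?_) (pot_nonneg k E g S η₀ l U)
    refine Finset.sum_eq_zero fun ω _ => ?_
    rw [if_neg, mul_zero]
    rintro ⟨i, hi, hb⟩
    rw [Nat.le_zero.mp hi, remV_zero] at hb
    exact hbad hb
  | succ m ih =>
    by_cases hU : p₀ ≤ vdens U
    · by_cases hG : GoodState k E g S η₀ U
      swap
      · exact htriv (m + 1) U hG
      have hne : (resEdges E U).Nonempty :=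
        Finset.nonempty_of_sum_ne_zero (h.total_pos hU hG).ne'
      rw [sum_pathP_mul, sum_stepP_mul hne]
      refine le_trans (Finset.sum_le_sum fun e he => ?_) (h.pot_step hU hG)
      refine mul_le_mul_of_nonneg_left ?_ (div_nonneg (h.xpos e (mem_filter.mp he).1).le
        (h.total_pos hU hG).le)
      refine le_trans (Finset.sum_le_sum fun ω _ => ?_) (ih (U \ e))
      refine mul_le_mul_of_nonneg_left ?_ (pathP_nonneg h.xpos _ _)
      split_ifs with h1 h2
      · exact le_rfl
      · exfalso
        obtain ⟨i, hi, hb⟩ := h1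
        rcases i with _ | i
        · rw [remV_zero] at hb; exact hb.2 hG
        · rw [remV_cons] at hb
          exact h2 ⟨i, by omega, hb⟩
      · norm_num
      · exact le_rfl
    · refine le_trans (le_of_eq ?_) (pot_nonneg k E g S η₀ l U)
      refine Finset.sum_eq_zero fun ω _ => ?_
      rw [if_neg, mul_zero]
      rintro ⟨i, -, hb, -⟩
      refine hU (hb.trans ?_)
      unfold vdens
      have := Finset.card_le_card (remV_subset U ω i)
      gcongr

/-! ### Comparison with the greedy process -/

section Greedy

variable {n k : ℕ} {E : Finset (Finset (Fin n))} {x : Finset (Fin n) → ℝ}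

lemma greedyGi_eq {m : ℕ} (ω : Fin m → Finset (Fin n)) (i : ℕ) :
    greedyGi E ω i = resEdges E (remV univ ω i) := by
  ext e
  simp only [greedyGi, resEdges, remV, mem_filter, Finset.subset_iff, mem_univ, true_and,
    Finset.disjoint_left]
  refine and_congr_right fun _ => ?_
  exact ⟨fun h v hv j hj => h j hj hv, fun h j hj v hv => h hv j hj⟩

lemma greedyAvail_eq (hx : ∀ e ∈ E, 0 < x e) {m : ℕ} (ω : Fin m → Finset (Fin n)) (i : ℕ) :
    greedyAvail E x ω i = resEdges E (remV univ ω i) := by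
  rw [greedyAvail, greedyGi_eq, Finset.filter_true_of_mem]
  exact fun e he => hx e (mem_filter.mp he).1

lemma resEdges_anti {m : ℕ} (ω : Fin m → Finset (Fin n)) {i j : ℕ} (hij : i ≤ j) :
    resEdges E (remV univ ω j) ⊆ resEdges E (remV univ ω i) := by
  intro e he
  obtain ⟨h1, h2⟩ := mem_filter.mp he
  refine mem_filter.mpr ⟨h1, h2.trans fun v hv => ?_⟩
  simp only [remV, mem_filter, mem_univ, true_and] at hv ⊢
  exact fun l hl => hv l (hl.trans_le hij)

lemma stepP_ne_zero {U e : Finset (Fin n)} (h : stepP E x U e ≠ 0) :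
    ((resEdges E U).Nonempty → e ∈ resEdges E U) ∧ (resEdges E U = ∅ → e = ∅) := by
  unfold stepP at h
  constructor
  · intro h1
    rw [if_pos h1] at h
    by_contra h2
    exact h (if_neg h2)
  · intro h1
    rw [if_neg (by simp [h1])] at h
    by_contra h2
    exact h (if_neg h2)

/-- As long as edges remain, each step of a possible run removes `k` vertices. -/
lemma card_remV (hE : ∀ e ∈ E, e.card = k) {m : ℕ} {ω : Fin m → Finset (Fin n)}
    (hω : pathP E x univ ω ≠ 0) (i : ℕ) (hi : i ≤ m)
    (hne : ∀ j < i, (resEdges E (remV univ ω j)).Nonempty) :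
    (remV univ ω i).card + i * k = n := by
  induction i with
  | zero => simp [remV_zero]
  | succ i ih =>
    have h1 := ih (by omega) fun j hj => hne j (by omega)
    have h2 : stepP E x (remV univ ω i) (ω ⟨i, hi⟩) ≠ 0 :=
      (Finset.prod_ne_zero_iff.mp hω) ⟨i, hi⟩ (mem_univ _)
    obtain ⟨h3, h4⟩ := mem_filter.mp ((stepP_ne_zero h2).1 (hne i (by omega)))
    have h5 := remV_succ univ ω ⟨i, hi⟩
    simp only at h5
    have h6 := Finset.card_le_card h4
    rw [h5, Finset.card_sdiff_of_subset h4]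
    rw [hE _ h3] at h6 ⊢
    rw [Nat.succ_mul]
    omega

/-- A possible run exhausts the edges: after `n / k` steps fewer than `k` vertices remain. -/
lemma exists_resEdges_empty (hk : 0 < k) (hE : ∀ e ∈ E, e.card = k)
    {ω : Fin (n / k) → Finset (Fin n)} (hω : pathP E x univ ω ≠ 0) :
    ∃ i, resEdges E (remV univ ω i) = ∅ := by
  by_contra hc
  push Not at hc
  have h1 := card_remV hE hω (n / k) le_rfl fun j _ => hc j
  obtain ⟨e, he⟩ := hc (n / k)
  obtain ⟨h2, h3⟩ := mem_filter.mp he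
  have h4 := Finset.card_le_card h3
  rw [hE e h2] at h4
  have h5 := Nat.div_add_mod n k
  have h6 := Nat.mod_lt n hk
  rw [Nat.mul_comm] at h5
  omega

lemma lt_greedyM_iff (hk : 0 < k) (hE : ∀ e ∈ E, e.card = k) (hx : ∀ e ∈ E, 0 < x e)
    {ω : Fin (n / k) → Finset (Fin n)} (hω : pathP E x univ ω ≠ 0) (i : ℕ) :
    i < greedyM E x ω ↔ (resEdges E (remV univ ω i)).Nonempty := by
  have hne : {i : ℕ | greedyAvail E x ω i = ∅}.Nonempty := by
    obtain ⟨i, hi⟩ := exists_resEdges_empty hk hE hω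
    exact ⟨i, (greedyAvail_eq hx ω i).trans hi⟩
  constructor
  · intro h
    have h1 := Nat.notMem_of_lt_sInf h
    rw [Set.mem_ofPred_eq, greedyAvail_eq hx] at h1
    exact Finset.nonempty_iff_ne_empty.mpr h1
  · intro h
    by_contra hc
    push Not at hc
    have h1 : greedyAvail E x ω (greedyM E x ω) = ∅ := Nat.sInf_mem hne
    rw [greedyAvail_eq hx] at h1
    have h2 := resEdges_anti (E := E) ω hc
    rw [h1, Finset.subset_empty] at h2
    rw [h2] at h
    exact Finset.not_nonempty_empty h

/-- Runs of positive probability have the same probability under both descriptions. -/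
lemma greedyProb_eq (hk : 0 < k) (hE : ∀ e ∈ E, e.card = k) (hx : ∀ e ∈ E, 0 < x e)
    {ω : Fin (n / k) → Finset (Fin n)} (hω : pathP E x univ ω ≠ 0) :
    greedyProb E x ω = pathP E x univ ω := by
  have hstep : ∀ i : Fin (n / k), stepP E x (remV univ ω i) (ω i) ≠ 0 := fun i =>
    (Finset.prod_ne_zero_iff.mp hω) i (mem_univ _)
  have hM := lt_greedyM_iff hk hE hx hω
  have hvalid : greedyValidRun E x ω := by
    intro i
    constructor
    · intro hi
      rw [greedyAvail_eq hx]
      exact (stepP_ne_zero (hstep i)).1 ((hM i).mp hi)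
    · intro hi
      refine (stepP_ne_zero (hstep i)).2 (Finset.not_nonempty_iff_eq_empty.mp fun hc => ?_)
      exact absurd ((hM i).mpr hc) (by omega)
  unfold greedyProb pathP
  rw [if_pos hvalid]
  refine Finset.prod_congr rfl fun i _ => ?_
  unfold stepP
  by_cases hi : (i : ℕ) < greedyM E x ω
  · rw [if_pos hi, if_pos ((hM i).mp hi), greedyAvail_eq hx,
      if_pos ((stepP_ne_zero (hstep i)).1 ((hM i).mp hi))]
  · have h1 : ¬ (resEdges E (remV univ ω i)).Nonempty := fun hc => hi ((hM i).mpr hc)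
    rw [if_neg hi, if_neg h1,
      if_pos ((stepP_ne_zero (hstep i)).2 (Finset.not_nonempty_iff_eq_empty.mp h1))]

lemma greedyProb_nonneg {m : ℕ} (ω : Fin m → Finset (Fin n)) :
    0 ≤ greedyProb E x ω := by
  unfold greedyProb
  split_ifs with h
  · refine Finset.prod_nonneg fun i _ => ?_
    split_ifs with hi
    · have h1 : ∀ e ∈ greedyAvail E x ω i, 0 ≤ x e := fun e he => (mem_filter.mp he).2.le
      exact div_nonneg (h1 _ ((h i).1 hi)) (Finset.sum_nonneg h1)
    · exact zero_le_one
  · exact le_rfl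

/-- A possible run without bad states has, as long as the density is at least `p₀`, the expected
number of remaining vertices and at least one remaining edge. -/
lemma Tracking.run_good {J : Type} {g : J → Finset (Fin n) → ℝ} {S : J → Finset (Fin n)}
    {p₀ η₀ κ b l : ℝ} (h : Tracking k E x g S p₀ η₀ κ b l)
    {ω : Fin (n / k) → Finset (Fin n)} (hω : pathP E x univ ω ≠ 0)
    (hgood : ∀ i ≤ n / k, p₀ ≤ vdens (remV univ ω i) → GoodState k E g S η₀ (remV univ ω i))
    (i : ℕ) (hi : (i : ℝ) ≤ (1 - p₀) * ((n : ℝ) / k)) :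
    vdens (remV univ ω i) = ((n : ℝ) / k - i) / ((n : ℝ) / k) ∧ p₀ ≤ vdens (remV univ ω i) ∧
      GoodState k E g S η₀ (remV univ ω i) ∧ i < greedyM E x ω := by
  have hn : (0 : ℝ) < n := by exact_mod_cast h.hn
  have hk : (0 : ℝ) < k := by exact_mod_cast h.hk
  induction i using Nat.strong_induction_on with
  | _ i ih =>
    have hne : ∀ j < i, (resEdges E (remV univ ω j)).Nonempty := by
      intro j hj
      have hj' : (j : ℝ) ≤ i := by exact_mod_cast hj.le
      exact (lt_greedyM_iff h.hk h.unif h.xpos hω j).mp (ih j hj (hj'.trans hi)).2.2.2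
    have him : i ≤ n / k := by
      rw [Nat.le_div_iff_mul_le h.hk]
      have : (i : ℝ) ≤ n / k := hi.trans (mul_le_of_le_one_left (by positivity)
        (by linarith [h.hp₀]))
      rw [le_div_iff₀ hk] at this
      exact_mod_cast this
    have hcard := card_remV h.unif hω i him hne
    have hcard' : ((remV univ ω i).card : ℝ) = n - i * k := by
      rw [eq_sub_iff_add_eq]; exact_mod_cast hcard
    have hd : vdens (remV univ ω i) = ((n : ℝ) / k - i) / ((n : ℝ) / k) := by
      unfold vdens
      rw [hcard']
      field_simp
    have hp : p₀ ≤ vdens (remV univ ω i) := by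
      rw [hd, le_div_iff₀ (by positivity)]
      linarith
    have hG := hgood i him hp
    refine ⟨hd, hp, hG, ?_⟩
    rw [lt_greedyM_iff h.hk h.unif h.xpos hω]
    exact Finset.nonempty_of_sum_ne_zero (h.total_pos hp hG).ne'

end Greedy

/-! ### The tracked quantities -/

/-- The hypotheses of the theorem, for an arbitrary well-distribution parameter `D ≤ √n`. -/
structure WellDist {n : ℕ} (k : ℕ) (E : Finset (Finset (Fin n))) (x : Finset (Fin n) → ℝ)
    (D : ℝ) : Prop where
  hk : 2 ≤ k
  hn : 2 ≤ n
  unif : ∀ e ∈ E, e.card = k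
  fpm : IsFPM E x
  hD1 : 1 ≤ D
  hD2 : D ^ 2 ≤ n
  lower : ∀ e ∈ E, 1 / (D * (n : ℝ) ^ (k - 1)) ≤ x e
  upper : ∀ e ∈ E, x e ≤ D / (n : ℝ) ^ (k - 1)

lemma card_edges_superset_le {n k : ℕ} {E : Finset (Finset (Fin n))} (hE : ∀ e ∈ E, e.card = k)
    (T : Finset (Fin n)) : (E.filter (fun e => T ⊆ e)).card ≤ n ^ (k - T.card) := by
  have h1 : (E.filter (fun e => T ⊆ e)).card
      ≤ (Finset.powersetCard (k - T.card) (univ : Finset (Fin n))).card := by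
    refine Finset.card_le_card_of_injOn (fun e => e \ T) ?_ ?_
    · intro e he
      obtain ⟨h1, h2⟩ := mem_filter.mp (Finset.mem_coe.mp he)
      rw [Finset.mem_coe, Finset.mem_powersetCard]
      exact ⟨subset_univ _, by rw [Finset.card_sdiff_of_subset h2, hE e h1]⟩
    · intro e he f hf hef
      have h2 := (mem_filter.mp (Finset.mem_coe.mp he)).2
      have h3 := (mem_filter.mp (Finset.mem_coe.mp hf)).2
      simp only at hef
      rw [← Finset.sdiff_union_of_subset h2, hef, Finset.sdiff_union_of_subset h3]
  rw [Finset.card_powersetCard, Finset.card_univ, Fintype.card_fin] at h1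
  exact h1.trans (Nat.choose_le_pow n _)

namespace WellDist

variable {n k : ℕ} {E : Finset (Finset (Fin n))} {x : Finset (Fin n) → ℝ} {D : ℝ}

lemma n_pos (h : WellDist k E x D) : (0 : ℝ) < n := by
  have := h.hn
  exact_mod_cast (by omega : 0 < n)

lemma k_pos (h : WellDist k E x D) : (0 : ℝ) < k := by
  have := h.hk
  exact_mod_cast (by omega : 0 < k)

lemma D_pos (h : WellDist k E x D) : 0 < D := zero_lt_one.trans_le h.hD1

lemma x_pos (h : WellDist k E x D) {e : Finset (Fin n)} (he : e ∈ E) : 0 < x e := by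
  have := h.n_pos
  have := h.D_pos
  exact lt_of_lt_of_le (by positivity) (h.lower e he)

/-- Double counting: the total weight is `n / k`. -/
lemma sum_x (h : WellDist k E x D) : ∑ e ∈ E, x e = n / k := by
  have h1 : ∑ v : Fin n, ∑ e ∈ E.filter (fun e => v ∈ e), x e = n := by
    simp [h.fpm.2.2]
  rw [eq_div_iff h.k_pos.ne', ← h1, Finset.sum_mul]
  simp_rw [Finset.sum_filter]
  rw [Finset.sum_comm]
  refine Finset.sum_congr rfl fun e he => ?_
  simp [h.unif e he, mul_comm]

lemma sum_x_superset_le (h : WellDist k E x D) (T : Finset (Fin n)) :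
    ∑ e ∈ E.filter (fun e => T ⊆ e), x e
      ≤ (n : ℝ) ^ (k - T.card) * (D / (n : ℝ) ^ (k - 1)) := by
  have h0 : 0 ≤ D / (n : ℝ) ^ (k - 1) := by
    have := h.n_pos; have := h.D_pos; positivity
  calc _ ≤ ∑ e ∈ E.filter (fun e => T ⊆ e), D / (n : ℝ) ^ (k - 1) :=
        Finset.sum_le_sum fun e he => h.upper e (mem_filter.mp he).1
    _ = ((E.filter (fun e => T ⊆ e)).card : ℝ) * (D / (n : ℝ) ^ (k - 1)) := by
        rw [Finset.sum_const, nsmul_eq_mul]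
    _ ≤ _ := by
        refine mul_le_mul_of_nonneg_right ?_ h0
        exact_mod_cast card_edges_superset_le h.unif T

lemma codeg_le (h : WellDist k E x D) {u v : Fin n} (huv : u ≠ v) :
    ∑ e ∈ E.filter (fun e => u ∈ e ∧ v ∈ e), x e ≤ D / n := by
  have h1 := h.sum_x_superset_le {u, v}
  rw [Finset.card_pair huv] at h1
  have h2 : E.filter (fun e => ({u, v} : Finset (Fin n)) ⊆ e)
      = E.filter (fun e => u ∈ e ∧ v ∈ e) := by
    refine Finset.filter_congr fun e _ => ?_
    simp [Finset.insert_subset_iff]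
  rw [h2] at h1
  refine h1.trans (le_of_eq ?_)
  have hn := h.n_pos
  obtain ⟨j, rfl⟩ := Nat.exists_eq_add_of_le h.hk
  rw [show 2 + j - 2 = j by omega, show 2 + j - 1 = j + 1 by omega, pow_succ]
  field_simp

/-- All weights are `n ^ (1 - k)` up to a factor of `√n`, so the logarithms of the inverse
weights agree up to a factor of `3`. -/
lemma exists_log_bounds (h : WellDist k E x D) :
    ∃ lo hi : ℝ, 0 < lo ∧ hi ≤ 3 * lo ∧
      ∀ e ∈ E, lo ≤ Real.log (1 / x e) ∧ Real.log (1 / x e) ≤ hi := by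
  have hn := h.n_pos
  have hD := h.D_pos
  have hlogn : 0 < Real.log n := Real.log_pos (by exact_mod_cast h.hn)
  have hlogD : 2 * Real.log D ≤ Real.log n := by
    have := Real.log_le_log (by positivity) h.hD2
    rwa [Real.log_pow] at this
  have hk1 : (1 : ℝ) ≤ ((k - 1 : ℕ) : ℝ) := by
    have := h.hk
    exact_mod_cast (by omega : 1 ≤ k - 1)
  have hmul : Real.log n ≤ ((k - 1 : ℕ) : ℝ) * Real.log n :=
    le_mul_of_one_le_left hlogn.le hk1
  refine ⟨((k - 1 : ℕ) : ℝ) * Real.log n - Real.log D,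
    ((k - 1 : ℕ) : ℝ) * Real.log n + Real.log D, by linarith, by linarith, fun e he => ?_⟩
  have h1 := Real.log_le_log (h.x_pos he) (h.upper e he)
  have h2 := Real.log_le_log (by positivity) (h.lower e he)
  rw [Real.log_div hD.ne' (by positivity), Real.log_pow] at h1
  rw [one_div, Real.log_inv, Real.log_mul hD.ne' (by positivity), Real.log_pow] at h2
  rw [one_div, Real.log_inv]
  constructor <;> linarith

lemma entropy_term_nonneg (h : WellDist k E x D) {e : Finset (Fin n)} (he : e ∈ E) :
    0 ≤ x e * Real.log (1 / x e) := by
  obtain ⟨lo, hi, h1, _, h2⟩ := h.exists_log_bounds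
  exact mul_nonneg (h.x_pos he).le (h1.le.trans (h2 e he).1)

lemma entropy_pos (h : WellDist k E x D) : 0 < fpmEntropy E x := by
  obtain ⟨lo, hi, h1, _, h2⟩ := h.exists_log_bounds
  have hn := h.n_pos
  have hk := h.k_pos
  refine lt_of_lt_of_le (by positivity : 0 < (n : ℝ) / k * lo) ?_
  rw [← h.sum_x, Finset.sum_mul]
  exact Finset.sum_le_sum fun e he => mul_le_mul_of_nonneg_left (h2 e he).1 (h.x_pos he).le

/-- Every vertex accounts for at most a `3 k / n` fraction of the entropy. -/
lemma entropy_vertex_le (h : WellDist k E x D) (u : Fin n) :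
    ∑ e ∈ E.filter (fun e => u ∈ e), x e * Real.log (1 / x e)
      ≤ 3 * k / n * fpmEntropy E x := by
  obtain ⟨lo, hi, h1, h3, h2⟩ := h.exists_log_bounds
  have hn := h.n_pos
  have hk := h.k_pos
  have h4 : (n : ℝ) / k * lo ≤ fpmEntropy E x := by
    rw [← h.sum_x, Finset.sum_mul]
    exact Finset.sum_le_sum fun e he => mul_le_mul_of_nonneg_left (h2 e he).1 (h.x_pos he).le
  calc _ ≤ ∑ e ∈ E.filter (fun e => u ∈ e), x e * hi :=
        Finset.sum_le_sum fun e he =>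
          mul_le_mul_of_nonneg_left (h2 e (mem_filter.mp he).1).2 (h.x_pos (mem_filter.mp he).1).le
    _ = hi := by rw [← Finset.sum_mul, h.fpm.2.2 u, one_mul]
    _ ≤ 3 * lo := h3
    _ = 3 * k / n * (n / k * lo) := by field_simp
    _ ≤ _ := mul_le_mul_of_nonneg_left h4 (by positivity)

end WellDist

/-- Indices of the tracked quantities: the total weight (`true`), the entropy (`false`), the
weighted degrees of the vertices, and the degrees of the sets of at most `k - 1` vertices. -/
abbrev TrackIdx (n k : ℕ) : Type :=
  Bool ⊕ (Fin n ⊕ {S : Finset (Fin n) // S.card ≤ k - 1})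

/-- The edge weights of the tracked quantities, normalised so that the initial value of each
quantity is at most `1`. -/
noncomputable def trackG {n : ℕ} (k : ℕ) (E : Finset (Finset (Fin n)))
    (x : Finset (Fin n) → ℝ) : TrackIdx n k → Finset (Fin n) → ℝ
  | .inl true => fun e => x e * (k / n)
  | .inl false => fun e => x e * Real.log (1 / x e) / fpmEntropy E x
  | .inr (.inl _) => x
  | .inr (.inr S) => fun _ => 1 / (n : ℝ) ^ (k - S.1.card)

/-- The vertex sets of the tracked quantities. -/
def trackS {n : ℕ} (k : ℕ) : TrackIdx n k → Finset (Fin n)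
  | .inl _ => ∅
  | .inr (.inl v) => {v}
  | .inr (.inr S) => S.1

lemma card_trackIdx_le (n k : ℕ) (hn : 1 ≤ n) :
    Fintype.card (TrackIdx n k) ≤ 2 + n + (k + 1) * n ^ k := by
  have h1 : Fintype.card {S : Finset (Fin n) // S.card ≤ k - 1} ≤ (k + 1) * n ^ k := by
    rw [Fintype.card_subtype]
    have h2 : univ.filter (fun S : Finset (Fin n) => S.card ≤ k - 1)
        ⊆ (range (k + 1)).biUnion fun i => Finset.powersetCard i (univ : Finset (Fin n)) := by
      intro S hS
      simp only [mem_filter, mem_univ, true_and] at hS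
      simp only [mem_biUnion, mem_range, mem_powersetCard]
      exact ⟨S.card, by omega, subset_univ _, rfl⟩
    refine (Finset.card_le_card h2).trans (Finset.card_biUnion_le.trans ?_)
    refine (Finset.sum_le_card_nsmul _ _ (n ^ k) fun i hi => ?_).trans (by simp)
    rw [Finset.card_powersetCard, Finset.card_univ, Fintype.card_fin]
    rw [mem_range] at hi
    exact (Nat.choose_le_pow n i).trans (Nat.pow_le_pow_right hn (by omega))
  simp only [TrackIdx, Fintype.card_sum, Fintype.card_bool, Fintype.card_fin]
  omega

lemma WellDist.tracking {n k : ℕ} {E : Finset (Finset (Fin n))} {x : Finset (Fin n) → ℝ}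
    {D p₀ η₀ l : ℝ} (h : WellDist k E x D)
    (hp₀ : 0 < p₀) (hη₀ : 0 ≤ η₀) (hη : η₀ / p₀ ^ (40 * k) ≤ 1 / 4)
    (hκ : k * (D / n) ≤ η₀ * p₀ ^ k) (hδ : k * ((k / n : ℝ) / p₀) ≤ η₀)
    (hδA : ((40 * k : ℕ) : ℝ) * ((k / n : ℝ) / p₀) ≤ 1 / 2) (hl : 0 ≤ l)
    (hl1 : l * (84 * k * ((k / n : ℝ) / p₀) + 2 * k * (3 * k * D / n) / p₀ ^ k) ≤ 1)
    (hl2 : l * (84 * k * ((k / n : ℝ) / p₀) + 2 * k * (3 * k * D / n) / p₀ ^ k) ^ 2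
      ≤ 20 * k * η₀ * (k / n)) :
    Tracking k E x (trackG k E x) (trackS k) p₀ η₀ (D / n) (3 * k * D / n) l := by
  have hn := h.n_pos
  have hk := h.k_pos
  have hD := h.D_pos
  have hk1 : (1 : ℝ) ≤ k := by
    have := h.hk
    exact_mod_cast (by omega : 1 ≤ k)
  have hH := h.entropy_pos
  have htot1 : linkW E (fun e => x e * (k / n)) ∅ univ = 1 := by
    simp only [linkW, Finset.empty_subset, Finset.subset_univ, and_self, Finset.filter_true]
    rw [← Finset.sum_mul, h.sum_x]
    field_simp
  have hv1 : ∀ v : Fin n, linkW E x {v} univ = 1 := by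
    intro v
    simp only [linkW, Finset.singleton_subset_iff, Finset.subset_univ, and_true]
    exact h.fpm.2.2 v
  have hb1 : 1 / (n : ℝ) ≤ 3 * k * D / n := by
    have := h.hD1
    gcongr
    nlinarith
  refine
    { hk := by have := h.hk; omega
      hn := by have := h.hn; omega
      unif := h.unif
      xpos := fun e he => h.x_pos he
      gnn := ?_
      gtot := ?_
      gdeg := ?_
      jW := ⟨.inl true, rfl, fun _ => rfl, htot1⟩
      jv := fun v => ⟨.inr (.inl v), rfl, rfl, hv1 v⟩
      codeg := fun u v huv => h.codeg_le huv
      hp₀ := hp₀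
      hη₀ := hη₀
      hη := hη
      hκ0 := by positivity
      hκ := hκ
      hδ := hδ
      hδA := hδA
      hl := hl
      hb := by positivity
      hl1 := hl1
      hl2 := hl2 }
  · rintro ((_ | _) | _ | S) e he
    · exact div_nonneg (h.entropy_term_nonneg he) hH.le
    · exact mul_nonneg (h.x_pos he).le (by positivity)
    · exact (h.x_pos he).le
    · exact (by positivity : (0 : ℝ) ≤ 1 / (n : ℝ) ^ (k - S.1.card))
  · rintro ((_ | _) | v | S)
    · simp only [linkW, trackG, trackS, Finset.empty_subset, Finset.subset_univ, and_self,
        Finset.filter_true]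
      rw [← Finset.sum_div]
      exact (div_self hH.ne').le
    · exact htot1.le
    · exact (hv1 v).le
    · simp only [linkW, trackG, trackS, Finset.subset_univ, and_true, Finset.sum_const,
        nsmul_eq_mul]
      rw [mul_one_div, div_le_one (by positivity)]
      exact_mod_cast card_edges_superset_le h.unif S.1
  · rintro ((_ | _) | v | S) u
    · simp only [trackG, trackS, Finset.empty_subset, true_and, Finset.sdiff_empty]
      rw [← Finset.sum_div, div_le_iff₀ hH]
      refine (h.entropy_vertex_le u).trans (mul_le_mul_of_nonneg_right ?_ hH.le)
      have := h.hD1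
      refine div_le_div_of_nonneg_right ?_ hn.le
      nlinarith
    · simp only [trackG, trackS, Finset.empty_subset, true_and, Finset.sdiff_empty]
      rw [← Finset.sum_mul, h.fpm.2.2 u, one_mul]
      have := h.hD1
      refine div_le_div_of_nonneg_right ?_ hn.le
      nlinarith
    · simp only [trackG, trackS]
      by_cases huv : u = v
      · rw [Finset.sum_eq_zero (fun e he => ?_)]
        · positivity
        · simp [huv] at he
      refine le_trans (Finset.sum_le_sum_of_subset_of_nonneg ?_ fun e he _ =>
        (h.x_pos (mem_filter.mp he).1).le) ((h.codeg_le huv).trans ?_)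
      · intro e he
        simp only [mem_filter, Finset.singleton_subset_iff, mem_sdiff] at he ⊢
        exact ⟨he.1, he.2.2.1, he.2.1⟩
      · gcongr
        nlinarith
    · change ∑ e ∈ E.filter (fun e => S.1 ⊆ e ∧ u ∈ e \ S.1), 1 / (n : ℝ) ^ (k - S.1.card) ≤ _
      rw [Finset.sum_const, nsmul_eq_mul]
      refine le_trans ?_ hb1
      by_cases hu : u ∈ S.1
      · rw [Finset.filter_false_of_mem (fun e _ => by simp [hu])]
        simp
      have h1 : (E.filter (fun e => S.1 ⊆ e ∧ u ∈ e \ S.1)).card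
          ≤ n ^ (k - (S.1.card + 1)) := by
        rw [← Finset.card_insert_of_notMem hu]
        refine le_trans (Finset.card_le_card fun e he => ?_)
          (card_edges_superset_le h.unif (insert u S.1))
        simp only [mem_filter, mem_sdiff, Finset.insert_subset_iff] at he ⊢
        exact ⟨he.1, he.2.2.1, he.2.1⟩
      have h2 : k - S.1.card = k - (S.1.card + 1) + 1 := by
        have := S.2
        have := h.hk
        omega
      have h3 : ((E.filter (fun e => S.1 ⊆ e ∧ u ∈ e \ S.1)).card : ℝ)
          ≤ (n : ℝ) ^ (k - (S.1.card + 1)) := by exact_mod_cast h1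
      rw [h2, pow_succ, mul_one_div, div_le_div_iff₀ (by positivity) hn, one_mul]
      exact mul_le_mul_of_nonneg_right h3 hn.le

/-! ### The final event -/

/-- The conjunction of the four conclusions for the run `ω`. -/
def GoodRun {n : ℕ} (k : ℕ) (E : Finset (Finset (Fin n))) (x : Finset (Fin n) → ℝ) (c : ℝ)
    (ω : Fin (n / k) → Finset (Fin n)) : Prop :=
  (1 - (n : ℝ) ^ (-c)) * ((n : ℝ) / k) ≤ (greedyM E x ω : ℝ) ∧
    ∀ i : ℕ, (i : ℝ) ≤ (1 - (n : ℝ) ^ (-c)) * ((n : ℝ) / k) →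
      (|(∑ e ∈ greedyGi E ω i, x e) -
          (((n : ℝ) / k - i) / ((n : ℝ) / k)) ^ k * ((n : ℝ) / k)| ≤
        (n : ℝ) ^ (-c) * ((((n : ℝ) / k - i) / ((n : ℝ) / k)) ^ k * ((n : ℝ) / k))) ∧
      (|(∑ e ∈ greedyGi E ω i, x e * Real.log (1 / x e)) -
          (((n : ℝ) / k - i) / ((n : ℝ) / k)) ^ k * fpmEntropy E x| ≤
        (n : ℝ) ^ (-c) * ((((n : ℝ) / k - i) / ((n : ℝ) / k)) ^ k * fpmEntropy E x)) ∧
      ∀ S : Finset (Fin n), S.card ≤ k - 1 → S ⊆ greedyVi ω i →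
        |((degS (greedyGi E ω i) S : ℝ)) -
            (((n : ℝ) / k - i) / ((n : ℝ) / k)) ^ (k - S.card) * (degS E S : ℝ)| ≤
          (n : ℝ) ^ ((k : ℝ) - (S.card : ℝ) - c)

lemma abs_sub_le_of_scaled {A B q ε : ℝ} (hq : 0 < q) (h : |A / q - B| ≤ ε) :
    |A - q * B| ≤ ε * q := by
  have h1 : A - q * B = (A / q - B) * q := by field_simp
  rw [h1, abs_mul, abs_of_pos hq]
  exact mul_le_mul_of_nonneg_right h hq.le

lemma WellDist.goodRun {n k : ℕ} {E : Finset (Finset (Fin n))} {x : Finset (Fin n) → ℝ}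
    {D p₀ η₀ l κ b c : ℝ} (h : WellDist k E x D)
    (T : Tracking k E x (trackG k E x) (trackS k) p₀ η₀ κ b l)
    (hp : p₀ = (n : ℝ) ^ (-c)) (hp1 : p₀ ≤ 1) (hηp : η₀ / p₀ ^ (40 * k) ≤ p₀)
    {ω : Fin (n / k) → Finset (Fin n)} (hω : pathP E x univ ω ≠ 0)
    (hgood : ∀ i ≤ n / k, p₀ ≤ vdens (remV univ ω i) →
      GoodState k E (trackG k E x) (trackS k) η₀ (remV univ ω i)) :
    GoodRun k E x c ω := by
  have hn := h.n_pos
  have hk := h.k_pos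
  have hH := h.entropy_pos
  have key := T.run_good hω hgood
  unfold GoodRun
  rw [← hp]
  constructor
  · have h0 : 0 ≤ (1 - p₀) * ((n : ℝ) / k) := mul_nonneg (by linarith) (by positivity)
    have h1 := (key _ (Nat.floor_le h0)).2.2.2
    have h2 := Nat.lt_floor_add_one ((1 - p₀) * ((n : ℝ) / k))
    have h3 : (⌊(1 - p₀) * ((n : ℝ) / k)⌋₊ : ℝ) + 1 ≤ greedyM E x ω := by exact_mod_cast h1
    linarith
  intro i hi
  obtain ⟨hd, hpd, hG, -⟩ := key i hi
  rw [← hd, greedyGi_eq]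
  set U := remV univ ω i with hU
  have hdpos : 0 < vdens U := T.hp₀.trans_le hpd
  have hηU : η₀ / vdens U ^ (40 * k) ≤ p₀ := by
    refine le_trans ?_ hηp
    have := T.hη₀
    have := T.hp₀
    gcongr
  refine ⟨?_, ?_, ?_⟩
  · have h1 := T.total_weight hpd hG
    have h2 : (∑ e ∈ resEdges E U, x e) - vdens U ^ k * ((n : ℝ) / k)
        = ((∑ e ∈ resEdges E U, x e) * (k / n) - vdens U ^ k) * (n / k) := by field_simp
    rw [h2, abs_mul, abs_of_pos (show (0 : ℝ) < n / k by positivity), ← mul_assoc]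
    refine mul_le_mul_of_nonneg_right (h1.trans ?_) (by positivity)
    exact mul_le_mul_of_nonneg_right hηU (by positivity)
  · have h1 : |linkW E (fun e => x e * Real.log (1 / x e) / fpmEntropy E x) ∅ U / vdens U ^ k
        - linkW E (fun e => x e * Real.log (1 / x e) / fpmEntropy E x) ∅ univ|
          ≤ η₀ / vdens U ^ (40 * k) := hG (.inl false)
    simp only [linkW, Finset.empty_subset, Finset.subset_univ, and_self, Finset.filter_true,
      Finset.sdiff_empty, true_and] at h1
    rw [← Finset.sum_div, ← Finset.sum_div] at h1
    change |(∑ e ∈ resEdges E U, x e * Real.log (1 / x e)) / fpmEntropy E x / vdens U ^ k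
      - fpmEntropy E x / fpmEntropy E x| ≤ _ at h1
    rw [div_self hH.ne'] at h1
    have h2 := abs_sub_le_of_scaled (by positivity) h1
    have h3 : (∑ e ∈ resEdges E U, x e * Real.log (1 / x e)) - vdens U ^ k * fpmEntropy E x
        = ((∑ e ∈ resEdges E U, x e * Real.log (1 / x e)) / fpmEntropy E x - vdens U ^ k * 1)
          * fpmEntropy E x := by field_simp
    rw [h3, abs_mul, abs_of_pos hH, ← mul_assoc]
    refine mul_le_mul_of_nonneg_right (h2.trans ?_) hH.le
    exact mul_le_mul_of_nonneg_right hηU (by positivity)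
  · intro S hS hSU
    have hSU' : S ⊆ U := hSU
    have h1 : |linkW E (fun _ => 1 / (n : ℝ) ^ (k - S.card)) S U / vdens U ^ (k - S.card)
        - linkW E (fun _ => 1 / (n : ℝ) ^ (k - S.card)) S univ|
          ≤ η₀ / vdens U ^ (40 * k) := hG (.inr (.inr ⟨S, hS⟩))
    have h2 : E.filter (fun e => S ⊆ e ∧ e \ S ⊆ U) = (resEdges E U).filter (fun e => S ⊆ e) := by
      ext e
      simp only [resEdges, mem_filter]
      constructor
      · rintro ⟨h1, h2, h3⟩
        refine ⟨⟨h1, ?_⟩, h2⟩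
        rw [← Finset.sdiff_union_of_subset h2]
        exact Finset.union_subset h3 hSU'
      · rintro ⟨⟨h1, h2⟩, h3⟩
        exact ⟨h1, h3, Finset.sdiff_subset.trans h2⟩
    have h3 : linkW E (fun _ => 1 / (n : ℝ) ^ (k - S.card)) S U
        = (degS (resEdges E U) S : ℝ) / (n : ℝ) ^ (k - S.card) := by
      unfold linkW degS
      rw [h2, Finset.sum_const, nsmul_eq_mul, mul_one_div]
    have h4 : linkW E (fun _ => 1 / (n : ℝ) ^ (k - S.card)) S univ
        = (degS E S : ℝ) / (n : ℝ) ^ (k - S.card) := by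
      unfold linkW degS
      simp only [Finset.subset_univ, and_true]
      rw [Finset.sum_const, nsmul_eq_mul, mul_one_div]
    rw [h3, h4] at h1
    have h5 := abs_sub_le_of_scaled (by positivity) h1
    have hN : (0 : ℝ) < (n : ℝ) ^ (k - S.card) := by positivity
    have h6 : (degS (resEdges E U) S : ℝ) - vdens U ^ (k - S.card) * (degS E S : ℝ)
        = ((degS (resEdges E U) S : ℝ) / (n : ℝ) ^ (k - S.card)
          - vdens U ^ (k - S.card) * ((degS E S : ℝ) / (n : ℝ) ^ (k - S.card)))
          * (n : ℝ) ^ (k - S.card) := by field_simp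
    have h7 : (n : ℝ) ^ ((k : ℝ) - (S.card : ℝ) - c) = p₀ * (n : ℝ) ^ (k - S.card) := by
      rw [hp, ← Real.rpow_natCast, ← Real.rpow_add hn, Nat.cast_sub (by omega)]
      congr 1
      ring
    rw [h6, h7, abs_mul, abs_of_pos hN]
    refine mul_le_mul_of_nonneg_right (h5.trans ?_) hN.le
    have h8 : vdens U ^ (k - S.card) ≤ 1 := pow_le_one₀ hdpos.le (T.vdens_le_one U)
    calc _ ≤ p₀ * 1 := mul_le_mul hηU h8 (by positivity) T.hp₀.le
      _ = p₀ := mul_one _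

open scoped Classical in
lemma WellDist.prob_goodRun {n k : ℕ} {E : Finset (Finset (Fin n))} {x : Finset (Fin n) → ℝ}
    {D p₀ η₀ l κ b c : ℝ} (h : WellDist k E x D)
    (T : Tracking k E x (trackG k E x) (trackS k) p₀ η₀ κ b l)
    (hp : p₀ = (n : ℝ) ^ (-c)) (hp1 : p₀ ≤ 1) (hηp : η₀ / p₀ ^ (40 * k) ≤ p₀) :
    1 - Fintype.card (TrackIdx n k) * (2 * Real.exp (-(l * η₀)))
      ≤ ∑ ω : Fin (n / k) → Finset (Fin n), if GoodRun k E x c ω then greedyProb E x ω else 0 := by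
  have h1 := T.bad_prob (n / k) univ
  rw [pot_univ T.hn] at h1
  have h2 := sum_pathP (E := E) (m := n / k) T.xpos univ
  calc _ ≤ ∑ ω : Fin (n / k) → Finset (Fin n), (pathP E x univ ω - pathP E x univ ω *
      (if ∃ i ≤ n / k, p₀ ≤ vdens (remV univ ω i) ∧
        ¬ GoodState k E (trackG k E x) (trackS k) η₀ (remV univ ω i) then 1 else 0)) := by
        rw [Finset.sum_sub_distrib, h2]
        linarith
    _ ≤ _ := by
        refine Finset.sum_le_sum fun ω _ => ?_
        have hnn := greedyProb_nonneg (E := E) (x := x) ω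
        by_cases hω : pathP E x univ ω = 0
        · rw [hω]
          split_ifs <;> simp [hnn]
        by_cases hbad : ∃ i ≤ n / k, p₀ ≤ vdens (remV univ ω i) ∧
            ¬ GoodState k E (trackG k E x) (trackS k) η₀ (remV univ ω i)
        · rw [if_pos hbad]
          split_ifs <;> simp [hnn]
        · rw [if_neg hbad]
          push Not at hbad
          rw [if_pos (h.goodRun T hp hp1 hηp hω hbad),
            greedyProb_eq (by have := h.hk; omega) T.unif T.xpos hω]
          simp

/-! ### Choice of the parameters -/

/-- Parameters for `n = t ^ (1000 k)`, where `t = n ^ c`: the densities considered are at least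
`t⁻¹`, the initial error is `n ^ (-1/8)` and the exponent is `n ^ (5/8)`. -/
lemma WellDist.tracking_pow {n k : ℕ} {E : Finset (Finset (Fin n))} {x : Finset (Fin n) → ℝ}
    {t : ℝ} (h : WellDist k E x t) (hn : (n : ℝ) = t ^ (1000 * k)) (ht : 500 * (k : ℝ) ^ 2 ≤ t) :
    Tracking k E x (trackG k E x) (trackS k) t⁻¹ (t ^ (125 * k))⁻¹ (t / n) (3 * k * t / n)
      (t ^ (625 * k)) ∧ (t ^ (125 * k))⁻¹ / t⁻¹ ^ (40 * k) ≤ t⁻¹ := by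
  have hk := h.hk
  have hk2 : (2 : ℝ) ≤ k := by exact_mod_cast hk
  have ht4 : (4 : ℝ) ≤ t := by nlinarith
  have ht0 : (0 : ℝ) < t := by linarith
  have ht1 : (1 : ℝ) ≤ t := by linarith
  have hkt : (k : ℝ) ≤ t := by nlinarith
  have hk2t : 80 * (k : ℝ) ^ 2 ≤ t := by nlinarith
  have hn0 := h.n_pos
  have hpow : ∀ {a b : ℕ}, a ≤ b → t ^ a ≤ t ^ b := fun hab => pow_le_pow_right₀ ht1 hab
  have hβ : 84 * k * ((k / n : ℝ) / t⁻¹) + 2 * k * (3 * k * t / n) / t⁻¹ ^ k ≤ t ^ (k + 2) / n := by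
    have h1 : 84 * k * ((k / n : ℝ) / t⁻¹) + 2 * k * (3 * k * t / n) / t⁻¹ ^ k
        = (84 * (k : ℝ) ^ 2 * t + 6 * (k : ℝ) ^ 2 * t ^ (k + 1)) / n := by
      rw [inv_pow]
      field_simp
      ring
    rw [h1]
    refine div_le_div_of_nonneg_right ?_ hn0.le
    have h2 : t ≤ t ^ (k + 1) := by simpa using hpow (show 1 ≤ k + 1 by omega)
    have h3 : (0 : ℝ) < t ^ (k + 1) := by positivity
    calc 84 * (k : ℝ) ^ 2 * t + 6 * (k : ℝ) ^ 2 * t ^ (k + 1)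
        ≤ 84 * (k : ℝ) ^ 2 * t ^ (k + 1) + 6 * (k : ℝ) ^ 2 * t ^ (k + 1) := by gcongr
      _ = 90 * (k : ℝ) ^ 2 * t ^ (k + 1) := by ring
      _ ≤ t * t ^ (k + 1) := mul_le_mul_of_nonneg_right (by nlinarith) h3.le
      _ = t ^ (k + 2) := by ring
  have hβ0 : 0 ≤ 84 * k * ((k / n : ℝ) / t⁻¹) + 2 * k * (3 * k * t / n) / t⁻¹ ^ k := by
    positivity
  have hηp : (t ^ (125 * k))⁻¹ / t⁻¹ ^ (40 * k) ≤ t⁻¹ := by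
    rw [inv_pow, div_inv_eq_mul, inv_mul_le_iff₀ (by positivity), ← div_eq_mul_inv,
      le_div_iff₀ ht0, ← pow_succ]
    exact hpow (by omega)
  have hδ : k * ((k / n : ℝ) / t⁻¹) ≤ (t ^ (125 * k))⁻¹ := by
    have h1 : k * ((k / n : ℝ) / t⁻¹) = (k : ℝ) ^ 2 * t / n := by field_simp
    rw [h1, inv_eq_one_div, div_le_div_iff₀ hn0 (by positivity), one_mul, hn]
    calc (k : ℝ) ^ 2 * t * t ^ (125 * k) ≤ t * t * t ^ (125 * k) := by
          gcongr; nlinarith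
      _ = t ^ (125 * k + 2) := by ring
      _ ≤ _ := hpow (by omega)
  refine ⟨h.tracking (by positivity) (by positivity) (hηp.trans ?_) ?_ hδ ?_ (by positivity) ?_ ?_,
    hηp⟩
  · rw [one_div]
    gcongr
  · have h1 : (t ^ (125 * k))⁻¹ * t⁻¹ ^ k = 1 / t ^ (126 * k) := by
      rw [inv_pow, ← mul_inv, ← pow_add, one_div]
      congr 2
      ring
    rw [h1, ← mul_div_assoc, div_le_div_iff₀ hn0 (by positivity), one_mul, hn]
    calc (k : ℝ) * t * t ^ (126 * k) ≤ t * t * t ^ (126 * k) := by gcongr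
      _ = t ^ (126 * k + 2) := by ring
      _ ≤ _ := hpow (by omega)
  · have h1 : ((40 * k : ℕ) : ℝ) * ((k / n : ℝ) / t⁻¹) = 40 * (k : ℝ) ^ 2 * t / n := by
      push_cast
      field_simp
    rw [h1, div_le_div_iff₀ hn0 (by norm_num), one_mul, hn]
    calc 40 * (k : ℝ) ^ 2 * t * 2 = 80 * (k : ℝ) ^ 2 * t := by ring
      _ ≤ t * t := by gcongr
      _ = t ^ 2 := by ring
      _ ≤ _ := hpow (by omega)
  · refine (mul_le_mul_of_nonneg_left hβ (by positivity)).trans ?_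
    rw [← mul_div_assoc, div_le_one hn0, hn, ← pow_add]
    exact hpow (by omega)
  · refine (mul_le_mul_of_nonneg_left (pow_le_pow_left₀ hβ0 hβ 2) (by positivity)).trans ?_
    have h1 : t ^ (625 * k) * (t ^ (k + 2) / n) ^ 2 = t ^ (627 * k + 4) / n / n := by
      field_simp
      ring
    have h2 : 20 * k * (t ^ (125 * k))⁻¹ * (k / n) = 20 * (k : ℝ) ^ 2 * (t ^ (125 * k))⁻¹ / n := by
      ring
    rw [h1, h2]
    refine div_le_div_of_nonneg_right ?_ hn0.le
    rw [← div_eq_mul_inv, div_le_div_iff₀ hn0 (by positivity), hn, ← pow_add]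
    refine (hpow (show _ ≤ 1000 * k by omega)).trans ?_
    refine le_mul_of_one_le_left (by positivity) ?_
    nlinarith

/-- The union bound over all tracked quantities. -/
lemma union_bound {n k : ℕ} {t : ℝ} (hk : 2 ≤ k) (hn1 : 1 ≤ n) (hn : (n : ℝ) = t ^ (1000 * k))
    (ht : 2 ≤ t) (hexp : 2 * ((k : ℝ) + 4) * t ^ (1000 * k * k) ≤ Real.exp t) :
    Fintype.card (TrackIdx n k) * (2 * Real.exp (-(t ^ (625 * k) * (t ^ (125 * k))⁻¹)))
      ≤ Real.exp (-t) := by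
  have ht0 : 0 < t := by linarith
  have h1 : (Fintype.card (TrackIdx n k) : ℝ) ≤ 2 + n + (k + 1) * (n : ℝ) ^ k := by
    exact_mod_cast card_trackIdx_le n k hn1
  have hn1' : (1 : ℝ) ≤ n := by exact_mod_cast hn1
  have h2 : (n : ℝ) ≤ (n : ℝ) ^ k := le_self_pow₀ hn1' (by omega)
  have h3 : (Fintype.card (TrackIdx n k) : ℝ) ≤ (k + 4) * t ^ (1000 * k * k) := by
    rw [pow_mul, ← hn]
    nlinarith
  have h4 : t + t ≤ t ^ (625 * k) * (t ^ (125 * k))⁻¹ := by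
    rw [← div_eq_mul_inv, le_div_iff₀ (by positivity)]
    calc (t + t) * t ^ (125 * k) ≤ (t * t) * t ^ (125 * k) := by gcongr; nlinarith
      _ = t ^ (125 * k + 2) := by ring
      _ ≤ _ := pow_le_pow_right₀ (by linarith) (by omega)
  have h5 : Real.exp (-(t ^ (625 * k) * (t ^ (125 * k))⁻¹)) ≤ Real.exp (-t) * Real.exp (-t) := by
    rw [← Real.exp_add]
    exact Real.exp_le_exp.mpr (by linarith)
  calc _ ≤ ((k + 4) * t ^ (1000 * k * k)) * (2 * (Real.exp (-t) * Real.exp (-t))) := by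
        gcongr
    _ = (2 * ((k : ℝ) + 4) * t ^ (1000 * k * k)) * (Real.exp (-t) * Real.exp (-t)) := by ring
    _ ≤ Real.exp t * (Real.exp (-t) * Real.exp (-t)) := by gcongr
    _ = Real.exp (-t) := by rw [← mul_assoc, ← Real.exp_add]; simp

lemma eventually_poly_le_exp (C : ℝ) (m : ℕ) :
    ∀ᶠ t : ℝ in Filter.atTop, C * t ^ m ≤ Real.exp t := by
  have h1 : Filter.Tendsto (fun t : ℝ => C * (t ^ m * Real.exp (-t))) Filter.atTop (nhds (C * 0)) :=
    (Real.tendsto_pow_mul_exp_neg_atTop_nhds_zero m).const_mul C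
  rw [mul_zero] at h1
  filter_upwards [h1.eventually_le_const one_pos] with t ht
  rw [Real.exp_neg, ← mul_assoc, ← div_eq_mul_inv, div_le_one (Real.exp_pos t)] at ht
  exact ht

open scoped Classical in
/-- For every `k ≥ 2` there is `c > 0` such that for all large `n`:
for every `n`-vertex `k`-graph `G` and every `n^c`-well-distributed fractional perfect
matching `x` of `G`, with probability at least `1 - exp(-n^c)` the random greedy matching
process satisfies: (i) `M ≥ (1 - n^{-c})·n/k`; and for every `i ≤ (1 - n^{-c})·n/k`,
(ii) `∑_{e ∈ G(i)} x[e] = (1 ± n^{-c})·p(i)^k·(n/k)`,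
(iii) `∑_{e ∈ G(i)} x[e]·ln(1/x[e]) = (1 ± n^{-c})·p(i)^k·h(x)`, and
(iv) for every set `S` of at most `k-1` vertices of `G(i)`,
`deg_{G(i)}(S) = p(i)^{k-|S|}·deg_G(S) ± n^{k-|S|-c}`, where `p(i) = (n/k - i)/(n/k)`. -/
theorem greedy_matching_analysis (k : ℕ) (hk : 2 ≤ k) :
    ∃ c : ℝ, 0 < c ∧ ∃ n₀ : ℕ, ∀ n : ℕ, n₀ ≤ n →
      ∀ E : Finset (Finset (Fin n)), (∀ e ∈ E, e.card = k) →
      ∀ x : Finset (Fin n) → ℝ, IsFPM E x →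
      (∀ e ∈ E, 1 / ((n : ℝ) ^ c * (n : ℝ) ^ (k - 1)) ≤ x e ∧
        x e ≤ (n : ℝ) ^ c / (n : ℝ) ^ (k - 1)) →
      1 - Real.exp (-(n : ℝ) ^ c) ≤
        ∑ ω : Fin (n / k) → Finset (Fin n),
          (if
            ((1 - (n : ℝ) ^ (-c)) * ((n : ℝ) / k) ≤ (greedyM E x ω : ℝ) ∧
              ∀ i : ℕ, (i : ℝ) ≤ (1 - (n : ℝ) ^ (-c)) * ((n : ℝ) / k) →
                (|(∑ e ∈ greedyGi E ω i, x e) -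
                    (((n : ℝ) / k - i) / ((n : ℝ) / k)) ^ k * ((n : ℝ) / k)| ≤
                  (n : ℝ) ^ (-c) *
                    ((((n : ℝ) / k - i) / ((n : ℝ) / k)) ^ k * ((n : ℝ) / k))) ∧
                (|(∑ e ∈ greedyGi E ω i, x e * Real.log (1 / x e)) -
                    (((n : ℝ) / k - i) / ((n : ℝ) / k)) ^ k * fpmEntropy E x| ≤
                  (n : ℝ) ^ (-c) *
                    ((((n : ℝ) / k - i) / ((n : ℝ) / k)) ^ k * fpmEntropy E x)) ∧
                ∀ S : Finset (Fin n), S.card ≤ k - 1 → S ⊆ greedyVi ω i →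
                  |((degS (greedyGi E ω i) S : ℝ)) -
                      (((n : ℝ) / k - i) / ((n : ℝ) / k)) ^ (k - S.card) * (degS E S : ℝ)| ≤
                    (n : ℝ) ^ ((k : ℝ) - (S.card : ℝ) - c))
          then greedyProb E x ω else 0) := by
  classical
  have hk0 : (0 : ℝ) < k := by exact_mod_cast (by omega : 0 < k)
  obtain ⟨c, hc⟩ : ∃ c : ℝ, c = 1 / (1000 * k) := ⟨_, rfl⟩
  have hc0 : 0 < c := by rw [hc]; positivity
  refine ⟨c, hc0, ?_⟩
  have htend : Filter.Tendsto (fun n : ℕ => (n : ℝ) ^ c) Filter.atTop Filter.atTop :=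
    (tendsto_rpow_atTop hc0).comp tendsto_natCast_atTop_atTop
  have hev : ∀ᶠ n : ℕ in Filter.atTop, 2 ≤ n ∧ 500 * (k : ℝ) ^ 2 ≤ (n : ℝ) ^ c ∧
      2 * ((k : ℝ) + 4) * ((n : ℝ) ^ c) ^ (1000 * k * k) ≤ Real.exp ((n : ℝ) ^ c) :=
    (Filter.eventually_ge_atTop 2).and ((htend.eventually_ge_atTop _).and
      (htend.eventually (eventually_poly_le_exp _ _)))
  obtain ⟨n₀, hn₀⟩ := Filter.eventually_atTop.mp hev
  refine ⟨n₀, fun n hn E hE x hx hwd => ?_⟩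
  obtain ⟨hn2, ht, hexp⟩ := hn₀ n hn
  have hn0 : (0 : ℝ) ≤ n := Nat.cast_nonneg n
  have hnt : (n : ℝ) = ((n : ℝ) ^ c) ^ (1000 * k) := by
    rw [← Real.rpow_natCast, ← Real.rpow_mul hn0, hc]
    push_cast
    rw [one_div, inv_mul_cancel₀ (by positivity), Real.rpow_one]
  have hp : ((n : ℝ) ^ c)⁻¹ = (n : ℝ) ^ (-c) := (Real.rpow_neg hn0 c).symm
  have hk2 : (2 : ℝ) ≤ k := by exact_mod_cast hk
  have ht2 : 2 ≤ (n : ℝ) ^ c := by nlinarith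
  have hW : WellDist k E x ((n : ℝ) ^ c) :=
    { hk := hk
      hn := hn2
      unif := hE
      fpm := hx
      hD1 := by linarith
      hD2 := by
        conv_rhs => rw [hnt]
        exact pow_le_pow_right₀ (by linarith) (by omega)
      lower := fun e he => (hwd e he).1
      upper := fun e he => (hwd e he).2 }
  obtain ⟨T, hηp⟩ := hW.tracking_pow hnt ht
  have h1 := hW.prob_goodRun T hp (inv_le_one_of_one_le₀ (by linarith)) hηp
  have h2 := union_bound hk (by omega) hnt ht2 hexp
  refine le_trans (by linarith) (h1.trans (Finset.sum_le_sum fun ω _ => ?_))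
  by_cases hω : GoodRun k E x c ω
  · exact (if_pos hω).le.trans (if_pos hω).ge
  · exact (if_neg hω).le.trans (if_neg hω).ge
end
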